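/- Let R be a local Cohen–Macaulay ring with infinite residue field and let I be an R-ideal of analytic spread ℓ with ht I > 0, satisfying G_ℓ and AN_{ℓ−1}^−, universally weakly (ℓ−1)-residually S₂, and such that J : I does not depend on the minimal reduction J of I. Then for any minimal reduction J of I, the R(I)-module (J : I)·R(I) satisfies Serre's condition S₂; if in addition I satisfies AN_ℓ, then (J : I)·R(I) is a maximal Cohen–Macaulay R(I)-module. -/

import Mathlib

open IsLocalRing

universe u v

namespace CPU

section Defs

variable {R : Type u} [CommRing R]

/-- The minimal number of generators of a submodule, as an extended natural number. -/
noncomputable def muE {M : Type v} [AddCommGroup M] [Module R M] (N : Submodule R M) : ℕ∞ :=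
  sInf {n : ℕ∞ | ∃ s : Finset M, (s.card : ℕ∞) = n ∧ Submodule.span R (s : Set M) = N}

/-- The Krull dimension of a ring, valued in `WithBot ℕ∞`. -/
noncomputable def rDim (S : Type v) [CommRing S] : WithBot ℕ∞ :=
  ringKrullDim S

/-- `J` is a reduction of `I`. -/
def IsReduction (J I : Ideal R) : Prop :=
  J ≤ I ∧ ∃ r : ℕ, I ^ (r + 1) = J * I ^ r

/-- `J` is a minimal reduction of `I`. -/
def IsMinimalReduction (J I : Ideal R) : Prop :=
  IsReduction J I ∧ ∀ J' : Ideal R, IsReduction J' I → J' ≤ J → J' = J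

/-- The core of an ideal: the intersection of all of its minimal reductions. -/
noncomputable def core (I : Ideal R) : Ideal R :=
  sInf {J : Ideal R | IsMinimalReduction J I}

/-- The reduction number of `I`. -/
noncomputable def reductionNumber (I : Ideal R) : ℕ∞ :=
  sInf {n : ℕ∞ | ∃ r : ℕ, (r : ℕ∞) = n ∧ ∃ J : Ideal R,
    IsMinimalReduction J I ∧ I ^ (r + 1) = J * I ^ r}

/-- `γ(I)`: the least number of minimal reductions whose intersection is the core. -/
noncomputable def gamma (I : Ideal R) : ℕ∞ :=
  sInf {n : ℕ∞ | ∃ t : ℕ, (t : ℕ∞) = n ∧ ∃ Js : Fin t → Ideal R,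
    (∀ i, IsMinimalReduction (Js i) I) ∧ core I = ⨅ i, Js i}

/-- The height of an ideal. -/
noncomputable def ht (I : Ideal R) : WithBot ℕ∞ :=
  ⨅ (p : PrimeSpectrum R) (_ : I ≤ p.asIdeal),
    rDim (Localization.AtPrime p.asIdeal)

/-- The Krull dimension of the special fiber ring of `I`,
i.e. the analytic spread of `I`. -/
noncomputable def fiberDim [IsLocalRing R] (I : Ideal R) : WithBot ℕ∞ :=
  rDim (↥(reesAlgebra I) ⧸
    (Ideal.map (algebraMap R ↥(reesAlgebra I)) (maximalIdeal R)))

/-- The condition `G_s`. -/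
def Gcond (I : Ideal R) (s : ℕ) : Prop :=
  ∀ p : PrimeSpectrum R, I ≤ p.asIdeal →
    rDim (Localization.AtPrime p.asIdeal) < (s : WithBot ℕ∞) →
    (muE (Ideal.map (algebraMap R (Localization.AtPrime p.asIdeal)) I) : WithBot ℕ∞) ≤
      rDim (Localization.AtPrime p.asIdeal)

/-- Depth of a module over a local ring, via lengths of regular sequences in the
maximal ideal. -/
noncomputable def mDepth (R : Type u) [CommRing R] [IsLocalRing R]
    (M : Type v) [AddCommGroup M] [Module R M] : ℕ∞ :=
  sSup {n : ℕ∞ | ∃ rs : List R, (∀ x ∈ rs, x ∈ maximalIdeal R) ∧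
    RingTheory.Sequence.IsRegular M rs ∧ (rs.length : ℕ∞) = n}

/-- Depth of the quotient `R/K` of a local ring `R`. -/
noncomputable def qDepth (R : Type u) [CommRing R] [IsLocalRing R] (K : Ideal R) : ℕ∞ :=
  mDepth R (R ⧸ K)

/-- The socle of `R/K`, for `R` local. -/
noncomputable def socle (R : Type u) [CommRing R] [IsLocalRing R] (K : Ideal R) :
    Ideal (R ⧸ K) :=
  Submodule.colon (⊥ : Ideal (R ⧸ K)) (Ideal.map (Ideal.Quotient.mk K) (maximalIdeal R))

/-- The Cohen–Macaulay type of the quotient `R/K` of a local ring `R`. -/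
noncomputable def qType (R : Type u) [CommRing R] [IsLocalRing R] (K : Ideal R) : ℕ∞ :=
  sInf {n : ℕ∞ | ∃ rs : List R, (∀ x ∈ rs, x ∈ maximalIdeal R) ∧
    RingTheory.Sequence.IsRegular (R ⧸ K) rs ∧ (rs.length : ℕ∞) = qDepth R K ∧
    muE (socle R (K ⊔ Ideal.ofList rs)) = n}

/-- Cohen–Macaulayness for a quotient `R/K` of a local ring `R`. -/
def IsCMQuot (R : Type u) [CommRing R] [IsLocalRing R] (K : Ideal R) : Prop :=
  rDim (R ⧸ K) = (qDepth R K : WithBot ℕ∞)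

/-- A Cohen–Macaulay local ring: depth equals Krull dimension. -/
def IsCMLocalRing (R : Type u) [CommRing R] [IsLocalRing R] : Prop :=
  rDim R = (qDepth R (⊥ : Ideal R) : WithBot ℕ∞)

/-- A Gorenstein local ring: Cohen–Macaulay of type one. -/
def IsGorensteinLocalRing (R : Type u) [CommRing R] [IsLocalRing R] : Prop :=
  IsCMLocalRing R ∧ qType R (⊥ : Ideal R) = 1

/-- Gorensteinness of the quotient ring `R/K` of a local ring. -/
def IsGorQuot (R : Type u) [CommRing R] [IsLocalRing R] (K : Ideal R) : Prop :=
  IsCMQuot R K ∧ qType R K = 1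

/-- A regular local ring: the maximal ideal is generated by `dim R` elements. -/
def IsRegularLocal (R : Type u) [CommRing R] [IsLocalRing R] : Prop :=
  IsNoetherianRing R ∧ (muE (maximalIdeal R) : WithBot ℕ∞) = rDim R

/-- Serre's condition `S₂` for the quotient ring `R/K`. -/
def QuotS2 (K : Ideal R) : Prop :=
  ∀ (q : Ideal R) (hq : q.IsPrime), K ≤ q →
    letI := hq
    min 2 (rDim ((Localization.AtPrime q) ⧸
        (Ideal.map (algebraMap R (Localization.AtPrime q)) K)))
      ≤ (qDepth (Localization.AtPrime q)
          (Ideal.map (algebraMap R (Localization.AtPrime q)) K) : WithBot ℕ∞)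

/-- `K` is an `s`-residual intersection of `I`. -/
def IsResidualIntersection (I K : Ideal R) (s : ℕ) : Prop :=
  K ≠ ⊤ ∧ ht I ≤ (s : WithBot ℕ∞) ∧ (s : WithBot ℕ∞) ≤ ht K ∧
    ∃ a : Ideal R, a ≤ I ∧ (∃ f : Finset R, f.card ≤ s ∧ Ideal.span (f : Set R) = a) ∧
      K = Submodule.colon a I

/-- `K` is a geometric `s`-residual intersection of `I`. -/
def IsGeometricRI (I K : Ideal R) (s : ℕ) : Prop :=
  IsResidualIntersection I K s ∧ (s : WithBot ℕ∞) + 1 ≤ ht (I ⊔ K)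

/-- `I` is weakly `s`-residually `S₂`. -/
def WeaklyResS2 (I : Ideal R) (s : ℕ) : Prop :=
  ∀ i ≤ s, ∀ K : Ideal R, IsGeometricRI I K i → QuotS2 K

/-- The condition `AN_s` for `I`. -/
def ANcond [IsLocalRing R] (I : Ideal R) (s : ℕ) : Prop :=
  ∀ i ≤ s, ∀ K : Ideal R, IsResidualIntersection I K i → IsCMQuot R K

/-- The condition `AN_s⁻` for `I`. -/
def ANminus [IsLocalRing R] (I : Ideal R) (s : ℕ) : Prop :=
  ∀ i ≤ s, ∀ K : Ideal R, IsGeometricRI I K i → IsCMQuot R K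

/-- `I` is universally weakly `s`-residually `S₂`: for every finite set of
variables, the extension of `I` to `R(x₁, …, x_n)` is weakly `s`-residually `S₂`. -/
def UnivWeaklyResS2 [IsLocalRing R] (I : Ideal R) (s : ℕ) : Prop :=
  ∀ (n : ℕ)
    (hP : (Ideal.map (MvPolynomial.C (σ := Fin n)) (maximalIdeal R)).IsPrime),
    letI := hP
    WeaklyResS2 (Ideal.map
      ((algebraMap (MvPolynomial (Fin n) R)
        (Localization.AtPrime
          (Ideal.map (MvPolynomial.C (σ := Fin n)) (maximalIdeal R)))).comp
        (MvPolynomial.C)) I) s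

/-- The `j`-th Fitting ideal of (the module) `I`. -/
noncomputable def fittingIdeal (I : Ideal R) (j : ℕ) : Ideal R :=
  ⨆ (n : ℕ) (π : (Fin n → R) →ₗ[R] R) (_ : LinearMap.range π = I),
    Ideal.span {d : R | ∃ (v : Fin (n - j) → (Fin n → R)) (r : Fin (n - j) → Fin n),
      (∀ k, π (v k) = 0) ∧ d = Matrix.det (Matrix.of fun i k => v k (r i))}

/-- The set `Q(I)` of primes containing `Fitt_ℓ(I)` at which `R` has dimension `ℓ`
and `I` has analytic spread `ℓ`. -/
def QSet [IsLocalRing R] (I : Ideal R) (l : ℕ) : Set (PrimeSpectrum R) :=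
  {p | fittingIdeal I l ≤ p.asIdeal ∧
    rDim (Localization.AtPrime p.asIdeal) = (l : WithBot ℕ∞) ∧
    fiberDim (Ideal.map (algebraMap R (Localization.AtPrime p.asIdeal)) I)
      = (l : WithBot ℕ∞)}

/-- An ideal is integrally closed if it admits no larger ideal of which it is a
reduction. -/
def IsIntClosedIdeal (I : Ideal R) : Prop :=
  ∀ J : Ideal R, IsReduction I J → J = I

/-- A normal ideal: all powers are integrally closed. -/
def IsNormalIdeal (I : Ideal R) : Prop :=
  ∀ j : ℕ, IsIntClosedIdeal (I ^ j)

/-- `φ` is a presentation matrix of the ideal `I` (with `n = μ(I)` rows). -/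
def Presents {n m : ℕ} (φ : Matrix (Fin n) (Fin m) R) (I : Ideal R) : Prop :=
  muE I = (n : ℕ∞) ∧ ∃ π : (Fin n → R) →ₗ[R] R, LinearMap.range π = I ∧
    LinearMap.range (Matrix.toLin' φ) = LinearMap.ker π

/-- The ideal of `t × t` minors of a matrix. -/
noncomputable def minorsIdeal {n m : ℕ} (t : ℕ) (φ : Matrix (Fin n) (Fin m) R) : Ideal R :=
  Ideal.span {d : R | ∃ (r : Fin t → Fin n) (c : Fin t → Fin m),
    d = (φ.submatrix r c).det}

/-- The grade of an ideal: the supremum of lengths of regular sequences contained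
in it. -/
noncomputable def grade (I : Ideal R) : ℕ∞ :=
  sSup {n : ℕ∞ | ∃ rs : List R, (∀ x ∈ rs, x ∈ I) ∧
    RingTheory.Sequence.IsRegular R rs ∧ (rs.length : ℕ∞) = n}

end Defs

/-- `M` has projective dimension at most `n` over `R`. -/
def ProjDimLE (R : Type u) [CommRing R] :
    (n : ℕ) → (M : Type u) → [AddCommGroup M] → [Module R M] → Prop
  | 0, M, _, _ => Module.Projective R M
  | n + 1, M, _, _ => ∃ (k : ℕ) (f : (Fin k → R) →ₗ[R] M), Function.Surjective f ∧
      ProjDimLE R n ↥(LinearMap.ker f)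

section Defs2

variable {R : Type u} [CommRing R]

/-- `M` has projective dimension exactly `n` over `R`. -/
def ProjDimEq (R : Type u) [CommRing R] (M : Type u) [AddCommGroup M] [Module R M]
    (n : ℕ) : Prop :=
  ProjDimLE R n M ∧ ∀ m : ℕ, ProjDimLE R m M → n ≤ m

/-- A perfect ideal: the projective dimension of `R/I` equals the grade of `I`. -/
def IsPerfectIdeal (I : Ideal R) : Prop :=
  ∃ g : ℕ, grade I = (g : ℕ∞) ∧ ProjDimEq R (R ⧸ I) g

/-- The multiplicative set which is the complement of the union of the associated
primes of `R/H`. -/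
def assComplement (H : Ideal R) : Submonoid R where
  carrier := {r : R | ∀ p ∈ associatedPrimes R (R ⧸ H), r ∉ p}
  one_mem' := fun p hp => (Ideal.ne_top_iff_one p).mp hp.1.ne_top
  mul_mem' := fun {a b} ha hb p hp hab =>
    (hp.1.mem_or_mem hab).elim (ha p hp) (hb p hp)

/-- The `j`-th symbolic power of `H`. -/
noncomputable def symbolicPower (H : Ideal R) (j : ℕ) : Ideal R :=
  Ideal.comap (algebraMap R (Localization (assComplement H)))
    (Ideal.map (algebraMap R (Localization (assComplement H))) (H ^ j))

/-- Serre's condition `S₂` for a module. -/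
def ModuleS2 (S : Type u) [CommRing S] (M : Type v) [AddCommGroup M] [Module S M] : Prop :=
  ∀ (q : Ideal S) (hq : q.IsPrime),
    letI := hq
    min 2 (rDim ((Localization.AtPrime q) ⧸
        (Module.annihilator (Localization.AtPrime q) (LocalizedModule q.primeCompl M))))
      ≤ (mDepth (Localization.AtPrime q) (LocalizedModule q.primeCompl M) : WithBot ℕ∞)

/-- `M` is a maximal Cohen–Macaulay `S`-module. -/
def IsMCM (S : Type u) [CommRing S] (M : Type v) [AddCommGroup M] [Module S M] : Prop :=
  ∀ (q : Ideal S) (hq : q.IsMaximal),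
    letI := hq.isPrime
    (mDepth (Localization.AtPrime q) (LocalizedModule q.primeCompl M) : WithBot ℕ∞) =
      rDim (Localization.AtPrime q)

end Defs2

/-!
Choose generators `a₁, …, a_ℓ` of a minimal reduction `J` of `I` in general position, and put
`Jᵢ = (a₁, …, aᵢ)`. Then `Kᵢ = Jᵢ : I` is a residual intersection of `I`, geometric for `i < ℓ`.

Write `K = J : I`. Replacing a generator `aⱼ` by `aⱼ + r c` with `c ∈ I` and a suitable unit `r`
yields another minimal reduction, which by hypothesis has the same colon ideal. Comparing the two
gives `K I = K J`, so that `K R(I)` and `K R(J)` are the same set.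

Let `T₁, …, Tᵢ` be variables mapping to the degree-one elements `a₁, …, aᵢ` of `R(Jᵢ)`. There are
exact sequences
  `0 → (Kᵢ R(Jᵢ))[X] → R(Jᵢ)[X] → R(Jᵢ₊₁) → 0`,
  `0 → Kᵢ R(Jᵢ) → R(Jᵢ) → (R / Kᵢ)[T₁, …, Tᵢ] → 0`.
Lower bounds for grades therefore pass from the rings `R / Kᵢ` to the ideal `K R(J)`. Since `R(I)`
is finite over `R(J)`, they yield bounds for the depths of `K R(I)` over `R(I)`.
-/

section Grade

open CategoryTheory Abelian Limits Pointwise RingTheory.Sequence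

variable {S : Type u} [CommRing S]

/-- The grade of the ideal `P` on the module `M` is at least `n`. For a finite module over a
Noetherian ring this says that `P` contains a weakly `M`-regular sequence of length `n`. The
encoding by `Ext` makes no exception when `P M = M`, in which case the grade is infinite. -/
def GradeGE (P : Ideal S) (n : ℕ) (M : Type u) [AddCommGroup M] [Module S M] : Prop :=
  ∀ i < n, Subsingleton (Ext.{u} (ModuleCat.of S (S ⧸ P)) (ModuleCat.of S M) i)

variable {P : Ideal S} {n : ℕ} {A B C : Type u} [AddCommGroup A] [Module S A]
  [AddCommGroup B] [Module S B] [AddCommGroup C] [Module S C]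

lemma shortExact_ofHom {f : A →ₗ[S] B} {g : B →ₗ[S] C} (hf : Function.Injective f)
    (hg : Function.Surjective g) (hfg : Function.Exact f g) :
    (ModuleCat.shortComplexOfCompEqZero f g hfg.linearMap_comp_eq_zero).ShortExact :=
  ModuleCat.shortComplex_shortExact _ hfg hf hg

namespace GradeGE

lemma zero : GradeGE P 0 A := fun _ hi => absurd hi (Nat.not_lt_zero _)

lemma mono {m : ℕ} (h : GradeGE P n A) (hm : m ≤ n) : GradeGE P m A :=
  fun i hi => h i (hi.trans_le hm)

lemma of_subsingleton [Subsingleton A] : GradeGE P n A := fun i _ =>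
  have hA : IsZero (ModuleCat.of S A) := ModuleCat.isZero_of_subsingleton _
  subsingleton_of_forall_eq 0 fun a => by
    rw [← Ext.comp_mk₀_id a, (IsZero.iff_id_eq_zero _).1 hA, Ext.mk₀_zero, Ext.comp_zero]

lemma middle {f : A →ₗ[S] B} {g : B →ₗ[S] C} (hf : Function.Injective f)
    (hg : Function.Surjective g) (hfg : Function.Exact f g)
    (hA : GradeGE P n A) (hC : GradeGE P n C) : GradeGE P n B := fun i hi =>
  AddCommGrpCat.subsingleton_of_isZero <| ShortComplex.Exact.isZero_of_both_zeros
    (Ext.covariant_sequence_exact₂' _ (shortExact_ofHom hf hg hfg) i)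
    ((AddCommGrpCat.isZero_of_iff_subsingleton.2 (hA i hi)).eq_zero_of_src _)
    ((AddCommGrpCat.isZero_of_iff_subsingleton.2 (hC i hi)).eq_zero_of_tgt _)

lemma left {f : A →ₗ[S] B} {g : B →ₗ[S] C} (hf : Function.Injective f)
    (hg : Function.Surjective g) (hfg : Function.Exact f g)
    (hB : GradeGE P n B) (hC : GradeGE P (n - 1) C) : GradeGE P n A := by
  have hS := shortExact_ofHom hf hg hfg
  rintro (_ | i) hi
  · have := hS.mono_f
    have := hB 0 hi
    exact (Ext.postcomp_mk₀_injective_of_mono _ (ModuleCat.ofHom f)).subsingleton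
  · exact AddCommGrpCat.subsingleton_of_isZero <| ShortComplex.Exact.isZero_of_both_zeros
      (Ext.covariant_sequence_exact₁' _ hS i (i + 1) rfl)
      ((AddCommGrpCat.isZero_of_iff_subsingleton.2 (hC i (by lia))).eq_zero_of_src _)
      ((AddCommGrpCat.isZero_of_iff_subsingleton.2 (hB _ hi)).eq_zero_of_tgt _)

lemma right {f : A →ₗ[S] B} {g : B →ₗ[S] C} (hf : Function.Injective f)
    (hg : Function.Surjective g) (hfg : Function.Exact f g)
    (hA : GradeGE P (n + 1) A) (hB : GradeGE P n B) : GradeGE P n C := fun i hi =>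
  AddCommGrpCat.subsingleton_of_isZero <| ShortComplex.Exact.isZero_of_both_zeros
    (Ext.covariant_sequence_exact₃' _ (shortExact_ofHom hf hg hfg) i (i + 1) rfl)
    ((AddCommGrpCat.isZero_of_iff_subsingleton.2 (hB i hi)).eq_zero_of_src _)
    ((AddCommGrpCat.isZero_of_iff_subsingleton.2 (hA _ (by lia))).eq_zero_of_tgt _)

lemma of_linearEquiv (e : A ≃ₗ[S] B) (h : GradeGE P n A) : GradeGE P n B :=
  middle (C := PUnit.{u + 1}) (f := e.toLinearMap) (g := 0) e.injective
    (Function.surjective_to_subsingleton _)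
    ((LinearMap.exact_zero_iff_surjective _ _).2 e.surjective) h of_subsingleton

lemma quotSMulTop {x : S} (hx : IsSMulRegular A x) (h : GradeGE P (n + 1) A) :
    GradeGE P n (QuotSMulTop x A) :=
  right (f := LinearMap.lsmul S A x) hx (Submodule.mkQ_surjective _)
    (LinearMap.exact_lsmul_mkQ_smul_top A x) h (h.mono n.le_succ)

/- Multiplication by `x` on `Ext (S ⧸ P) A` is zero because `x ∈ P`, and it is injective in degrees
`≤ n` by the long exact sequence. -/
lemma of_quotSMulTop {x : S} (hxP : x ∈ P) (hx : IsSMulRegular A x)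
    (h : GradeGE P n (QuotSMulTop x A)) : GradeGE P (n + 1) A := by
  intro i hi
  have hann : x ∈ Module.annihilator S (ModuleCat.of S (S ⧸ P)) := by
    change x ∈ Module.annihilator S (S ⧸ P)
    rwa [Ideal.annihilator_quotient]
  have hS := (show IsSMulRegular (ModuleCat.of S A) x from hx).smulShortComplex_shortExact
  have hmono : Mono (AddCommGrpCat.ofHom ((Ext.mk₀ (x • 𝟙 (ModuleCat.of S A))).postcomp
      (ModuleCat.of S (S ⧸ P)) (add_zero i))) := by
    rcases i with _ | i
    · have : Mono (x • 𝟙 (ModuleCat.of S A)) := hS.mono_f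
      exact Ext.mono_postcomp_mk₀_of_mono _ _
    · exact (Ext.covariant_sequence_exact₁' _ hS i (i + 1) rfl).mono_g
        ((AddCommGrpCat.isZero_of_iff_subsingleton.2 (h i (by lia))).eq_zero_of_src _)
  exact AddCommGrpCat.subsingleton_of_isZero
    (IsZero.of_mono_eq_zero _ (Ext.postcomp_smul_id_eq_zero_of_mem_annihilator hann i))

lemma one_of_isSMulRegular {x : S} (hxP : x ∈ P) (hx : IsSMulRegular A x) : GradeGE P 1 A :=
  of_quotSMulTop hxP hx zero

lemma of_isWeaklyRegular {rs : List S} (hrs : ∀ r ∈ rs, r ∈ P) (h : IsWeaklyRegular A rs) :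
    GradeGE P rs.length A := by
  induction rs generalizing A with
  | nil => exact zero
  | cons x rs ih =>
    obtain ⟨hx, h⟩ := (isWeaklyRegular_cons_iff _ _ _).1 h
    rw [List.forall_mem_cons] at hrs
    exact of_quotSMulTop hrs.1 hx (ih hrs.2 h)

variable [IsNoetherianRing S] [Module.Finite S A]

lemma exists_isSMulRegular (h : GradeGE P (n + 1) A) : ∃ x ∈ P, IsSMulRegular A x := by
  have hExt := h 0 n.succ_pos
  have : Subsingleton ((S ⧸ P) →ₗ[S] A) :=
    (Ext.addEquiv₀.trans (ModuleCat.homAddEquiv (M := ModuleCat.of S (S ⧸ P))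
      (N := ModuleCat.of S A))).symm.subsingleton
  simpa only [Ideal.annihilator_quotient] using IsSMulRegular.subsingleton_linearMap_iff.1 this

lemma exists_isWeaklyRegular (h : GradeGE P n A) :
    ∃ rs : List S, rs.length = n ∧ (∀ r ∈ rs, r ∈ P) ∧ IsWeaklyRegular A rs := by
  induction n generalizing A with
  | zero => exact ⟨[], rfl, by simp, by simp⟩
  | succ n ih =>
    obtain ⟨x, hxP, hx⟩ := h.exists_isSMulRegular
    obtain ⟨rs, hlen, hrs, hreg⟩ := ih (quotSMulTop hx h)
    exact ⟨x :: rs, by simp [hlen], by simpa [hxP] using hrs,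
      (isWeaklyRegular_cons_iff _ _ _).2 ⟨hx, hreg⟩⟩

end GradeGE

variable [IsNoetherianRing S] [Module.Finite S A]

lemma exists_isPrime_forall_mem_iff_smul_eq_zero {c : Ideal S}
    (h : ∀ x ∈ c, ¬ IsSMulRegular A x) :
    ∃ Q : Ideal S, Q.IsPrime ∧ c ≤ Q ∧ ∃ a : A, a ≠ 0 ∧ ∀ s, s ∈ Q ↔ s • a = 0 := by
  have hsub : (c : Set S) ⊆ ⋃ p ∈ associatedPrimes S A, (p : Set S) := by
    rw [biUnion_associatedPrimes_eq_compl_regular]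
    exact h
  obtain ⟨Q, hQ, hcQ⟩ := (Ideal.subset_union_prime_finite (associatedPrimes.finite S A) ⊥ ⊥
    (fun p hp _ _ => hp.isPrime)).1 hsub
  obtain ⟨hQp, a, rfl⟩ := isAssociatedPrime_iff.1 hQ
  refine ⟨_, hQp, hcQ, a, ?_, fun s => by simp [Submodule.mem_colon_singleton]⟩
  rintro rfl
  exact hQp.ne_top (by simp)

lemma GradeGE.of_forall_isPrime {c : Ideal S}
    (h : ∀ Q : Ideal S, Q.IsPrime → c ≤ Q → GradeGE Q n A) : GradeGE c n A := by
  induction n generalizing A with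
  | zero => exact zero
  | succ n ih =>
    obtain ⟨x, hxc, hx⟩ : ∃ x ∈ c, IsSMulRegular A x := by
      by_contra! hcon
      obtain ⟨Q, hQ, hcQ, a, ha, hann⟩ := exists_isPrime_forall_mem_iff_smul_eq_zero hcon
      obtain ⟨x, hxQ, hx⟩ := (h Q hQ hcQ).exists_isSMulRegular
      exact ha (hx.right_eq_zero_of_smul ((hann x).1 hxQ))
    exact of_quotSMulTop hxc hx (ih fun Q hQ hcQ => quotSMulTop hx (h Q hQ hcQ))

end Grade

section SerreCondition

open Pointwise Submodule

/-- The depth bound `grade (P, M) ≥ min k (ht P - c)` at all primes `P` of `S`. For `c = 0` and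
`k = 2` it is a form of Serre's condition `S₂`; for `k = ⊤` and a module supported in codimension
`c` it is a form of the Cohen–Macaulay property. -/
def SerreCondition (S : Type u) [CommRing S] (c : ℕ) (k : ℕ∞) (M : Type u) [AddCommGroup M]
    [Module S M] : Prop :=
  ∀ P : Ideal S, P.IsPrime → ∀ n : ℕ, (n : ℕ∞) ≤ k → ((n + c : ℕ) : ℕ∞) ≤ P.height →
    GradeGE P n M

namespace SerreCondition

variable {S : Type u} [CommRing S] {A B C : Type u} [AddCommGroup A] [Module S A]
  [AddCommGroup B] [Module S B] [AddCommGroup C] [Module S C] {c : ℕ} {k : ℕ∞}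

lemma mono {c' : ℕ} {k' : ℕ∞} (h : SerreCondition S c k A) (hc : c ≤ c') (hk : k' ≤ k) :
    SerreCondition S c' k' A :=
  fun P hP n hn hht => h P hP n (hn.trans hk) (le_trans (by gcongr) hht)

lemma of_subsingleton [Subsingleton A] : SerreCondition S c k A :=
  fun _ _ _ _ _ => GradeGE.of_subsingleton

lemma of_linearEquiv (e : A ≃ₗ[S] B) (h : SerreCondition S c k A) : SerreCondition S c k B :=
  fun P hP n hn hht => (h P hP n hn hht).of_linearEquiv e

lemma left {f : A →ₗ[S] B} {g : B →ₗ[S] C} (hf : Function.Injective f)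
    (hg : Function.Surjective g) (hfg : Function.Exact f g)
    (hB : SerreCondition S c (k + 1) B) (hC : SerreCondition S (c + 1) k C) :
    SerreCondition S c (k + 1) A := by
  rintro P hP (_ | n) hn hht
  · exact .zero
  · refine GradeGE.left hf hg hfg (hB P hP _ hn hht) (hC P hP n ?_ ?_)
    · exact (ENat.add_le_add_iff_right ENat.one_ne_top).1 (by exact_mod_cast hn)
    · rwa [add_comm c 1, ← add_assoc]

lemma right {f : A →ₗ[S] B} {g : B →ₗ[S] C} (hf : Function.Injective f)
    (hg : Function.Surjective g) (hfg : Function.Exact f g)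
    (hA : SerreCondition S c (k + 1) A) (hB : SerreCondition S (c + 1) k B) :
    SerreCondition S (c + 1) k C := by
  intro P hP n hn hht
  refine GradeGE.right hf hg hfg (hA P hP _ ?_ ?_) (hB P hP n hn hht)
  · push_cast
    gcongr
  · rwa [add_right_comm n 1 c]

end SerreCondition

namespace GradeGE

section Noetherian

variable {S : Type u} [CommRing S] [IsNoetherianRing S] {N : Type u} [AddCommGroup N] [Module S N]
  [Module.Finite S N]

/- On the `b`-torsion, `w = s + r x` with `s ∈ b` acts as `r x`. If `w, w'` is regular then
`w' (r h) = w (r' h)` forces `r h = w h'`, and `w h = x r h = w (x h')` gives `h = x h'`. -/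
lemma exists_mem_torsionBySet_eq_smul {b : Ideal S} {x : S}
    (hgrade : GradeGE (b ⊔ Ideal.span {x}) 2 N) {h : N} (hh : h ∈ torsionBySet S N b) :
    ∃ h' ∈ torsionBySet S N b, h = x • h' := by
  have acts {w : S} (hw : w ∈ b ⊔ Ideal.span {x}) :
      ∃ r : S, ∀ h ∈ torsionBySet S N b, w • h = x • r • h := by
    obtain ⟨s, hs, t, ht, rfl⟩ := Submodule.mem_sup.1 hw
    obtain ⟨r, rfl⟩ := Ideal.mem_span_singleton'.1 ht
    refine ⟨r, fun h hh => ?_⟩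
    rw [add_smul, (mem_torsionBySet_iff _ _).1 hh ⟨s, hs⟩, zero_add, mul_comm, mul_smul]
  obtain ⟨w, hw, hwreg⟩ := hgrade.exists_isSMulRegular
  obtain ⟨w', hw', hw'reg⟩ := (quotSMulTop hwreg hgrade).exists_isSMulRegular
  obtain ⟨r, hr⟩ := acts hw
  obtain ⟨r', hr'⟩ := acts hw'
  have hcomm : w' • r • h = w • r' • h := by
    rw [hr' _ (smul_mem _ r hh), hr _ (smul_mem _ r' hh), smul_comm r' r h]
  obtain ⟨h', -, hh' : w • h' = r • h⟩ : r • h ∈ w • (⊤ : Submodule S N) := by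
    rw [← Submodule.Quotient.mk_eq_zero]
    apply hw'reg.right_eq_zero_of_smul
    rw [← Submodule.Quotient.mk_smul, Submodule.Quotient.mk_eq_zero, hcomm]
    exact smul_mem_pointwise_smul _ _ _ trivial
  refine ⟨h', (mem_torsionBySet_iff _ _).2 fun s => hwreg.right_eq_zero_of_smul ?_, hwreg ?_⟩
  · rw [smul_comm, hh', smul_comm, (mem_torsionBySet_iff _ _).1 hh s, smul_zero]
  · change w • h = w • x • h'
    rw [smul_comm w x, hh', hr h hh]

lemma le_height {Q : Ideal S} [Q.IsPrime] {n : ℕ} (h : GradeGE Q n S) : (n : ℕ∞) ≤ Q.height := by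
  obtain ⟨rs, hlen, hrs, hreg⟩ := h.exists_isWeaklyRegular
  have hreg' := hreg.isRegular_of_isLocalization_of_mem (Localization.AtPrime Q) Q hrs
  have hdim := ringKrullDim_add_length_eq_ringKrullDim_of_isRegular _ hreg'
  rw [IsLocalization.AtPrime.ringKrullDim_eq_height Q (Localization.AtPrime Q),
    List.length_map, hlen] at hdim
  have hnt : Nontrivial (Localization.AtPrime Q ⧸
      Ideal.ofList (rs.map (algebraMap S (Localization.AtPrime Q)))) :=
    Ideal.Quotient.nontrivial_iff.2 fun htop => hreg'.top_ne_smul (by simp [htop])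
  have hn : (n : WithBot ℕ∞) ≤ (Q.height : WithBot ℕ∞) :=
    hdim ▸ le_add_of_nonneg_left ringKrullDim_nonneg_of_nontrivial
  exact_mod_cast hn

end Noetherian

section Local

variable {R : Type u} [CommRing R] [IsNoetherianRing R] [IsLocalRing R]
  {N : Type u} [AddCommGroup N] [Module R N] [Module.Finite R N] {n : ℕ}

/- Otherwise the `b`-torsion `H` of `N` is nonzero; but `H = x H`, against Nakayama's lemma. -/
lemma exists_isSMulRegular_of_sup_span {b : Ideal R} {x : R} (hx : x ∈ maximalIdeal R)
    (h : GradeGE (b ⊔ Ideal.span {x}) 2 N) : ∃ y ∈ b, IsSMulRegular N y := by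
  by_contra! hcon
  obtain ⟨Q, -, hbQ, a, ha, hann⟩ := exists_isPrime_forall_mem_iff_smul_eq_zero hcon
  have haH : a ∈ torsionBySet R N b := (mem_torsionBySet_iff _ _).2 fun s => (hann s).1 (hbQ s.2)
  have hle : torsionBySet R N b ≤ maximalIdeal R • torsionBySet R N b := by
    intro g hg
    obtain ⟨g', hg', rfl⟩ := exists_mem_torsionBySet_eq_smul h hg
    exact smul_mem_smul hx hg'
  rw [eq_bot_of_le_smul_of_le_jacobson_bot _ _ (IsNoetherian.noetherian _) hle
    (IsLocalRing.maximalIdeal_le_jacobson _), mem_bot] at haH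
  exact ha haH

lemma of_sup_span_singleton {b : Ideal R} {x : R} (hx : x ∈ maximalIdeal R)
    (h : GradeGE (b ⊔ Ideal.span {x}) (n + 1) N) : GradeGE b n N := by
  induction n generalizing N with
  | zero => exact zero
  | succ n ih =>
    obtain ⟨y, hy, hreg⟩ := exists_isSMulRegular_of_sup_span hx (h.mono (by lia))
    exact of_quotSMulTop hy hreg (ih (quotSMulTop hreg h))

lemma of_forall_lt_isPrime {P : Ideal R} (hP : P < maximalIdeal R)
    (h : ∀ Q : Ideal R, Q.IsPrime → P < Q → GradeGE Q (n + 1) N) : GradeGE P n N := by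
  obtain ⟨x, hx, hxP⟩ := SetLike.exists_of_lt hP
  refine of_sup_span_singleton hx (of_forall_isPrime fun Q _ hle => h Q ‹_› ?_)
  refine (le_sup_left.trans hle).lt_of_ne ?_
  rintro rfl
  exact hxP (hle (Ideal.mem_sup_right (Ideal.mem_span_singleton_self x)))

end Local

end GradeGE

lemma natCast_succ_le_height_of_lt {S : Type u} [CommRing S] {P Q : Ideal S} [P.IsPrime]
    [Q.IsPrime] (h : P < Q) {n : ℕ} (hn : (n : ℕ∞) ≤ P.height) :
    ((n + 1 : ℕ) : ℕ∞) ≤ Q.height := by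
  rw [Nat.cast_succ]
  exact (by gcongr : (n : ℕ∞) + 1 ≤ P.height + 1).trans (Ideal.height_add_one_le_of_lt_of_isPrime h)

lemma ringKrullDim_quotient_add_one_le_of_lt {S : Type u} [CommRing S] {P Q : Ideal S} [P.IsPrime]
    (h : P < Q) : ringKrullDim (S ⧸ Q) + 1 ≤ ringKrullDim (S ⧸ P) := by
  obtain ⟨x, hx, hxP⟩ := SetLike.exists_of_lt h
  have hx0 : Ideal.Quotient.mk P x ∈ nonZeroDivisors (S ⧸ P) :=
    mem_nonZeroDivisors_of_ne_zero (mt Ideal.Quotient.eq_zero_iff_mem.1 hxP)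
  have hle : Ideal.span {Ideal.Quotient.mk P x} ≤ RingHom.ker (Ideal.Quotient.factor h.le) := by
    simpa [RingHom.mem_ker, Ideal.Quotient.eq_zero_iff_mem] using hx
  refine le_trans ?_ (ringKrullDim_quotient_succ_le_of_nonZeroDivisor hx0)
  gcongr
  exact ringKrullDim_le_of_surjective (Ideal.Quotient.lift _ _ hle)
    (Ideal.Quotient.lift_surjective_of_surjective _ _ (Ideal.Quotient.factor_surjective h.le))

namespace SerreCondition

variable {R : Type u} [CommRing R] [IsNoetherianRing R] [IsLocalRing R]

lemma of_gradeGE_maximalIdeal {N : Type u} [AddCommGroup N] [Module R N] [Module.Finite R N]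
    {m c : ℕ} (h : GradeGE (maximalIdeal R) m N)
    (hm : (maximalIdeal R).height ≤ ((m + c : ℕ) : ℕ∞)) : SerreCondition R c ⊤ N := by
  intro P
  induction P using WellFoundedGT.induction with
  | ind P ih =>
    intro hP n _ hn
    rcases (IsLocalRing.le_maximalIdeal hP.ne_top).eq_or_lt with rfl | hlt
    · have := hn.trans hm
      exact h.mono (by norm_cast at this; lia)
    · refine GradeGE.of_forall_lt_isPrime hlt fun Q hQ hPQ => ih Q hPQ hQ _ le_top ?_
      rw [add_right_comm n 1 c]
      exact natCast_succ_le_height_of_lt hPQ hn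

/- If no prime above `P` had height `ht P + 1`, the grade of `P` on `R` would exceed `ht P`. -/
lemma exists_lt_isPrime_height_le (h : SerreCondition R 0 ⊤ R) {P : Ideal R} [P.IsPrime]
    (hP : P < maximalIdeal R) : ∃ Q : Ideal R, Q.IsPrime ∧ P < Q ∧ Q.height ≤ P.height + 1 := by
  by_contra! hcon
  obtain ⟨m, hm⟩ := ENat.ne_top_iff_exists.1 (Ideal.height_ne_top (I := P) ‹P.IsPrime›.ne_top)
  have hgrade : GradeGE P (m + 1) R := GradeGE.of_forall_lt_isPrime hP fun Q hQ hPQ =>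
    h Q hQ _ le_top (by exact_mod_cast hm ▸ Order.add_one_le_of_lt (hcon Q hQ hPQ))
  have := hgrade.le_height
  rw [← hm, Nat.cast_le] at this
  lia

lemma height_maximalIdeal_le (h : SerreCondition R 0 ⊤ R) (P : Ideal R) [hP : P.IsPrime] :
    ((maximalIdeal R).height : WithBot ℕ∞) ≤ (P.height : WithBot ℕ∞) + ringKrullDim (R ⧸ P) := by
  revert hP
  induction P using WellFoundedGT.induction with
  | ind P ih =>
    intro hP
    rcases (IsLocalRing.le_maximalIdeal hP.ne_top).eq_or_lt with rfl | hlt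
    · exact le_add_of_nonneg_right (ringKrullDim_nonneg_of_nontrivial (R := R ⧸ maximalIdeal R))
    · obtain ⟨Q, hQ, hPQ, hle⟩ := h.exists_lt_isPrime_height_le hlt
      calc ((maximalIdeal R).height : WithBot ℕ∞)
          ≤ (Q.height : WithBot ℕ∞) + ringKrullDim (R ⧸ Q) := ih Q hPQ
        _ ≤ ((P.height + 1 : ℕ∞) : WithBot ℕ∞) + ringKrullDim (R ⧸ Q) := by
            gcongr
            exact WithBot.coe_le_coe.2 hle
        _ = (P.height : WithBot ℕ∞) + (ringKrullDim (R ⧸ Q) + 1) := by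
            rw [WithBot.coe_add, WithBot.coe_one, add_assoc, add_comm 1]
        _ ≤ (P.height : WithBot ℕ∞) + ringKrullDim (R ⧸ P) := by
            gcongr
            exact ringKrullDim_quotient_add_one_le_of_lt hPQ

end SerreCondition

end SerreCondition

section PolynomialModule

open Pointwise Polynomial

variable {S : Type u} [CommRing S] {A B C' : Type u} [AddCommGroup A] [Module S A]
  [AddCommGroup B] [Module S B] [AddCommGroup C'] [Module S C']

lemma polynomialModule_ext {g h : PolynomialModule S A} (H : ∀ n, g.coeff n = h.coeff n) :
    g = h :=
  PolynomialModule.coeff_injective (Finsupp.ext H)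

/-- The map `A[X] → B[X]` applying a linear map `f : A → B` to the coefficients. Unlike
`PolynomialModule.map` it is bundled as a map linear over `S[X]`. -/
noncomputable def polyMap (f : A →ₗ[S] B) :
    PolynomialModule S A →ₗ[S[X]] PolynomialModule S B where
  toFun g := PolynomialModule.ofCoeff S (g.coeff.mapRange f f.map_zero)
  map_add' x y := polynomialModule_ext fun n => by simp
  map_smul' r x := polynomialModule_ext fun n => by simp [PolynomialModule.smul_apply]

@[simp]
lemma coeff_polyMap (f : A →ₗ[S] B) (g : PolynomialModule S A) (n : ℕ) :
    (polyMap f g).coeff n = f (g.coeff n) := by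
  simp [polyMap]

@[simp]
lemma polyMap_single (f : A →ₗ[S] B) (n : ℕ) (a : A) :
    polyMap f (PolynomialModule.single S n a) = PolynomialModule.single S n (f a) :=
  polynomialModule_ext fun m => by
    rw [coeff_polyMap]
    simp only [PolynomialModule.coeff_single, Finsupp.single_apply]
    split_ifs <;> simp

lemma polyMap_surjective {f : A →ₗ[S] B} (hf : Function.Surjective f) :
    Function.Surjective (polyMap f) := by
  intro g
  obtain ⟨h, hh⟩ := Finsupp.mapRange_surjective f f.map_zero hf g.coeff
  exact ⟨PolynomialModule.ofCoeff S h, polynomialModule_ext fun n => by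
    rw [coeff_polyMap, ← hh, PolynomialModule.coeff_ofCoeff, Finsupp.mapRange_apply]⟩

lemma polyMap_exact {f : A →ₗ[S] B} {g : B →ₗ[S] C'} (h : Function.Exact f g) :
    Function.Exact (polyMap f) (polyMap g) := by
  intro x
  refine ⟨fun hx => ?_, ?_⟩
  · have hlift : ∀ n, ∃ a, f a = x.coeff n ∧ (x.coeff n = 0 → a = 0) := by
      intro n
      by_cases h0 : x.coeff n = 0
      · exact ⟨0, by rw [map_zero, h0], fun _ => rfl⟩
      · obtain ⟨a, ha⟩ := (h (x.coeff n)).1 (by rw [← coeff_polyMap, hx]; simp)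
        exact ⟨a, ha, fun hn => absurd hn h0⟩
    choose a ha ha0 using hlift
    refine ⟨PolynomialModule.ofCoeff S (Finsupp.onFinset x.coeff.support a fun n hn =>
      Finsupp.mem_support_iff.2 (mt (ha0 n) hn)), polynomialModule_ext fun n => ?_⟩
    simp [ha]
  · rintro ⟨y, rfl⟩
    exact polynomialModule_ext fun n => by
      simpa only [coeff_polyMap, PolynomialModule.coeff_zero, Finsupp.coe_zero, Pi.zero_apply]
        using h.apply_apply_eq_zero _

open Submodule in
instance finite_polynomialModule [Module.Finite S A] :
    Module.Finite S[X] (PolynomialModule S A) := by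
  obtain ⟨s, hs⟩ := Module.Finite.fg_top (R := S) (M := A)
  have hspan (a : A) : PolynomialModule.single S 0 a ∈
      span S[X] (PolynomialModule.single S 0 '' (s : Set A)) := by
    have ha : a ∈ span S (s : Set A) := hs ▸ mem_top
    induction ha using span_induction with
    | mem x hx => exact subset_span ⟨x, hx, rfl⟩
    | zero => simp
    | add x y _ _ hx hy => rw [PolynomialModule.single_add]; exact add_mem hx hy
    | smul r x _ hx =>
      have := smul_mem _ (monomial 0 r : S[X]) hx
      rwa [PolynomialModule.monomial_smul_single, zero_add] at this
  refine ⟨fg_def.2 ⟨PolynomialModule.single S 0 '' s, s.finite_toSet.image _,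
    eq_top_iff.2 fun g _ => ?_⟩⟩
  induction g using PolynomialModule.induction_linear with
  | zero => exact zero_mem _
  | add x y hx hy => exact add_mem (hx mem_top) (hy mem_top)
  | single n a => simpa using smul_mem _ (monomial n (1 : S)) (hspan a)

lemma coeff_C_smul (r : S) (g : PolynomialModule S A) (n : ℕ) :
    (C r • g).coeff n = r • g.coeff n := by
  rw [← monomial_zero_left, PolynomialModule.monomial_smul_apply]
  simp

lemma coeff_X_smul_succ (g : PolynomialModule S A) (n : ℕ) :
    ((X : S[X]) • g).coeff (n + 1) = g.coeff n := by
  rw [← monomial_one_one_eq_X, PolynomialModule.monomial_smul_apply]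
  simp

lemma isSMulRegular_polynomialModule_C {x : S} (hx : IsSMulRegular A x) :
    IsSMulRegular (PolynomialModule S A) (C x) := fun g h H =>
  polynomialModule_ext fun n => hx <| by
    simpa only [coeff_C_smul] using congr(PolynomialModule.coeff $H n)

lemma isSMulRegular_polynomialModule_X : IsSMulRegular (PolynomialModule S A) (X : S[X]) :=
  fun g h H => polynomialModule_ext fun n => by
    simpa only [coeff_X_smul_succ] using congr(PolynomialModule.coeff $H (n + 1))

/-- Division by a scalar `x : S` commutes with passing to polynomials. -/
noncomputable def quotSMulTopPolynomialModuleEquiv (x : S) :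
    QuotSMulTop (C x) (PolynomialModule S A) ≃ₗ[S[X]] PolynomialModule S (QuotSMulTop x A) :=
  have hmap : LinearMap.lsmul S[X] (PolynomialModule S A) (C x) =
      polyMap (LinearMap.lsmul S A x) :=
    LinearMap.ext fun _ => polynomialModule_ext fun _ => by simp [coeff_C_smul]
  have hexact := polyMap_exact (LinearMap.exact_lsmul_mkQ_smul_top A x)
  have hrange : C x • (⊤ : Submodule S[X] (PolynomialModule S A)) =
      LinearMap.range (polyMap (LinearMap.lsmul S A x)) :=
    by rw [← hmap, ← LinearMap.exact_iff.1 (LinearMap.exact_lsmul_mkQ_smul_top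
      (PolynomialModule S A) (C x)), Submodule.ker_mkQ]
  (Submodule.quotEquivOfEq _ _ hrange).trans
    (hexact.linearEquivOfSurjective (polyMap_surjective (Submodule.mkQ_surjective _)))

namespace GradeGE

lemma polynomialModule_of_quotSMulTop {x : S} {P : Ideal S[X]} {n : ℕ} (hxP : C x ∈ P)
    (hx : IsSMulRegular A x) (h : GradeGE P n (PolynomialModule S (QuotSMulTop x A))) :
    GradeGE P (n + 1) (PolynomialModule S A) :=
  of_quotSMulTop hxP (isSMulRegular_polynomialModule_C hx)
    (h.of_linearEquiv (quotSMulTopPolynomialModuleEquiv x).symm)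

lemma polynomialModule [IsNoetherianRing S] [Module.Finite S A] {P : Ideal S[X]} {n : ℕ}
    (h : GradeGE (P.comap C) n A) : GradeGE P n (PolynomialModule S A) := by
  induction n generalizing A with
  | zero => exact zero
  | succ n ih =>
    obtain ⟨x, hx, hreg⟩ := h.exists_isSMulRegular
    exact polynomialModule_of_quotSMulTop hx hreg (ih (quotSMulTop hreg h))

end GradeGE

lemma coeff_zero_pow_smul_coeff_eq_zero {f : S[X]} {g : PolynomialModule S A} (h : f • g = 0)
    (n : ℕ) : f.coeff 0 ^ (n + 1) • g.coeff n = 0 := by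
  induction n using Nat.strong_induction_on with
  | _ n ih =>
    have hsum : ∑ i ∈ Finset.range n, f.coeff (i + 1) • g.coeff (n - (i + 1)) +
        f.coeff 0 • g.coeff n = 0 := by
      have := Finset.sum_range_succ' (fun i => f.coeff i • g.coeff (n - i)) n
      rw [Nat.sub_zero] at this
      rw [← this,
        ← Finset.Nat.sum_antidiagonal_eq_sum_range_succ (fun i j => f.coeff i • g.coeff j),
        ← PolynomialModule.smul_apply, h, PolynomialModule.coeff_zero, Finsupp.zero_apply]
    have hvanish : f.coeff 0 ^ n •
        ∑ i ∈ Finset.range n, f.coeff (i + 1) • g.coeff (n - (i + 1)) = 0 := by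
      rw [Finset.smul_sum]
      refine Finset.sum_eq_zero fun i hi => ?_
      rw [Finset.mem_range] at hi
      rw [smul_comm, show n = i + (n - (i + 1) + 1) by lia, pow_add, mul_smul,
        show i + (n - (i + 1) + 1) - (i + 1) = n - (i + 1) by lia, ih _ (by lia), smul_zero,
        smul_zero]
    rw [pow_succ, mul_smul, eq_neg_of_add_eq_zero_right hsum, smul_neg, hvanish, neg_zero]

section AssociatedPrime

variable {Q : Ideal S[X]} [hQ : Q.IsPrime] {g : PolynomialModule S A}
  (h : ∀ s, s ∈ Q ↔ s • g = 0)

include h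

lemma C_coeff_zero_mem_of_mem {f : S[X]} (hf : f ∈ Q) : C (f.coeff 0) ∈ Q := by
  set d := g.coeff.support.sup id
  have hpow : C (f.coeff 0) ^ (d + 1) ∈ Q := by
    rw [h, ← C_pow]
    refine polynomialModule_ext fun n => ?_
    rw [coeff_C_smul, PolynomialModule.coeff_zero, Finsupp.zero_apply]
    by_cases hn : g.coeff n = 0
    · rw [hn, smul_zero]
    · have hle : n ≤ d := Finset.le_sup (f := id) (Finsupp.mem_support_iff.2 hn)
      rw [show d + 1 = (d - n) + (n + 1) by lia, pow_add, mul_smul,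
        coeff_zero_pow_smul_coeff_eq_zero ((h f).1 hf), smul_zero]
  exact hQ.mem_of_pow_mem _ hpow

lemma divX_mem_of_mem (hg : g ≠ 0) {f : S[X]} (hf : f ∈ Q) : f.divX ∈ Q := by
  have hX : (X : S[X]) ∉ Q := fun hX =>
    hg (isSMulRegular_polynomialModule_X.right_eq_zero_of_smul ((h X).1 hX))
  have hmul : X * f.divX ∈ Q := by
    rw [← sub_eq_iff_eq_add.2 f.X_mul_divX_add.symm]
    exact Q.sub_mem hf (C_coeff_zero_mem_of_mem h hf)
  exact (hQ.mem_or_mem hmul).resolve_left hX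

lemma C_coeff_mem_of_mem (hg : g ≠ 0) {f : S[X]} (hf : f ∈ Q) (j : ℕ) : C (f.coeff j) ∈ Q := by
  induction j generalizing f with
  | zero => exact C_coeff_zero_mem_of_mem h hf
  | succ j ih => simpa only [coeff_divX] using ih (divX_mem_of_mem h hg hf)

end AssociatedPrime

section Height

variable [IsNoetherianRing S]

lemma height_le_height_comap_C_add_one (P : Ideal S[X]) [P.IsPrime] :
    P.height ≤ (P.comap C).height + 1 := by
  set p : Ideal S := P.comap C with hp
  let : Algebra S[X] (Localization.AtPrime p)[X] := Polynomial.algebra S _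
  have : IsLocalization (p.primeCompl.map C) (Localization.AtPrime p)[X] :=
    Polynomial.isLocalization p.primeCompl _
  have hdisj : Disjoint (p.primeCompl.map C : Set S[X]) P :=
    Set.disjoint_left.2 fun _ ⟨_, hb, hbC⟩ ha => hb (hp ▸ Ideal.mem_comap.2 (hbC ▸ ha))
  have hP' : (P.map (algebraMap S[X] (Localization.AtPrime p)[X])).IsPrime :=
    IsLocalization.isPrime_of_isPrime_disjoint (p.primeCompl.map C) _ P ‹_› hdisj
  have hle := Ideal.height_le_ringKrullDim_of_ne_top hP'.ne_top
  rw [Polynomial.ringKrullDim_of_isNoetherianRing,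
    IsLocalization.AtPrime.ringKrullDim_eq_height p (Localization.AtPrime p),
    IsLocalization.height_map_of_disjoint (p.primeCompl.map C) _ hdisj] at hle
  exact_mod_cast hle

lemma height_le_height_comap_C (P : Ideal S[X]) [P.IsPrime] (h : P ≤ (P.comap C).map C) :
    P.height ≤ (P.comap C).height := by
  have : P.LiesOver (P.comap C) := ⟨rfl⟩
  have hP : (P.comap C).map (algebraMap S S[X]) = P := le_antisymm Ideal.map_comap_le h
  have hprime : ((P.comap C).map (algebraMap S S[X])).IsPrime := hP.symm ▸ ‹P.IsPrime›
  have hbot : P.map (Ideal.Quotient.mk ((P.comap C).map (algebraMap S S[X]))) = ⊥ := by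
    rw [hP, Ideal.map_quotient_self]
  have hle := Ideal.height_le_height_add_of_liesOver (P.comap C) P
  rwa [hbot, Ideal.height_bot, add_zero] at hle

lemma height_le_height_map_C (P : Ideal S) [P.IsPrime] :
    P.height ≤ (P.map (C : S →+* S[X])).height := by
  have : (P.map (C : S →+* S[X])).LiesOver P := by
    refine ⟨Ideal.ext fun x => ?_⟩
    rw [Ideal.under, Ideal.mem_comap, Polynomial.algebraMap_eq, Ideal.mem_map_C_iff]
    refine ⟨fun hx n => ?_, fun hx => by simpa using hx 0⟩
    rw [coeff_C]
    split_ifs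
    exacts [hx, zero_mem _]
  rw [Ideal.height_eq_height_add_of_liesOver_of_hasGoingDown P (P.map (C : S →+* S[X]))]
  exact le_self_add

end Height

variable [IsNoetherianRing S] [Module.Finite S A]

namespace GradeGE

/- If every element of `P` were a zero divisor on `A[X]`, then `P` would lie in an associated prime
of `A[X]`, and with `f` such a prime contains all the coefficients of `f`. -/
lemma polynomialModule_one {P : Ideal S[X]} {f : S[X]} (hf : f ∈ P)
    (h : GradeGE (P.comap C ⊔ Ideal.span (Set.range f.coeff)) 1 A) :
    GradeGE P 1 (PolynomialModule S A) := by
  obtain ⟨r, hr, hreg⟩ := h.exists_isSMulRegular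
  by_contra hcon
  obtain ⟨Q, hQ, hPQ, g, hg, hann⟩ := exists_isPrime_forall_mem_iff_smul_eq_zero
    fun x hx hxreg => hcon (one_of_isSMulRegular hx hxreg)
  have hle : P.comap C ⊔ Ideal.span (Set.range f.coeff) ≤ Q.comap C :=
    sup_le (Ideal.comap_mono hPQ) <| Ideal.span_le.2 <| Set.range_subset_iff.2 fun j =>
      C_coeff_mem_of_mem hann hg (hPQ hf) j
  exact hg ((isSMulRegular_polynomialModule_C hreg).right_eq_zero_of_smul ((hann _).1 (hle hr)))

lemma polynomialModule_succ {P : Ideal S[X]} {f : S[X]} {n : ℕ} (hf : f ∈ P)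
    (h : GradeGE (P.comap C) n A)
    (hsup : GradeGE (P.comap C ⊔ Ideal.span (Set.range f.coeff)) (n + 1) A) :
    GradeGE P (n + 1) (PolynomialModule S A) := by
  induction n generalizing A with
  | zero => exact polynomialModule_one hf hsup
  | succ n ih =>
    obtain ⟨x, hx, hreg⟩ := h.exists_isSMulRegular
    exact polynomialModule_of_quotSMulTop hx hreg (ih (quotSMulTop hreg h) (quotSMulTop hreg hsup))

end GradeGE

/- A prime `P` of `S[X]` either is extended from `p = P ∩ S` and has the height of `p`, or its
height is at most one larger; then some `f ∈ P` has a coefficient outside `p`, and the primes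
containing `p` and the coefficients of `f` have larger height than `p`. -/
lemma SerreCondition.polynomialModule {c : ℕ} {k : ℕ∞} (h : SerreCondition S c k A) :
    SerreCondition S[X] c k (PolynomialModule S A) := by
  rintro P hP (_ | n) hn hht
  · exact .zero
  by_cases hle : P ≤ (P.comap C).map C
  · exact (h _ inferInstance _ hn (hht.trans (height_le_height_comap_C P hle))).polynomialModule
  obtain ⟨f, hf, hfp⟩ := SetLike.not_le_iff_exists.1 hle
  obtain ⟨j, hj⟩ : ∃ j, f.coeff j ∉ P.comap C := by simpa [Ideal.mem_map_C_iff] using hfp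
  have hcomap : ((n + c : ℕ) : ℕ∞) ≤ (P.comap C).height := by
    rw [add_right_comm, Nat.cast_succ] at hht
    exact (ENat.add_le_add_iff_right ENat.one_ne_top).1
      (hht.trans (height_le_height_comap_C_add_one P))
  refine .polynomialModule_succ hf (h _ inferInstance n (le_trans (by simp) hn) hcomap)
    (.of_forall_isPrime fun Q hQ hcQ => h Q hQ _ hn ?_)
  have hlt : P.comap C < Q := by
    refine (le_sup_left.trans hcQ).lt_of_ne ?_
    rintro rfl
    exact hj (hcQ (Ideal.mem_sup_right (Ideal.subset_span ⟨j, rfl⟩)))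
  rw [add_right_comm]
  exact natCast_succ_le_height_of_lt hlt hcomap

/-- The polynomials over `S / b` are the quotient of `S[X]` by the extension of `b`. -/
noncomputable def polynomialModuleQuotientEquiv (b : Ideal S) :
    PolynomialModule S (S ⧸ b) ≃ₗ[S[X]] S[X] ⧸ b.map (C : S →+* S[X]) :=
  let φ : S[X] →ₗ[S[X]] PolynomialModule S (S ⧸ b) :=
    polyMap b.mkQ ∘ₗ (PolynomialModule.equivPolynomialSelf (R := S)).symm.toLinearMap
  have hφ (f : S[X]) (n : ℕ) : (φ f).coeff n = Ideal.Quotient.mk b (f.coeff n) :=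
    coeff_polyMap _ _ _
  have hker : LinearMap.ker φ = b.map (C : S →+* S[X]) := Ideal.ext fun f => by
    rw [LinearMap.mem_ker, Ideal.mem_map_C_iff]
    simp only [← Ideal.Quotient.eq_zero_iff_mem, ← hφ]
    exact ⟨fun h n => by rw [h]; rfl, fun h => polynomialModule_ext h⟩
  ((Submodule.quotEquivOfEq _ _ hker.symm).trans (φ.quotKerEquivOfSurjective
    ((polyMap_surjective b.mkQ_surjective).comp (LinearEquiv.surjective _)))).symm

end PolynomialModule

section PolynomialEvaluation

open Polynomial

section Eval

variable {S : Type u} [CommRing S] {M : Type u} [AddCommGroup M] [Module S M] [Module S[X] M]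
  [IsScalarTower S S[X] M]

/-- The evaluation `N[X] → M`, `∑ xₙ Xⁿ ↦ ∑ Xⁿ • xₙ`, for an `S`-submodule `N` of an `S[X]`-module
`M`. -/
noncomputable def polyEval (N : Submodule S M) : PolynomialModule S N →ₗ[S[X]] M :=
  let φ : PolynomialModule S N →+ M :=
    (Finsupp.liftAddHom fun n => (DistribSMul.toAddMonoidHom M ((X : S[X]) ^ n)).comp
      N.subtype.toAddMonoidHom).comp PolynomialModule.coeffAddEquiv.toAddMonoidHom
  have hφ (n : ℕ) (x : N) : φ (PolynomialModule.single S n x) = (X : S[X]) ^ n • (x : M) :=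
    Finsupp.liftAddHom_apply_single _ n x
  { φ with
    map_smul' := fun f g => by
      change φ (f • g) = f • φ g
      induction g using PolynomialModule.induction_linear with
      | zero => simp
      | add x y hx hy => rw [smul_add, map_add, hx, hy, map_add, smul_add]
      | single n x =>
        induction f using Polynomial.induction_on' with
        | add p q hp hq => rw [add_smul, map_add, hp, hq, add_smul]
        | monomial i r =>
          rw [PolynomialModule.monomial_smul_single, hφ, hφ, ← C_mul_X_pow_eq_monomial, pow_add,
            mul_smul, mul_smul, ← algebraMap_eq, algebraMap_smul, Submodule.coe_smul,
            ← smul_algebra_smul_comm r (X ^ i), ← smul_algebra_smul_comm r (X ^ n)] }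

lemma polyEval_single (N : Submodule S M) (n : ℕ) (x : N) :
    polyEval N (PolynomialModule.single S n x) = (X : S[X]) ^ n • (x : M) :=
  Finsupp.liftAddHom_apply_single _ n x

lemma polyEval_eq_sum (N : Submodule S M) {g : PolynomialModule S N} {n : ℕ}
    (hg : ∀ m, n < m → g.coeff m = 0) :
    polyEval N g = ∑ m ∈ Finset.range (n + 1), (X : S[X]) ^ m • (g.coeff m : M) :=
  Finsupp.sum_of_support_subset g.coeff (fun m hm => Finset.mem_range_succ_iff.2 <|
    not_lt.1 fun h => Finsupp.mem_support_iff.1 hm (hg m h)) _ fun _ _ => by simp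

lemma polynomialModule_coeff_sub {A : Type u} [AddCommGroup A] [Module S A]
    (g h : PolynomialModule S A) (n : ℕ) : (g - h).coeff n = g.coeff n - h.coeff n :=
  congr($(map_sub PolynomialModule.coeffAddEquiv g h) n)

section Shift

variable {K N : Submodule S M} (hKN : K ≤ N) (hX : ∀ x ∈ K, (X : S[X]) • x ∈ N)

/-- The map `K[X] → N[X]`, `k ↦ X k - X • k`, where `X k` is the product with the variable of
`N[X]` and `X • k` is computed coefficientwise in the ambient `S[X]`-module. -/
noncomputable def polyShift : PolynomialModule S K →ₗ[S[X]] PolynomialModule S N :=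
  (X : S[X]) • polyMap (Submodule.inclusion hKN) -
    polyMap (((LinearMap.lsmul S[X] M X).restrictScalars S).restrict hX)

lemma polyShift_single (n : ℕ) (x : K) : polyShift hKN hX (PolynomialModule.single S n x) =
    PolynomialModule.single S (n + 1) (Submodule.inclusion hKN x) -
      PolynomialModule.single S n ⟨_, hX x x.2⟩ := by
  have hXsmul (y : N) : (X : S[X]) • PolynomialModule.single S n y =
      PolynomialModule.single S (n + 1) y := by
    rw [← monomial_one_one_eq_X, PolynomialModule.monomial_smul_single, one_smul, add_comm 1]
  rw [polyShift, LinearMap.sub_apply, LinearMap.smul_apply, polyMap_single, polyMap_single, hXsmul]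
  rfl

lemma coeff_polyShift_succ (g : PolynomialModule S K) (n : ℕ) :
    ((polyShift hKN hX g).coeff (n + 1) : M) = g.coeff n - (X : S[X]) • (g.coeff (n + 1) : M) := by
  rw [polyShift, LinearMap.sub_apply, LinearMap.smul_apply, polynomialModule_coeff_sub,
    coeff_X_smul_succ, coeff_polyMap, coeff_polyMap]
  rfl

lemma polyEval_polyShift (g : PolynomialModule S K) : polyEval N (polyShift hKN hX g) = 0 := by
  induction g using PolynomialModule.induction_linear with
  | zero => simp
  | add x y hx hy => rw [map_add, map_add, hx, hy, add_zero]
  | single n x =>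
    rw [polyShift_single, map_sub, polyEval_single, polyEval_single, pow_succ, mul_smul]
    exact sub_self _

lemma polyShift_injective : Function.Injective (polyShift hKN hX) := by
  refine (injective_iff_map_eq_zero _).2 fun g hg => polynomialModule_ext fun n => ?_
  have hstep (n : ℕ) (h : g.coeff (n + 1) = 0) : g.coeff n = 0 := by
    have hcoeff := coeff_polyShift_succ hKN hX g n
    rw [hg, h, ZeroMemClass.coe_zero, smul_zero, sub_zero] at hcoeff
    exact Subtype.ext hcoeff.symm
  obtain ⟨d, hd⟩ := g.coeff.support.bddAbove
  refine Nat.decreasingInduction (motive := fun m _ => g.coeff m = 0) (fun m _ => hstep m) ?_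
    (Nat.le_add_left n (d + 1))
  exact Finsupp.notMem_support_iff.1 fun h => by have := hd h; lia

lemma exact_polyShift_polyEval (hK : ∀ (g : PolynomialModule S N) (n : ℕ), polyEval N g = 0 →
      (∀ m, n + 1 < m → g.coeff m = 0) → (g.coeff (n + 1) : M) ∈ K) :
    Function.Exact (polyShift hKN hX) (polyEval N) := by
  refine fun g => ⟨fun hg => ?_, fun ⟨h, hh⟩ => hh ▸ polyEval_polyShift hKN hX h⟩
  obtain ⟨n, hn⟩ : ∃ n, ∀ m, n < m → g.coeff m = 0 := by
    obtain ⟨d, hd⟩ := g.coeff.support.bddAbove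
    exact ⟨d, fun m hm => Finsupp.notMem_support_iff.1 fun h => absurd (hd h) hm.not_ge⟩
  induction n generalizing g with
  | zero =>
    have hg0 : g = PolynomialModule.single S 0 (g.coeff 0) := polynomialModule_ext fun m => by
      rcases m with _ | m
      · simp
      · simp [hn (m + 1) m.succ_pos]
    rw [hg0, polyEval_single, pow_zero, one_smul, ZeroMemClass.coe_eq_zero] at hg
    exact ⟨0, by rw [hg0, hg, map_zero, PolynomialModule.single_zero]⟩
  | succ n ih =>
    let k : PolynomialModule S K := PolynomialModule.single S n ⟨_, hK g n hg hn⟩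
    have hk (m : ℕ) (hm : n < m) : (polyShift hKN hX k).coeff m = g.coeff m := by
      obtain rfl | hm' := (Nat.succ_le_of_lt hm).eq_or_lt
      · exact Subtype.ext (by simp [k, polyShift_single, polynomialModule_coeff_sub])
      · simp [k, polyShift_single, polynomialModule_coeff_sub, hm.ne, hm'.ne, hn m hm']
    obtain ⟨h, hh⟩ := ih (g - polyShift hKN hX k)
      (by rw [map_sub, hg, polyEval_polyShift, sub_zero])
      (fun m hm => by rw [polynomialModule_coeff_sub, hk m hm, sub_self])
    exact ⟨h + k, by rw [map_add, hh, sub_add_cancel]⟩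

end Shift

end Eval

section Algebra

variable {S B : Type u} [CommRing S] [CommRing B] [Algebra S B] [Algebra S[X] B]
  [IsScalarTower S S[X] B]

lemma range_polyEval_one :
    LinearMap.range (polyEval (1 : Submodule S B)) = (1 : Submodule S[X] B) := by
  refine le_antisymm ?_ ?_
  · rintro _ ⟨g, rfl⟩
    induction g using PolynomialModule.induction_linear with
    | zero => simp
    | add x y hx hy => rw [map_add]; exact add_mem hx hy
    | single n x =>
      obtain ⟨s, hs⟩ := Submodule.mem_one.1 x.2
      rw [polyEval_single, ← hs, IsScalarTower.algebraMap_apply S S[X] B]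
      exact Submodule.smul_mem _ _ (Submodule.mem_one.2 ⟨_, rfl⟩)
  · rintro _ hx
    obtain ⟨f, rfl⟩ := Submodule.mem_one.1 hx
    refine ⟨f • PolynomialModule.single S 0 ⟨1, Submodule.one_le.1 le_rfl⟩, ?_⟩
    rw [map_smul, polyEval_single, pow_zero, one_smul, Algebra.smul_def, mul_one]

/- The kernel of `S[X] → B` is controlled by the elements cancelling the leading terms `u Xⁿ⁺¹` of
its members: if `X u` is the image of `v ∈ S`, then `u Xⁿ⁺¹ - v Xⁿ` lies in the kernel. -/
lemma exists_C_pow_mul_mem_of_algebraMap_eq_zero {T : Ideal S[X]} {c : S}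
    (hconst : ∀ s, algebraMap S B s = 0 → ∃ N, C (c ^ N * s) ∈ T)
    (hlead : ∀ (F : S[X]) (n : ℕ), algebraMap S[X] B F = 0 → F.natDegree ≤ n + 1 →
      ∃ v, algebraMap S B v = algebraMap S[X] B X * algebraMap S B (c * F.coeff (n + 1)) ∧
        C (c * F.coeff (n + 1)) * X ^ (n + 1) - C v * X ^ n ∈ T)
    {F : S[X]} (hF : algebraMap S[X] B F = 0) : ∃ N, C c ^ N * F ∈ T := by
  have halg (s : S) : algebraMap S[X] B (C s) = algebraMap S B s :=
    (IsScalarTower.algebraMap_apply S S[X] B s).symm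
  obtain ⟨n, hn⟩ : ∃ n, F.natDegree ≤ n := ⟨_, le_rfl⟩
  induction n generalizing F with
  | zero =>
    rw [eq_C_of_natDegree_le_zero hn] at hF ⊢
    obtain ⟨N, hN⟩ := hconst _ (by rwa [halg] at hF)
    exact ⟨N, by rwa [C_mul, C_pow] at hN⟩
  | succ n ih =>
    obtain ⟨v, hv, hT⟩ := hlead F n hF hn
    set G := C (c * F.coeff (n + 1)) * X ^ (n + 1) - C v * X ^ n with hGdef
    have hG : algebraMap S[X] B G = 0 := by
      rw [hGdef, map_sub, map_mul _ (C _) (X ^ _), map_mul _ (C _) (X ^ _), halg, halg, hv, map_pow,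
        map_pow]
      ring
    have hdeg : (C c * F - G).natDegree ≤ n := by
      refine natDegree_le_iff_coeff_eq_zero.2 fun m hm => ?_
      rw [hGdef]
      simp only [coeff_sub, coeff_C_mul, coeff_X_pow, hm.ne', if_false, mul_zero, sub_zero]
      obtain rfl | hm' := (Nat.succ_le_of_lt hm).eq_or_lt
      · simp
      · rw [coeff_eq_zero_of_natDegree_lt (hn.trans_lt hm'), if_neg hm'.ne']
        simp
    obtain ⟨N, hN⟩ := ih (by rw [map_sub, map_mul, hF, hG, mul_zero, sub_zero]) hdeg
    refine ⟨N + 1, ?_⟩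
    have := add_mem hN (T.mul_mem_left (C c ^ N) hT)
    rwa [mul_sub, sub_add_cancel, ← mul_assoc, ← pow_succ] at this

end Algebra

end PolynomialEvaluation

section ReesPresentation

open Polynomial

lemma mem_colon_ideal {R : Type u} [CommRing R] {I J : Ideal R} {x : R} :
    x ∈ J.colon (I : Set R) ↔ ∀ y ∈ I, x * y ∈ J :=
  Submodule.mem_colon

lemma le_colon_ideal {R : Type u} [CommRing R] (I J : Ideal R) : J ≤ J.colon (I : Set R) :=
  fun _ hx => mem_colon_ideal.2 fun _ _ => J.mul_mem_right _ hx

section Coefficients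

variable {R : Type u} [CommRing R] {J : Ideal R} {S : Type u} [CommRing S] [Algebra R S]
  [Algebra S R[X]] [IsScalarTower R S R[X]]
  (hS : (IsScalarTower.toAlgHom R S R[X]).range = reesAlgebra J)

include hS

lemma coeff_algebraMap_mem_pow (s : S) (e : ℕ) : (algebraMap S R[X] s).coeff e ∈ J ^ e :=
  (mem_reesAlgebra_iff _ _).1 (hS ▸ (IsScalarTower.toAlgHom R S R[X]).mem_range_self s) e

lemma exists_algebraMap_eq_monomial {e : ℕ} {x : R} (hx : x ∈ J ^ e) :
    ∃ s : S, algebraMap S R[X] s = monomial e x :=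
  (hS ▸ reesAlgebra.monomial_mem.2 hx : monomial e x ∈ (IsScalarTower.toAlgHom R S R[X]).range)

lemma coeff_algebraMap_mem_mul_pow {b : Ideal R} {s : S} (hs : s ∈ b.map (algebraMap R S))
    (e : ℕ) : (algebraMap S R[X] s).coeff e ∈ b * J ^ e := by
  induction hs using Submodule.span_induction generalizing e with
  | mem _ hx =>
    obtain ⟨r, hr, rfl⟩ := hx
    rw [← IsScalarTower.algebraMap_apply, ← C_eq_algebraMap, coeff_C]
    split_ifs with h
    · simpa only [h, pow_zero, mul_one, Ideal.one_eq_top, Ideal.mul_top,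
        SetLike.mem_coe] using hr
    · exact zero_mem _
  | zero => simp
  | add x y _ _ hx hy => rw [map_add, coeff_add]; exact add_mem (hx e) (hy e)
  | smul c x _ hx =>
    rw [smul_eq_mul, map_mul, coeff_mul]
    refine sum_mem fun ij hij => ?_
    have := Ideal.mul_mem_mul (coeff_algebraMap_mem_pow hS c ij.1) (hx ij.2)
    rwa [mul_left_comm, ← pow_add, Finset.HasAntidiagonal.mem_antidiagonal.1 hij] at this

lemma exists_mem_map_algebraMap_eq {b : Ideal R} {f : R[X]} (hf : ∀ e, f.coeff e ∈ b * J ^ e) :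
    ∃ s ∈ b.map (algebraMap R S), algebraMap S R[X] s = f := by
  have hmonomial {e : ℕ} {x : R} (hx : x ∈ b * J ^ e) :
      ∃ s ∈ b.map (algebraMap R S), algebraMap S R[X] s = monomial e x := by
    induction hx using Submodule.mul_induction_on' with
    | mem_mul_mem r hr j hj =>
      obtain ⟨s, hs⟩ := exists_algebraMap_eq_monomial hS hj
      refine ⟨algebraMap R S r * s, Ideal.mul_mem_right _ _ (Ideal.mem_map_of_mem _ hr), ?_⟩
      rw [map_mul, ← IsScalarTower.algebraMap_apply, hs, ← C_eq_algebraMap, C_mul_monomial]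
    | add x _ y _ hx hy =>
      obtain ⟨s, hs, h⟩ := hx
      obtain ⟨s', hs', h'⟩ := hy
      exact ⟨s + s', add_mem hs hs', by rw [map_add, h, h', ← map_add]⟩
  choose g hg hg' using fun e => hmonomial (hf e)
  refine ⟨∑ e ∈ f.support, g e, sum_mem fun e _ => hg e, ?_⟩
  rw [map_sum]
  simp only [hg']
  exact f.sum_monomial_eq

lemma exists_mem_map_algebraMap_eq_X_mul {b : Ideal R} {f : R[X]}
    (hf : ∀ e, f.coeff e ∈ b * J ^ (e + 1)) :
    ∃ s ∈ b.map (algebraMap R S), algebraMap S R[X] s = X * f :=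
  exists_mem_map_algebraMap_eq hS fun
    | 0 => by simp
    | e + 1 => by rw [coeff_X_mul]; exact hf e

omit hS in
/- In degree `e + n` the term `(aX)ⁿ gₙ` contributes `aⁿ` times the coefficient of degree `e` of
`gₙ`, and for `m < n` the contribution of `(aX)ᵐ gₘ` lies in `J ^ (e + n - m)`. -/
lemma pow_mul_coeff_mem_pow_succ {a : R} {g : ℕ → R[X]} {n : ℕ}
    (hg : ∀ m e, (g m).coeff e ∈ J ^ e)
    (h : ∑ m ∈ Finset.range (n + 1), monomial 1 a ^ m * g m = 0) (e : ℕ) :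
    a ^ n * (g n).coeff e ∈ J ^ (e + 1) := by
  have hterm (m : ℕ) : monomial 1 a ^ m * g m = C (a ^ m) * g m * X ^ m := by
    rw [monomial_pow, one_mul, ← C_mul_X_pow_eq_monomial, mul_right_comm]
  have hcoeff := congr(($h).coeff (e + n))
  simp only [Finset.sum_range_succ, coeff_add, coeff_zero, finsetSum_coeff, hterm, coeff_mul_X_pow,
    coeff_C_mul] at hcoeff
  rw [eq_neg_of_add_eq_zero_right hcoeff]
  refine neg_mem (sum_mem fun m hm => ?_)
  rw [Finset.mem_range] at hm
  rw [show e + n = e + n - m + m by lia, coeff_mul_X_pow, coeff_C_mul]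
  exact Ideal.mul_mem_left _ _ (Ideal.pow_le_pow_right (by lia) (hg _ _))

end Coefficients

/-- A Noetherian ring `S` with a surjection onto the Rees algebra of `J ⊆ I` as it occurs in the
inductive construction of Rees algebras, one generator of `I` at a time. The surjection is
`algebraMap S R[X]`, so the `S`-module `R(J)` is `(1 : Submodule S R[X])`; `d` is one less than the
number of generators of `J` reached so far, and `a₀` is the first of them. -/
structure ReesPresentation {R : Type u} [CommRing R] (I J : Ideal R) (d : ℕ) (a₀ : R) (S : Type u)
    [CommRing S] [Algebra R S] [Algebra S R[X]] [IsScalarTower R S R[X]] : Prop where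
  isNoetherianRing : IsNoetherianRing S
  range_toAlgHom : (IsScalarTower.toAlgHom R S R[X]).range = reesAlgebra J
  mem_map_colon {b : Ideal R} {r : R} {s : S} :
    algebraMap R S r * s ∈ b.map (algebraMap R S) →
      s ∈ (b.colon (Ideal.span {r} : Set R)).map (algebraMap R S)
  serreCondition_map {b : Ideal R} {c : ℕ} {k : ℕ∞} :
    SerreCondition R c k (R ⧸ b) → SerreCondition S c k (S ⧸ b.map (algebraMap R S))
  exists_pow_mul_mem {c : R} {s : S} : c ∈ I → algebraMap S R[X] s = 0 →
    ∃ N : ℕ, algebraMap R S c ^ N * s ∈ J.map (algebraMap R S)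
  serreCondition_one : SerreCondition S d ⊤ (1 : Submodule S R[X])
  le_height_comap (p : Ideal R) [p.IsPrime] : a₀ ∉ p →
    (d : ℕ∞) ≤ ((p.map C).comap (algebraMap S R[X])).height

section Image

variable {S M N : Type u} [CommRing S] [AddCommGroup M] [Module S M] [AddCommGroup N] [Module S N]

lemma SerreCondition.map {φ : M →ₗ[S] N} {K : Submodule S M} {c : ℕ} {k : ℕ∞}
    (hker : LinearMap.ker φ ≤ K) (hrange : SerreCondition S c (k + 1) (LinearMap.range φ))
    (hK : SerreCondition S (c + 1) k (M ⧸ K)) : SerreCondition S c (k + 1) (K.map φ) := by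
  let π : LinearMap.range φ →ₗ[S] M ⧸ K :=
    (LinearMap.ker φ).mapQ K LinearMap.id hker ∘ₗ φ.quotKerEquivRange.symm
  have hπ (m : M) : π (φ.rangeRestrict m) = K.mkQ m := by
    have hm : φ.quotKerEquivRange.symm (φ.rangeRestrict m) = (LinearMap.ker φ).mkQ m :=
      φ.quotKerEquivRange.symm_apply_eq.2 rfl
    rw [LinearMap.comp_apply, LinearEquiv.coe_coe, hm]
    rfl
  refine left (f := Submodule.inclusion LinearMap.map_le_range) (g := π)
    (Submodule.inclusion_injective _) (fun y => ?_) (fun y => ?_) hrange hK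
  · obtain ⟨m, rfl⟩ := K.mkQ_surjective y
    exact ⟨_, hπ m⟩
  · obtain ⟨m, rfl⟩ := φ.surjective_rangeRestrict y
    change _ ↔ φ.rangeRestrict m ∈ LinearMap.range (Submodule.inclusion LinearMap.map_le_range)
    rw [hπ, K.mkQ_apply, Submodule.Quotient.mk_eq_zero, Submodule.range_inclusion]
    exact (SetLike.ext_iff.1 (Submodule.comap_map_eq_self hker) m).symm

end Image

section Step

variable {R S : Type u} [CommRing R] [CommRing S]

lemma map_algebraMap_polynomial [Algebra R S] (b : Ideal R) :
    b.map (algebraMap R S[X]) = (b.map (algebraMap R S)).map (C : S →+* S[X]) := by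
  rw [IsScalarTower.algebraMap_eq R S S[X], ← Ideal.map_map, Polynomial.algebraMap_eq]

lemma algebraMap_eq_sum [Algebra S R[X]] [Algebra S[X] R[X]] [IsScalarTower S S[X] R[X]] {a : R}
    (hX : algebraMap S[X] R[X] X = monomial 1 a) {F : S[X]} {n : ℕ} (hn : F.natDegree ≤ n) :
    algebraMap S[X] R[X] F =
      ∑ m ∈ Finset.range (n + 1), monomial 1 a ^ m * algebraMap S R[X] (F.coeff m) := by
  conv_lhs => rw [F.as_sum_range_C_mul_X_pow' (Nat.lt_succ_of_le hn), map_sum]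
  refine Finset.sum_congr rfl fun m _ => ?_
  rw [map_mul, map_pow, hX, mul_comm, IsScalarTower.algebraMap_apply S S[X] R[X],
    Polynomial.algebraMap_eq]

end Step

instance finite_one_submodule {S B : Type u} [CommRing S] [CommRing B] [Algebra S B] :
    Module.Finite S (1 : Submodule S B) :=
  Module.Finite.iff_fg.2 (Submodule.one_eq_span (R := S) (A := B) ▸ Submodule.fg_span_singleton 1)

namespace ReesPresentation

variable {R : Type u} [CommRing R] {I J : Ideal R} {a a₀ : R} {d : ℕ} {S : Type u} [CommRing S]
  [Algebra R S] [Algebra S R[X]] [IsScalarTower R S R[X]] (H : ReesPresentation I J d a₀ S)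

include H

lemma mem_map_colon_of_pow_mul_coeff_mem (ha : a ∈ I)
    (hreg : IsSMulRegular (R ⧸ J.colon (I : Set R)) a) {n : ℕ} {s : S}
    (hs : ∀ e, a ^ n * (algebraMap S R[X] s).coeff e ∈ J ^ (e + 1)) :
    s ∈ (J.colon (I : Set R)).map (algebraMap R S) := by
  obtain ⟨s', hs', hss'⟩ : ∃ s' ∈ J.map (algebraMap R S),
      algebraMap S R[X] s' = C (a ^ n) * algebraMap S R[X] s :=
    exists_mem_map_algebraMap_eq H.range_toAlgHom fun e => by
      rw [coeff_C_mul, ← pow_succ']; exact hs e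
  obtain ⟨N, hN⟩ := H.exists_pow_mul_mem ha (s := algebraMap R S (a ^ n) * s - s') <| by
    rw [map_sub, map_mul, ← IsScalarTower.algebraMap_apply, hss', C_eq_algebraMap, sub_self]
  have hmul : algebraMap R S (a ^ (N + n)) * s ∈ J.map (algebraMap R S) := by
    have := add_mem hN (Ideal.mul_mem_left _ (algebraMap R S a ^ N) hs')
    rwa [mul_sub, sub_add_cancel, ← mul_assoc, ← map_pow, ← map_mul, ← pow_add] at this
  refine Ideal.map_mono (fun x hx => ?_) (H.mem_map_colon hmul)
  refine (isSMulRegular_quotient_iff_mem_of_smul_mem _ _).1 (hreg.pow (N + n)) x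
    (le_colon_ideal _ _ ?_)
  rw [smul_eq_mul, mul_comm]
  exact mem_colon_ideal.1 hx _ (Ideal.mem_span_singleton_self _)

lemma ker_le_map_colon (ha : a ∈ I) (hreg : IsSMulRegular (R ⧸ J.colon (I : Set R)) a) :
    RingHom.ker (algebraMap S R[X]) ≤ (J.colon (I : Set R)).map (algebraMap R S) := fun s hs =>
  H.mem_map_colon_of_pow_mul_coeff_mem ha hreg (n := 0) fun e => by
    rw [RingHom.mem_ker.1 hs, coeff_zero, mul_zero]; exact zero_mem _

lemma serreCondition_map_image {K : Ideal R} {k : ℕ∞}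
    (hker : RingHom.ker (algebraMap S R[X]) ≤ K.map (algebraMap R S))
    (hK : SerreCondition R (d + 1) k (R ⧸ K)) : SerreCondition S d (k + 1)
      (Submodule.map (Algebra.linearMap S R[X]) (K.map (algebraMap R S))) :=
  SerreCondition.map (φ := Algebra.linearMap S R[X]) hker
    (Submodule.one_eq_range (R := S) (A := R[X]) ▸ H.serreCondition_one.mono le_rfl le_top)
    (H.serreCondition_map hK)

lemma monomial_one_mul_mem_one (ha : a ∈ I) {x : R[X]} (hx : x ∈ Submodule.map
      (Algebra.linearMap S R[X]) ((J.colon (I : Set R)).map (algebraMap R S))) :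
    monomial 1 a * x ∈ (1 : Submodule S R[X]) := by
  obtain ⟨s, hs, rfl⟩ := hx
  obtain ⟨s', -, hs'⟩ : ∃ s' ∈ (⊤ : Ideal R).map (algebraMap R S),
      algebraMap S R[X] s' = X * (C a * algebraMap S R[X] s) := by
    refine exists_mem_map_algebraMap_eq_X_mul H.range_toAlgHom fun e => ?_
    have := Ideal.mul_mem_mul (Ideal.mem_span_singleton_self a)
      (coeff_algebraMap_mem_mul_pow H.range_toAlgHom hs e)
    rw [← mul_assoc] at this
    rw [coeff_C_mul, Ideal.top_mul, pow_succ']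
    refine Ideal.mul_mono_left (Ideal.span_singleton_mul_le_iff.2 fun x hx => ?_) this
    rw [mul_comm]
    exact mem_colon_ideal.1 hx a ha
  refine Submodule.mem_one.2 ⟨s', ?_⟩
  rw [hs', Algebra.linearMap_apply, ← C_mul_X_eq_monomial]
  ring

section Step

variable [Algebra S[X] R[X]] [IsScalarTower S S[X] R[X]]
  (hX : algebraMap S[X] R[X] X = monomial 1 a)

include hX

lemma coeff_mem_map_colon (ha : a ∈ I) (hreg : IsSMulRegular (R ⧸ J.colon (I : Set R)) a)
    {F : S[X]} {n : ℕ} (hF : algebraMap S[X] R[X] F = 0) (hn : F.natDegree ≤ n) :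
    F.coeff n ∈ (J.colon (I : Set R)).map (algebraMap R S) :=
  H.mem_map_colon_of_pow_mul_coeff_mem ha hreg <| pow_mul_coeff_mem_pow_succ
    (fun _ => coeff_algebraMap_mem_pow H.range_toAlgHom _) ((algebraMap_eq_sum hX hn).symm.trans hF)

/- The kernel of the evaluation consists of the multiples of `k X - X • k` for `k` in the image of
`J : I`. -/
lemma exists_exact_polynomialModule_one (ha : a ∈ I)
    (hreg : IsSMulRegular (R ⧸ J.colon (I : Set R)) a) :
    ∃ (f : PolynomialModule S (Submodule.map (Algebra.linearMap S R[X])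
          ((J.colon (I : Set R)).map (algebraMap R S))) →ₗ[S[X]]
        PolynomialModule S (1 : Submodule S R[X]))
      (g : PolynomialModule S (1 : Submodule S R[X]) →ₗ[S[X]] (1 : Submodule S[X] R[X])),
      Function.Injective f ∧ Function.Surjective g ∧ Function.Exact f g := by
  have hle : Submodule.map (Algebra.linearMap S R[X])
      ((J.colon (I : Set R)).map (algebraMap R S)) ≤ 1 :=
    Submodule.one_eq_range (R := S) (A := R[X]) ▸ LinearMap.map_le_range
  have hXmem (x) (hx : x ∈ Submodule.map (Algebra.linearMap S R[X])
      ((J.colon (I : Set R)).map (algebraMap R S))) :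
      (X : S[X]) • x ∈ (1 : Submodule S R[X]) := by
    rw [Algebra.smul_def, hX]
    exact H.monomial_one_mul_mem_one ha hx
  rw [← range_polyEval_one (S := S) (B := R[X])]
  refine ⟨polyShift hle hXmem, (polyEval 1).rangeRestrict, polyShift_injective hle hXmem,
    LinearMap.surjective_rangeRestrict _, ?_⟩
  rw [LinearMap.exact_iff, LinearMap.ker_rangeRestrict, ← LinearMap.exact_iff]
  refine exact_polyShift_polyEval hle hXmem fun g n hg hn => ?_
  obtain ⟨s, hs⟩ := Submodule.mem_one.1 (g.coeff (n + 1)).2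
  refine ⟨s, H.mem_map_colon_of_pow_mul_coeff_mem ha hreg (n := n + 1) fun e => ?_, hs⟩
  rw [hs]
  refine pow_mul_coeff_mem_pow_succ (g := fun m => (g.coeff m : R[X])) (fun m e => ?_) ?_ e
  · obtain ⟨s, hs⟩ := Submodule.mem_one.1 (g.coeff m).2
    exact hs ▸ coeff_algebraMap_mem_pow H.range_toAlgHom s e
  · rw [← hg, polyEval_eq_sum 1 hn]
    simp only [Algebra.smul_def, map_pow, hX]

lemma serreCondition_one_polynomial_of_colon_eq_bot (ha : a ∈ I)
    (hreg : IsSMulRegular (R ⧸ J.colon (I : Set R)) a) (hK : J.colon (I : Set R) = ⊥) :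
    SerreCondition S[X] d ⊤ (1 : Submodule S[X] R[X]) := by
  have := H.isNoetherianRing
  obtain ⟨f, g, -, hg, hfg⟩ := H.exists_exact_polynomialModule_one hX ha hreg
  have hsub : Subsingleton (Submodule.map (Algebra.linearMap S R[X])
      ((J.colon (I : Set R)).map (algebraMap R S))) := by
    rw [hK, Ideal.map_bot, Submodule.map_bot]
    infer_instance
  have hginj : Function.Injective g := (injective_iff_map_eq_zero _).2 fun y hy => by
    obtain ⟨x, rfl⟩ := (hfg y).1 hy
    rw [show x = 0 from polynomialModule_ext fun _ => Subsingleton.elim _ _, map_zero]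
  exact H.serreCondition_one.polynomialModule.of_linearEquiv (LinearEquiv.ofBijective g ⟨hginj, hg⟩)

lemma serreCondition_one_polynomial (ha : a ∈ I) (hreg : IsSMulRegular (R ⧸ J.colon (I : Set R)) a)
    (hK : SerreCondition R (d + 1) ⊤ (R ⧸ J.colon (I : Set R))) :
    SerreCondition S[X] (d + 1) ⊤ (1 : Submodule S[X] R[X]) := by
  have := H.isNoetherianRing
  obtain ⟨f, g, hf, hg, hfg⟩ := H.exists_exact_polynomialModule_one hX ha hreg
  have himage := H.serreCondition_map_image (H.ker_le_map_colon ha hreg) hK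
  exact .right hf hg hfg himage.polynomialModule
    (H.serreCondition_one.polynomialModule.mono (Nat.le_succ d) le_rfl)

lemma range_toAlgHom_polynomial [IsScalarTower R S[X] R[X]] :
    (IsScalarTower.toAlgHom R S[X] R[X]).range = reesAlgebra (J ⊔ Ideal.span {a}) := by
  have hle : reesAlgebra J ≤ reesAlgebra (J ⊔ Ideal.span {a}) := fun f hf e =>
    Ideal.pow_right_mono le_sup_left e (hf e)
  refine le_antisymm ?_ ?_
  · rintro _ ⟨F, rfl⟩
    change algebraMap S[X] R[X] F ∈ _
    rw [algebraMap_eq_sum hX le_rfl]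
    refine sum_mem fun m _ => mul_mem (pow_mem (reesAlgebra.monomial_mem.2 ?_) _)
      (hle (H.range_toAlgHom ▸ ⟨_, rfl⟩))
    rw [pow_one]
    exact Ideal.mem_sup_right (Ideal.mem_span_singleton_self _)
  · rw [← adjoin_monomial_eq_reesAlgebra]
    refine Algebra.adjoin_le ?_
    rintro _ ⟨y, hy, rfl⟩
    obtain ⟨j, hj, z, hz, rfl⟩ := Submodule.mem_sup.1 hy
    obtain ⟨r, rfl⟩ := Ideal.mem_span_singleton'.1 hz
    obtain ⟨s, hs⟩ := exists_algebraMap_eq_monomial H.range_toAlgHom ((pow_one J).symm ▸ hj)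
    refine ⟨C s + C (algebraMap R S r) * X, ?_⟩
    change algebraMap S[X] R[X] _ = _
    rw [map_add, map_mul, hX, ← Polynomial.algebraMap_eq, ← IsScalarTower.algebraMap_apply,
      ← IsScalarTower.algebraMap_apply, ← IsScalarTower.algebraMap_apply, hs, map_add,
      ← C_eq_algebraMap, C_mul_monomial]

lemma exists_pow_mul_mem_polynomial (ha : a ∈ I)
    (hreg : IsSMulRegular (R ⧸ J.colon (I : Set R)) a) {c : R} (hc : c ∈ I) {F : S[X]}
    (hF : algebraMap S[X] R[X] F = 0) :
    ∃ N : ℕ, algebraMap R S[X] c ^ N * F ∈ (J ⊔ Ideal.span {a}).map (algebraMap R S[X]) := by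
  have hCmem {s : S} (hs : s ∈ (J ⊔ Ideal.span {a}).map (algebraMap R S)) :
      C s ∈ (J ⊔ Ideal.span {a}).map (algebraMap R S[X]) := by
    rw [map_algebraMap_polynomial]
    exact Ideal.mem_map_of_mem _ hs
  have hJ : J.map (algebraMap R S) ≤ (J ⊔ Ideal.span {a}).map (algebraMap R S) :=
    Ideal.map_mono le_sup_left
  refine exists_C_pow_mul_mem_of_algebraMap_eq_zero (B := R[X]) (c := algebraMap R S c)
    (fun s hs => ?_) (fun F n hF hn => ?_) hF
  · obtain ⟨N, hN⟩ := H.exists_pow_mul_mem hc hs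
    exact ⟨N, hCmem (hJ hN)⟩
  · have hcF : algebraMap R S c * F.coeff (n + 1) ∈ J.map (algebraMap R S) := by
      have := Ideal.mul_mem_mul (Ideal.mem_map_of_mem (algebraMap R S) hc)
        (H.coeff_mem_map_colon hX ha hreg hF hn)
      rw [← Ideal.map_mul] at this
      refine Ideal.map_mono (Ideal.mul_le.2 fun r hr s hs => ?_) this
      rw [mul_comm]
      exact mem_colon_ideal.1 hs r hr
    obtain ⟨v, -, hv⟩ := exists_mem_map_algebraMap_eq_X_mul (b := ⊤) H.range_toAlgHom fun e => by
      rw [Ideal.top_mul, pow_succ']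
      exact coeff_algebraMap_mem_mul_pow H.range_toAlgHom hcF e
    refine ⟨algebraMap R S a * v, ?_, sub_mem (Ideal.mul_mem_right _ _ (hCmem (hJ hcF)))
      (Ideal.mul_mem_right _ _ (hCmem (Ideal.mul_mem_right _ _ (Ideal.mem_map_of_mem _
        (Ideal.mem_sup_right (Ideal.mem_span_singleton_self _))))))⟩
    rw [map_mul, hv, ← IsScalarTower.algebraMap_apply, ← C_eq_algebraMap, hX, ← C_mul_X_eq_monomial,
      mul_assoc]

lemma succ_le_height_comap_polynomial (ha₀ : a₀ ∈ J) {p : Ideal R} [p.IsPrime] (hp : a₀ ∉ p) :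
    ((d + 1 : ℕ) : ℕ∞) ≤ ((p.map C).comap (algebraMap S[X] R[X])).height := by
  have := H.isNoetherianRing
  obtain ⟨s, hs⟩ := exists_algebraMap_eq_monomial H.range_toAlgHom (e := 1) (x := a₀ * a)
    ((pow_one J).symm ▸ J.mul_mem_right _ ha₀)
  have halg (s : S) : algebraMap S[X] R[X] (C s) = algebraMap S R[X] s :=
    (IsScalarTower.algebraMap_apply S S[X] R[X] s).symm
  have hlt : ((p.map C).comap (algebraMap S R[X])).map C <
      (p.map C).comap (algebraMap S[X] R[X]) := by
    refine lt_of_le_of_ne (Ideal.map_le_iff_le_comap.2 fun x hx => ?_) fun heq => hp ?_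
    · rwa [Ideal.mem_comap, Ideal.mem_comap, halg]
    · have hmem : C (algebraMap R S a₀) * X - C s ∈
          (p.map C).comap (algebraMap S[X] R[X]) := by
        rw [Ideal.mem_comap, map_sub, map_mul, halg, halg, hX, hs, ← IsScalarTower.algebraMap_apply,
          ← C_eq_algebraMap, C_mul_monomial, sub_self]
        exact zero_mem _
      have hcoeff := Ideal.mem_map_C_iff.1 (heq ▸ hmem) 1
      rw [coeff_sub, coeff_C_mul, coeff_X_one, mul_one, coeff_C_of_ne_zero one_ne_zero, sub_zero,
        Ideal.mem_comap, ← IsScalarTower.algebraMap_apply, ← C_eq_algebraMap] at hcoeff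
      simpa using Ideal.mem_map_C_iff.1 hcoeff 0
  exact natCast_succ_le_height_of_lt hlt
    ((H.le_height_comap p hp).trans (height_le_height_map_C _))

lemma ker_polynomial_le (ha : a ∈ I) (hreg : IsSMulRegular (R ⧸ J.colon (I : Set R)) a)
    {K : Ideal R} (hK : J.colon (I : Set R) ≤ K)
    (hmul : Ideal.span {a} * J.colon (I : Set R) ≤ K * J) :
    RingHom.ker (algebraMap S[X] R[X]) ≤ K.map (algebraMap R S[X]) := by
  have hCmem {s : S} (hs : s ∈ K.map (algebraMap R S)) : C s ∈ K.map (algebraMap R S[X]) := by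
    rw [map_algebraMap_polynomial]
    exact Ideal.mem_map_of_mem _ hs
  have hle := Ideal.map_mono (f := algebraMap R S) hK
  intro F hF
  suffices ∃ N, C (1 : S) ^ N * F ∈ K.map (algebraMap R S[X]) by
    obtain ⟨N, hN⟩ := this
    rwa [C_1, one_pow, one_mul] at hN
  refine exists_C_pow_mul_mem_of_algebraMap_eq_zero (B := R[X]) (fun s hs => ⟨0, ?_⟩)
    (fun F n hF hn => ?_) hF
  · rw [pow_zero, one_mul]
    exact hCmem (hle (H.ker_le_map_colon ha hreg hs))
  · have hcoeff := H.coeff_mem_map_colon hX ha hreg hF hn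
    obtain ⟨v, hvK, hv⟩ := exists_mem_map_algebraMap_eq_X_mul (b := K) H.range_toAlgHom
        (f := C a * algebraMap S R[X] (F.coeff (n + 1))) fun e => by
      have := Ideal.mul_mem_mul (Ideal.mem_span_singleton_self a)
        (coeff_algebraMap_mem_mul_pow H.range_toAlgHom hcoeff e)
      rw [← mul_assoc] at this
      rw [coeff_C_mul, pow_succ', ← mul_assoc]
      exact Ideal.mul_mono_left hmul this
    rw [one_mul]
    refine ⟨v, ?_, sub_mem (Ideal.mul_mem_right _ _ (hCmem (hle hcoeff)))
      (Ideal.mul_mem_right _ _ (hCmem hvK))⟩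
    rw [hv, hX, ← C_mul_X_eq_monomial]
    ring

lemma polynomial [IsScalarTower R S[X] R[X]] (ha : a ∈ I)
    (hreg : IsSMulRegular (R ⧸ J.colon (I : Set R)) a) {d' : ℕ}
    (hone : SerreCondition S[X] d' ⊤ (1 : Submodule S[X] R[X]))
    (hheight : ∀ (p : Ideal R) [p.IsPrime], a₀ ∉ p →
      (d' : ℕ∞) ≤ ((p.map C).comap (algebraMap S[X] R[X])).height) :
    ReesPresentation I (J ⊔ Ideal.span {a}) d' a₀ S[X] where
  isNoetherianRing := have := H.isNoetherianRing; inferInstance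
  range_toAlgHom := H.range_toAlgHom_polynomial hX
  mem_map_colon {b r s} h := by
    rw [map_algebraMap_polynomial, Ideal.mem_map_C_iff] at h ⊢
    intro n
    have hn := h n
    rw [Polynomial.algebraMap_apply, coeff_C_mul] at hn
    exact H.mem_map_colon hn
  serreCondition_map {b c k} h := by
    have := H.isNoetherianRing
    rw [map_algebraMap_polynomial]
    exact (H.serreCondition_map h).polynomialModule.of_linearEquiv (polynomialModuleQuotientEquiv _)
  exists_pow_mul_mem hc hF := H.exists_pow_mul_mem_polynomial hX ha hreg hc hF
  serreCondition_one := hone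
  le_height_comap := hheight

end Step

end ReesPresentation

lemma reesPresentation_bot {R : Type u} [CommRing R] [IsNoetherianRing R] (I : Ideal R) (a₀ : R)
    (h : SerreCondition R 0 ⊤ R) : ReesPresentation I ⊥ 0 a₀ R where
  isNoetherianRing := inferInstance
  range_toAlgHom := by
    refine le_antisymm ?_ fun f hf => ⟨f.coeff 0, ext fun e => ?_⟩
    · rintro _ ⟨r, rfl⟩
      exact algebraMap_mem _ r
    · change (C (f.coeff 0)).coeff e = _
      rw [coeff_C]
      split_ifs with he
      · rw [he]
      · have hfe := hf e
        rw [← Ideal.zero_eq_bot, zero_pow he] at hfe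
        exact hfe.symm
  mem_map_colon {b r s} hs := by
    rw [Algebra.algebraMap_self, Ideal.map_id] at hs ⊢
    refine mem_colon_ideal.2 fun y hy => ?_
    obtain ⟨q, rfl⟩ := Ideal.mem_span_singleton'.1 hy
    rw [mul_comm, mul_assoc]
    exact b.mul_mem_left _ hs
  serreCondition_map {b c k} hb := by rwa [Algebra.algebraMap_self, Ideal.map_id]
  exists_pow_mul_mem {c s} _ hs := by
    rw [← C_eq_algebraMap, C_eq_zero] at hs
    exact ⟨0, by rw [hs, mul_zero]; exact zero_mem _⟩
  serreCondition_one := by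
    rw [Submodule.one_eq_range]
    exact h.of_linearEquiv (LinearEquiv.ofInjective (Algebra.linearMap R R[X]) C_injective)
  le_height_comap _ _ _ := by simp

section Chain

open Finset (range)

variable {R : Type u} [CommRing R]

/-- The ideal generated by the `a i` with `i ∈ U`. -/
def spanOn {ι : Type*} (a : ι → R) (U : Finset ι) : Ideal R := Ideal.span (a '' U)

lemma spanOn_empty {ι : Type*} (a : ι → R) : spanOn a ∅ = ⊥ := by simp [spanOn]

lemma spanOn_insert {ι : Type*} [DecidableEq ι] (a : ι → R) (j : ι) (U : Finset ι) :
    spanOn a (insert j U) = spanOn a U ⊔ Ideal.span {a j} := by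
  rw [spanOn, Finset.coe_insert, Set.image_insert_eq, Ideal.span_insert, sup_comm, spanOn]

lemma spanOn_mono {ι : Type*} (a : ι → R) : Monotone (spanOn a) := fun _ _ h =>
  Ideal.span_mono (Set.image_mono (Finset.coe_subset.2 h))

lemma mem_spanOn {ι : Type*} (a : ι → R) {U : Finset ι} {j : ι} (h : j ∈ U) : a j ∈ spanOn a U :=
  Ideal.subset_span ⟨j, h, rfl⟩

/-- The colon ideal `(a i | i ∈ U) : I`. -/
abbrev residualIdeal {ι : Type*} (I : Ideal R) (a : ι → R) (U : Finset ι) : Ideal R :=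
  (spanOn a U).colon (I : Set R)

lemma residualIdeal_mono {ι : Type*} (I : Ideal R) (a : ι → R) : Monotone (residualIdeal I a) :=
  fun _ _ h => Submodule.colon_mono (spanOn_mono a h) subset_rfl

lemma exists_algebra_polynomial {S B : Type u} [CommRing S] [CommRing B] [Algebra R S]
    [Algebra R B] [Algebra S B] [IsScalarTower R S B] (b : B) :
    ∃ (_ : Algebra S[X] B) (_ : IsScalarTower S S[X] B) (_ : IsScalarTower R S[X] B),
      algebraMap S[X] B X = b := by
  let : Algebra S[X] B := (aeval b).toAlgebra
  have hS : IsScalarTower S S[X] B := .of_algebraMap_eq fun s => (aeval_C b s).symm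
  refine ⟨this, hS, .of_algebraMap_eq fun r => ?_, aeval_X b⟩
  rw [IsScalarTower.algebraMap_apply R S S[X], ← IsScalarTower.algebraMap_apply S S[X] B,
    ← IsScalarTower.algebraMap_apply R S B]

section Step

variable {I : Ideal R} {a : ℕ → R} {i : ℕ} {S : Type u} [CommRing S] [Algebra R S]
  [Algebra S R[X]] [IsScalarTower R S R[X]]

lemma ReesPresentation.exists_succ (H : ReesPresentation I (spanOn a (range i)) (i - 1) (a 0) S)
    (ha : a i ∈ I) (hreg : IsSMulRegular (R ⧸ residualIdeal I a (range i)) (a i))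
    (hbot : residualIdeal I a ∅ = ⊥)
    (hres : SerreCondition R i ⊤ (R ⧸ residualIdeal I a (range i))) :
    ∃ (_ : Algebra S[X] R[X]) (_ : IsScalarTower R S[X] R[X]),
      ReesPresentation I (spanOn a (range (i + 1))) i (a 0) S[X] ∧
      ∀ K : Ideal R, residualIdeal I a (range i) ≤ K →
        Ideal.span {a i} * residualIdeal I a (range i) ≤ K * spanOn a (range i) →
        RingHom.ker (algebraMap S[X] R[X]) ≤ K.map (algebraMap R S[X]) := by
  obtain ⟨_, _, _, hX⟩ := exists_algebra_polynomial (R := R) (S := S) (monomial 1 (a i))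
  refine ⟨_, ‹_›, ?_, fun K => H.ker_polynomial_le hX ha hreg⟩
  rw [Finset.range_add_one, spanOn_insert]
  cases i with
  | zero =>
    exact H.polynomial hX ha hreg
      (H.serreCondition_one_polynomial_of_colon_eq_bot hX ha hreg hbot) fun p _ _ => zero_le
  | succ j =>
    exact H.polynomial hX ha hreg (H.serreCondition_one_polynomial hX ha hreg hres)
      fun p _ hp => H.succ_le_height_comap_polynomial hX
        (mem_spanOn a (Finset.mem_range.2 j.succ_pos)) hp

end Step

section Existence

variable [IsNoetherianRing R] {I : Ideal R} {a : ℕ → R} {m : ℕ}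
  (hbot : residualIdeal I a ∅ = ⊥) (hR : SerreCondition R 0 ⊤ R)

include hbot hR

lemma exists_reesPresentation_spanOn (ha : ∀ i < m, a i ∈ I)
    (hreg : ∀ i < m, IsSMulRegular (R ⧸ residualIdeal I a (range i)) (a i))
    (hres : ∀ i < m, SerreCondition R i ⊤ (R ⧸ residualIdeal I a (range i))) :
    ∃ (S : Type u) (_ : CommRing S) (_ : Algebra R S) (_ : Algebra S R[X])
      (_ : IsScalarTower R S R[X]), ReesPresentation I (spanOn a (range m)) (m - 1) (a 0) S := by
  induction m with
  | zero =>
    rw [Finset.range_zero, spanOn_empty]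
    exact ⟨R, _, _, _, inferInstance, reesPresentation_bot I (a 0) hR⟩
  | succ m ih =>
    obtain ⟨S, _, _, _, _, H⟩ := ih (fun i hi => ha i (by lia)) (fun i hi => hreg i (by lia))
      fun i hi => hres i (by lia)
    obtain ⟨_, _, H', -⟩ := H.exists_succ (ha m (by lia)) (hreg m (by lia)) hbot (hres m (by lia))
    exact ⟨S[X], _, _, _, _, H'⟩

lemma exists_reesPresentation_ker_le (ha : ∀ i < m + 1, a i ∈ I)
    (hreg : ∀ i < m + 1, IsSMulRegular (R ⧸ residualIdeal I a (range i)) (a i))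
    (hres : ∀ i < m + 1, SerreCondition R i ⊤ (R ⧸ residualIdeal I a (range i)))
    (hmul : Ideal.span {a m} * residualIdeal I a (range m) ≤
      residualIdeal I a (range (m + 1)) * spanOn a (range m)) :
    ∃ (S : Type u) (_ : CommRing S) (_ : Algebra R S) (_ : Algebra S R[X])
      (_ : IsScalarTower R S R[X]),
      ReesPresentation I (spanOn a (range (m + 1))) m (a 0) S ∧
        RingHom.ker (algebraMap S R[X]) ≤
          (residualIdeal I a (range (m + 1))).map (algebraMap R S) := by
  obtain ⟨S, _, _, _, _, H⟩ := exists_reesPresentation_spanOn (m := m) hbot hR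
    (fun i hi => ha i (by lia)) (fun i hi => hreg i (by lia)) fun i hi => hres i (by lia)
  obtain ⟨_, _, H', hker⟩ := H.exists_succ (ha m m.lt_succ_self) (hreg m m.lt_succ_self) hbot
    (hres m m.lt_succ_self)
  exact ⟨S[X], _, _, _, _, H', hker _ (residualIdeal_mono I a (Finset.range_mono m.le_succ)) hmul⟩

end Existence

end Chain

end ReesPresentation

section Coefficients

variable {R ι : Type*} [CommRing R] [DecidableEq ι] {I : Ideal R} {a : ι → R} {U : Finset ι}

omit [DecidableEq ι] in
lemma mem_spanOn_iff {x : R} : x ∈ spanOn a U ↔ ∃ c : ι → R, ∑ i ∈ U, c i * a i = x :=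
  Submodule.mem_span_image_finset_iff_exists_fun' R

/- If `e ∈ I` then `u e = w' + z a` with `w' ∈ L`, so that `a (v e - c z) ∈ L` and hence
`(u + r v) e` is congruent to `z (a + r c)` modulo `L`. -/
lemma mem_colon_of_mul_eq_mul_add {L : Ideal R} {b c u v w r : R} (hc : c ∈ I)
    (hreg : IsSMulRegular (R ⧸ L.colon (I : Set R)) b) (hinf : I ⊓ L.colon (I : Set R) ≤ L)
    (hr : IsUnit r)
    (hcolon : (L ⊔ Ideal.span {b + r * c}).colon (I : Set R) =
      (L ⊔ Ideal.span {b}).colon (I : Set R))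
    (hu : u ∈ (L ⊔ Ideal.span {b}).colon (I : Set R)) (hw : w ∈ L) (huc : u * c = b * v + w) :
    v ∈ (L ⊔ Ideal.span {b}).colon (I : Set R) := by
  have hadd : u + r * v ∈ (L ⊔ Ideal.span {b}).colon (I : Set R) := by
    rw [← hcolon, mem_colon_ideal]
    intro e he
    obtain ⟨w', hw', z', hz', hue⟩ := Submodule.mem_sup.1 (mem_colon_ideal.1 hu e he)
    obtain ⟨z, rfl⟩ := Ideal.mem_span_singleton'.1 hz'
    have hbL : b • (v * e - c * z) ∈ L := by
      rw [show b • (v * e - c * z) = c * w' - w * e by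
        linear_combination (exp := 1) (-e) * huc - c * hue]
      exact sub_mem (L.mul_mem_left _ hw') (L.mul_mem_right _ hw)
    have hL : v * e - c * z ∈ L := hinf ⟨sub_mem (I.mul_mem_left _ he) (I.mul_mem_right _ hc),
      (isSMulRegular_quotient_iff_mem_of_smul_mem _ _).1 hreg _ (le_colon_ideal I L hbL)⟩
    rw [show (u + r * v) * e = (w' + r * (v * e - c * z)) + z * (b + r * c) by
      linear_combination -hue]
    exact add_mem (Ideal.mem_sup_left (add_mem hw' (L.mul_mem_left _ hL)))
      (Ideal.mem_sup_right (Ideal.mem_span_singleton'.2 ⟨z, rfl⟩))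
  exact (Ideal.unit_mul_mem_iff_mem _ hr).1 ((Submodule.add_mem_iff_right _ hu).1 hadd)

variable (hreg : ∀ j ∈ U, IsSMulRegular (R ⧸ residualIdeal I a (U.erase j)) (a j))

include hreg

lemma mem_residualIdeal_of_sum_mul_eq_zero {r : ι → R} (hr : ∑ i ∈ U, r i * a i = 0) {j : ι}
    (hj : j ∈ U) : r j ∈ residualIdeal I a U := by
  refine residualIdeal_mono I a (Finset.erase_subset j U) <|
    (isSMulRegular_quotient_iff_mem_of_smul_mem _ _).1 (hreg j hj) _ (le_colon_ideal _ _ ?_)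
  rw [← Finset.add_sum_erase _ _ hj] at hr
  rw [smul_eq_mul, mul_comm, eq_neg_of_add_eq_zero_left hr]
  exact neg_mem (sum_mem fun i hi => Ideal.mul_mem_left _ _ (mem_spanOn a hi))

lemma residualIdeal_mul_le
    (hinf : ∀ j ∈ U, I ⊓ residualIdeal I a (U.erase j) ≤ spanOn a (U.erase j))
    (hmodify : ∀ j ∈ U, ∀ c ∈ I, ∃ r : R, IsUnit r ∧
      (spanOn a (U.erase j) ⊔ Ideal.span {a j + r * c}).colon (I : Set R) = residualIdeal I a U) :
    residualIdeal I a U * I ≤ residualIdeal I a U * spanOn a U := by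
  refine Ideal.mul_le.2 fun u hu c hc => ?_
  obtain ⟨v, hv⟩ := mem_spanOn_iff.1 (mem_colon_ideal.1 hu c hc)
  rw [← hv]
  refine sum_mem fun j hj => Ideal.mul_mem_mul ?_ (mem_spanOn a hj)
  obtain ⟨r, hr, hcolon⟩ := hmodify j hj c hc
  have hU : spanOn a U = spanOn a (U.erase j) ⊔ Ideal.span {a j} := by
    rw [← spanOn_insert, Finset.insert_erase hj]
  rw [residualIdeal, hU] at hu hcolon ⊢
  refine mem_colon_of_mul_eq_mul_add hc (hreg j hj) (hinf j hj) hr hcolon hu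
    (mem_spanOn_iff.2 ⟨v, rfl⟩) ?_
  rw [← hv, ← Finset.add_sum_erase _ _ hj, mul_comm (a j)]

lemma span_singleton_mul_residualIdeal_erase_le {j : ι} (hj : j ∈ U) (ha : a j ∈ I) :
    Ideal.span {a j} * residualIdeal I a (U.erase j) ≤
      residualIdeal I a U * spanOn a (U.erase j) := by
  refine Ideal.span_singleton_mul_le_iff.2 fun x hx => ?_
  obtain ⟨r, hr⟩ := mem_spanOn_iff.1 (mem_colon_ideal.1 hx _ ha)
  rw [mul_comm (a j), ← hr]
  refine sum_mem fun i hi => Ideal.mul_mem_mul ?_ (mem_spanOn a hi)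
  have hsum : ∑ i ∈ U, Function.update r j (-x) i * a i = 0 := by
    rw [← Finset.add_sum_erase _ _ hj, Function.update_self, neg_mul, ← hr, neg_add_eq_zero]
    exact Finset.sum_congr rfl fun i hi => by
      rw [Function.update_of_ne (Finset.ne_of_mem_erase hi)]
  simpa only [Function.update_of_ne (Finset.ne_of_mem_erase hi)] using
    mem_residualIdeal_of_sum_mul_eq_zero hreg hsum (Finset.mem_of_mem_erase hi)

end Coefficients

section ResidualIntersections

variable {R : Type u} [CommRing R]

lemma rDim_localization_atPrime (p : Ideal R) [p.IsPrime] :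
    rDim (Localization.AtPrime p) = (p.height : WithBot ℕ∞) :=
  IsLocalization.AtPrime.ringKrullDim_eq_height p (Localization.AtPrime p)

lemma natCast_le_ht_iff {I : Ideal R} {n : ℕ} :
    (n : WithBot ℕ∞) ≤ ht I ↔ ∀ Q : Ideal R, Q.IsPrime → I ≤ Q → (n : ℕ∞) ≤ Q.height := by
  simp only [ht, le_iInf_iff, rDim_localization_atPrime]
  exact ⟨fun h Q hQ hI => by exact_mod_cast h ⟨Q, hQ⟩ hI,
    fun h p hp => by exact_mod_cast h p.asIdeal p.2 hp⟩

lemma lt_height_of_lt_ht {I Q : Ideal R} {n : ℕ} (h : (n : WithBot ℕ∞) < ht I) (hQ : Q.IsPrime)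
    (hI : I ≤ Q) : (n : ℕ∞) < Q.height := by
  have hle : ht I ≤ rDim (Localization.AtPrime Q) := iInf₂_le (⟨Q, hQ⟩ : PrimeSpectrum R) hI
  rw [rDim_localization_atPrime] at hle
  exact_mod_cast h.trans_le hle

variable [IsNoetherianRing R]

namespace SerreCondition

variable {c : ℕ} {I L N : Ideal R}

lemma exists_isPrime_height_le {M : Type u} [AddCommGroup M] [Module R M] [Module.Finite R M]
    (h : SerreCondition R c 1 M) {m : M} (hm : m ≠ 0) :
    ∃ Q : Ideal R, Q.IsPrime ∧ Q.height ≤ c ∧ ∀ s : R, s • m = 0 → s ∈ Q := by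
  obtain ⟨Q, hQ, hle⟩ := exists_le_isAssociatedPrime_of_isNoetherianRing R m hm
  obtain ⟨hQp, y, rfl⟩ := isAssociatedPrime_iff.1 hQ
  refine ⟨_, hQp, ?_, fun s hs => hle (Submodule.mem_colon_singleton.2 hs)⟩
  by_contra! hlt
  obtain ⟨x, hx, hreg⟩ := (h _ hQp 1 le_rfl (by
    rw [add_comm]; exact_mod_cast Order.add_one_le_of_lt hlt)).exists_isSMulRegular
  have hy : y = 0 := hreg.right_eq_zero_of_smul (Submodule.mem_colon_singleton.1 hx)
  exact hQp.ne_top (by simp [hy])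

lemma exists_isPrime_of_notMem (h : SerreCondition R c 1 (R ⧸ L)) {x : R} (hx : x ∉ L) :
    ∃ Q : Ideal R, Q.IsPrime ∧ Q.height ≤ c ∧ ∀ s, s * x ∈ L → s ∈ Q := by
  obtain ⟨Q, hQ, hc, hsQ⟩ :=
    h.exists_isPrime_height_le (mt (Submodule.Quotient.mk_eq_zero L).1 hx)
  exact ⟨Q, hQ, hc, fun s hs => hsQ s ((Submodule.Quotient.mk_eq_zero _).2 hs)⟩

lemma exists_isPrime_of_notMem_colon (h : SerreCondition R c 1 (R ⧸ L)) {x : R}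
    (hx : x ∉ L.colon (I : Set R)) :
    ∃ Q : Ideal R, Q.IsPrime ∧ Q.height ≤ c ∧ ∀ s, s * x ∈ L.colon (I : Set R) → s ∈ Q := by
  obtain ⟨y, hy, hxy⟩ : ∃ y ∈ I, x * y ∉ L := by
    by_contra! hcon
    exact hx (mem_colon_ideal.2 hcon)
  obtain ⟨Q, hQ, hc, hsQ⟩ := h.exists_isPrime_of_notMem hxy
  exact ⟨Q, hQ, hc, fun s hs => hsQ s (by rw [← mul_assoc]; exact mem_colon_ideal.1 hs y hy)⟩

protected lemma colon (h : SerreCondition R c 1 (R ⧸ L)) :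
    SerreCondition R c 1 (R ⧸ L.colon (I : Set R)) := by
  intro P _ n hn hP
  obtain rfl | rfl : n = 0 ∨ n = 1 := Nat.le_one_iff_eq_zero_or_eq_one.1 (by exact_mod_cast hn)
  · exact .zero
  · by_contra hcon
    obtain ⟨Q, -, hPQ, z, hz, hzQ⟩ := exists_isPrime_forall_mem_iff_smul_eq_zero
      fun x hx hreg => hcon (GradeGE.one_of_isSMulRegular hx hreg)
    obtain ⟨z, rfl⟩ := Submodule.Quotient.mk_surjective _ z
    rw [ne_eq, Submodule.Quotient.mk_eq_zero] at hz
    obtain ⟨Q', -, hc, hsQ'⟩ := h.exists_isPrime_of_notMem_colon hz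
    have hQQ' : Q ≤ Q' := fun s hs =>
      hsQ' s ((Submodule.Quotient.mk_eq_zero _).1 ((hzQ s).1 hs))
    have hle := (hP.trans (Ideal.height_mono (hPQ.trans hQQ'))).trans hc
    norm_cast at hle
    lia

lemma colon_eq_self_of_lt_ht (h : SerreCondition R c 1 (R ⧸ L)) (hI : (c : WithBot ℕ∞) < ht I) :
    L.colon (I : Set R) = L := by
  refine le_antisymm (fun x hx => ?_) (le_colon_ideal I L)
  by_contra hxL
  obtain ⟨Q, hQ, hc, hsQ⟩ := h.exists_isPrime_of_notMem hxL
  have hIQ : I ≤ Q := fun y hy => hsQ y (by rw [mul_comm]; exact mem_colon_ideal.1 hx y hy)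
  exact hc.not_gt (lt_height_of_lt_ht hI hQ hIQ)

omit [IsNoetherianRing R] in
lemma quotient_sup_span_singleton {a : R} (hmem : ∀ x, a * x ∈ L ↔ x ∈ N)
    (hN : SerreCondition R c ⊤ (R ⧸ N)) (hL : SerreCondition R (c + 1) ⊤ (R ⧸ L)) :
    SerreCondition R (c + 1) ⊤ (R ⧸ (L ⊔ Ideal.span {a})) := by
  let f : (R ⧸ N) →ₗ[R] (R ⧸ L) :=
    Submodule.mapQ N L (LinearMap.mulLeft R a) fun x hx => (hmem x).2 hx
  let g : (R ⧸ L) →ₗ[R] (R ⧸ (L ⊔ Ideal.span {a})) := Submodule.factor le_sup_left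
  have hf : Function.Injective f := by
    refine LinearMap.ker_eq_bot.1 (LinearMap.ker_eq_bot'.2 fun y hy => ?_)
    obtain ⟨x, rfl⟩ := Submodule.Quotient.mk_surjective _ y
    exact (Submodule.Quotient.mk_eq_zero _).2
      ((hmem x).1 ((Submodule.Quotient.mk_eq_zero _).1 hy))
  have hfg : Function.Exact f g := by
    have hker : g.ker = Submodule.map L.mkQ (L ⊔ Ideal.span {a}) := Submodule.ker_mapQ _ _ _ _
    have hrange : f.range = Submodule.map L.mkQ (Ideal.span {a}) := by
      rw [← Ideal.range_mul']
      exact Submodule.range_mapQ _ _ _ _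
    rw [LinearMap.exact_iff, hker, hrange, Submodule.map_sup, Submodule.mkQ_map_self, bot_sup_eq]
  exact SerreCondition.right hf (Submodule.factor_surjective _) hfg hN hL

end SerreCondition

section Local

variable [IsLocalRing R]

omit [IsNoetherianRing R] in
lemma GradeGE.of_le_mDepth {M : Type u} [AddCommGroup M] [Module R M] {e : ℕ}
    (h : (e : ℕ∞) ≤ mDepth R M) : GradeGE (maximalIdeal R) e M := by
  obtain _ | e := e
  · exact .zero
  have hlt : (e : ℕ∞) < mDepth R M := h.trans_lt' (by exact_mod_cast e.lt_succ_self)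
  obtain ⟨-, ⟨rs, hrs, hreg, rfl⟩, hlt⟩ := lt_sSup_iff.1 hlt
  exact (GradeGE.of_isWeaklyRegular hrs hreg.toIsWeaklyRegular).mono (by exact_mod_cast hlt)

lemma IsCMLocalRing.serreCondition (h : IsCMLocalRing R) : SerreCondition R 0 ⊤ R := by
  rw [IsCMLocalRing, rDim, ← IsLocalRing.maximalIdeal_height_eq_ringKrullDim, WithBot.coe_inj] at h
  obtain ⟨e, he⟩ := ENat.ne_top_iff_exists.1 (Ideal.height_ne_top_of_isPrime (I := maximalIdeal R))
  exact .of_linearEquiv (Submodule.quotEquivOfEqBot (⊥ : Ideal R) rfl)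
    (.of_gradeGE_maximalIdeal (.of_le_mDepth (e := e) (he.trans h).le) (by simp [← he]))

lemma IsCMQuot.serreCondition {K Q : Ideal R} (hK : IsCMQuot R K) (hR : SerreCondition R 0 ⊤ R)
    (hQ : Q.IsPrime) (hKQ : K ≤ Q) {c : ℕ} (hc : Q.height ≤ c) : SerreCondition R c ⊤ (R ⧸ K) := by
  obtain ⟨e, he⟩ := ENat.ne_top_iff_exists.1 (Ideal.height_ne_top_of_isPrime (I := maximalIdeal R))
  have hdim : ringKrullDim (R ⧸ Q) ≤ qDepth R K :=
    (ringKrullDim_le_of_surjective (Ideal.Quotient.factor hKQ)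
      (Ideal.Quotient.factor_surjective hKQ)).trans hK.le
  have hheight : (maximalIdeal R).height ≤ c + qDepth R K := by
    exact_mod_cast (hR.height_maximalIdeal_le Q).trans
      (add_le_add (WithBot.coe_le_coe.2 hc) hdim)
  rw [← he] at hheight
  refine .of_gradeGE_maximalIdeal (m := e - c) (.of_le_mDepth ?_) ?_
  · exact_mod_cast tsub_le_iff_left.2 hheight
  · rw [← he]
    norm_cast
    lia

lemma SerreCondition.colon_of_isCMQuot {I L : Ideal R} {c : ℕ} (hL : SerreCondition R c ⊤ (R ⧸ L))
    (hR : SerreCondition R 0 ⊤ R)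
    (hCM : L.colon (I : Set R) ≠ ⊤ → ht I ≤ (c : WithBot ℕ∞) →
      IsCMQuot R (L.colon (I : Set R))) :
    SerreCondition R c ⊤ (R ⧸ L.colon (I : Set R)) := by
  have hL1 : SerreCondition R c 1 (R ⧸ L) := hL.mono le_rfl le_top
  rcases lt_or_ge (c : WithBot ℕ∞) (ht I) with hI | hI
  · rwa [hL1.colon_eq_self_of_lt_ht hI]
  by_cases hK : L.colon (I : Set R) = ⊤
  · have := Ideal.Quotient.subsingleton_iff.2 hK
    exact .of_subsingleton
  · obtain ⟨Q, hQ, hc, hsQ⟩ :=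
      hL1.exists_isPrime_of_notMem_colon (mt (Ideal.eq_top_iff_one _).2 hK)
    exact (hCM hK hI).serreCondition hR hQ (fun s hs => hsQ s (by rwa [mul_one])) hc

end Local

/-- The elements `a i`, `i ∈ V`, of `I` are in general position: each `U ⊆ V` has
`ht (residualIdeal I a U) ≥ #U`, and `ht (I + residualIdeal I a U) ≥ #U + 1` when `U ≠ V`. So
`residualIdeal I a U` is an `#U`-residual intersection of `I`, geometric when `U ≠ V`, as soon as
it is proper and `#U ≥ ht I`. -/
structure IsResidualFamily {ι : Type*} (I : Ideal R) (a : ι → R) (V : Finset ι) : Prop where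
  mem : ∀ i ∈ V, a i ∈ I
  card_le_height : ∀ U ⊆ V, ∀ Q : Ideal R, Q.IsPrime → residualIdeal I a U ≤ Q →
    (U.card : ℕ∞) ≤ Q.height
  card_succ_le_height : ∀ U ⊂ V, ∀ Q : Ideal R, Q.IsPrime → I ≤ Q → residualIdeal I a U ≤ Q →
    ((U.card + 1 : ℕ) : ℕ∞) ≤ Q.height

namespace IsResidualFamily

variable {ι : Type*} {I : Ideal R} {a : ι → R} {V U : Finset ι}

lemma exists_isSMulRegular (H : IsResidualFamily I a V) (hV : V.Nonempty)
    (hR : SerreCondition R 0 ⊤ R) : ∃ x ∈ residualIdeal I a V, IsSMulRegular R x :=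
  GradeGE.exists_isSMulRegular (n := 0) <| .of_forall_isPrime fun Q hQ hVQ =>
    hR Q hQ 1 le_top <| (H.card_le_height V subset_rfl Q hQ hVQ).trans' <| by
      exact_mod_cast hV.card_pos

lemma residualIdeal_empty (hR : SerreCondition R 0 ⊤ R) (hI : (0 : WithBot ℕ∞) < ht I) :
    residualIdeal I a ∅ = ⊥ := by
  rw [residualIdeal, spanOn_empty]
  refine SerreCondition.colon_eq_self_of_lt_ht (c := 0) ?_ hI
  exact .of_linearEquiv (Submodule.quotEquivOfEqBot (⊥ : Ideal R) rfl).symm (hR.mono le_rfl le_top)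

omit [IsNoetherianRing R] in
lemma isResidualIntersection (H : IsResidualFamily I a V) (hU : U ⊆ V)
    (hne : residualIdeal I a U ≠ ⊤) (hI : ht I ≤ (U.card : WithBot ℕ∞)) :
    IsResidualIntersection I (residualIdeal I a U) U.card := by
  classical
  refine ⟨hne, hI, natCast_le_ht_iff.2 (H.card_le_height U hU), spanOn a U, ?_, ?_, rfl⟩
  · rw [spanOn, Ideal.span_le]
    rintro _ ⟨i, hi, rfl⟩
    exact H.mem i (hU hi)
  · exact ⟨U.image a, Finset.card_image_le, by rw [spanOn, Finset.coe_image]⟩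

/- A prime `Q` of height at most `#U` containing `a j` and `residualIdeal I a U` does not contain
`I`, and so it contains `residualIdeal I a (insert j U)`, of height at least `#U + 1`. -/
lemma isSMulRegular_of_spanOn (H : IsResidualFamily I a V)
    {j : ι} (hj : j ∈ V) (hjU : j ∉ U) (hU : U ⊆ V)
    (hL : SerreCondition R U.card ⊤ (R ⧸ spanOn a U)) :
    IsSMulRegular (R ⧸ residualIdeal I a U) (a j) := by
  classical
  refine (isSMulRegular_quotient_iff_mem_of_smul_mem _ _).2 fun x hx => ?_
  by_contra hxU
  obtain ⟨Q, hQ, hc, hsQ⟩ := (hL.mono le_rfl le_top).exists_isPrime_of_notMem_colon hxU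
  have hUQ : residualIdeal I a U ≤ Q := fun s hs => hsQ s (Ideal.mul_mem_right _ _ hs)
  have hlt : ((U.card + 1 : ℕ) : ℕ∞) ≤ Q.height := by
    by_cases hIQ : I ≤ Q
    · exact H.card_succ_le_height U (ssubset_of_subset_not_subset hU fun h => hjU (h hj)) Q hQ
        hIQ hUQ
    · obtain ⟨w, hw, hwQ⟩ := Set.not_subset.1 hIQ
      have hspan : spanOn a (insert j U) ≤ Q := by
        rw [spanOn_insert]
        exact sup_le ((le_colon_ideal _ _).trans hUQ)
          ((Ideal.span_singleton_le_iff_mem _).2 (hsQ _ hx))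
      rw [← Finset.card_insert_of_notMem hjU]
      exact H.card_le_height _ (Finset.insert_subset hj hU) Q hQ fun s hs =>
        (hQ.mem_or_mem (hspan (mem_colon_ideal.1 hs w hw))).resolve_right hwQ
  have hle := hlt.trans hc
  norm_cast at hle
  lia

variable [IsLocalRing R]

lemma serreCondition_residualIdeal_of_spanOn (H : IsResidualFamily I a V)
    (hAN : ANminus I (V.card - 1)) (hR : SerreCondition R 0 ⊤ R) (hU : U ⊂ V)
    (hL : SerreCondition R U.card ⊤ (R ⧸ spanOn a U)) :
    SerreCondition R U.card ⊤ (R ⧸ residualIdeal I a U) := by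
  refine hL.colon_of_isCMQuot hR fun hne hI => hAN _ (Nat.le_pred_of_lt (Finset.card_lt_card hU)) _
    ⟨H.isResidualIntersection hU.subset hne hI, ?_⟩
  exact_mod_cast natCast_le_ht_iff.2 fun Q hQ h => H.card_succ_le_height U hU Q hQ
    (le_sup_left.trans h) (le_sup_right.trans h)

lemma serreCondition_spanOn (H : IsResidualFamily I a V) (hAN : ANminus I (V.card - 1))
    (hR : SerreCondition R 0 ⊤ R) (hU : U ⊆ V) : SerreCondition R U.card ⊤ (R ⧸ spanOn a U) := by
  classical
  induction U using Finset.induction_on with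
  | empty =>
    rw [spanOn_empty]
    exact .of_linearEquiv (Submodule.quotEquivOfEqBot (⊥ : Ideal R) rfl).symm hR
  | insert j U hj ih =>
    have hUV : U ⊂ V := Finset.ssubset_of_ssubset_of_subset (Finset.ssubset_insert hj) hU
    have hL := ih hUV.subset
    have hmem (x : R) : a j * x ∈ spanOn a U ↔ x ∈ residualIdeal I a U := by
      refine ⟨fun h => ?_, fun h => ?_⟩
      · exact (isSMulRegular_quotient_iff_mem_of_smul_mem _ _).1
          (H.isSMulRegular_of_spanOn (hU (Finset.mem_insert_self j U)) hj hUV.subset hL) x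
          (le_colon_ideal I _ h)
      · rw [mul_comm]
        exact mem_colon_ideal.1 h _ (H.mem j (hU (Finset.mem_insert_self j U)))
    rw [Finset.card_insert_of_notMem hj, spanOn_insert]
    exact .quotient_sup_span_singleton hmem
      (H.serreCondition_residualIdeal_of_spanOn hAN hR hUV hL) (hL.mono (Nat.le_succ _) le_rfl)

lemma serreCondition_residualIdeal (H : IsResidualFamily I a V) (hAN : ANminus I (V.card - 1))
    (hR : SerreCondition R 0 ⊤ R) (hU : U ⊂ V) :
    SerreCondition R U.card ⊤ (R ⧸ residualIdeal I a U) :=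
  H.serreCondition_residualIdeal_of_spanOn hAN hR hU (H.serreCondition_spanOn hAN hR hU.subset)

lemma isSMulRegular (H : IsResidualFamily I a V) (hAN : ANminus I (V.card - 1))
    (hR : SerreCondition R 0 ⊤ R) {j : ι} (hj : j ∈ V) (hjU : j ∉ U) (hU : U ⊆ V) :
    IsSMulRegular (R ⧸ residualIdeal I a U) (a j) :=
  H.isSMulRegular_of_spanOn hj hjU hU (H.serreCondition_spanOn hAN hR hU)

lemma serreCondition_one_residualIdeal (H : IsResidualFamily I a V) (hAN : ANminus I (V.card - 1))
    (hR : SerreCondition R 0 ⊤ R) : SerreCondition R V.card 1 (R ⧸ residualIdeal I a V) :=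
  ((H.serreCondition_spanOn hAN hR subset_rfl).mono le_rfl le_top).colon

lemma serreCondition_top_residualIdeal (H : IsResidualFamily I a V)
    (hANminus : ANminus I (V.card - 1)) (hAN : ANcond I V.card) (hR : SerreCondition R 0 ⊤ R) :
    SerreCondition R V.card ⊤ (R ⧸ residualIdeal I a V) :=
  (H.serreCondition_spanOn hANminus hR subset_rfl).colon_of_isCMQuot hR fun hne hI =>
    hAN _ le_rfl _ (H.isResidualIntersection subset_rfl hne hI)

lemma inf_residualIdeal_le (H : IsResidualFamily I a V) (hAN : ANminus I (V.card - 1))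
    (hR : SerreCondition R 0 ⊤ R) (hI : (0 : WithBot ℕ∞) < ht I) (hU : U ⊂ V) :
    I ⊓ residualIdeal I a U ≤ spanOn a U := by
  classical
  induction U using Finset.induction_on with
  | empty =>
    rw [residualIdeal_empty hR hI]
    exact inf_le_right.trans bot_le
  | insert j U hj ih =>
    have hUV : U ⊂ V := (Finset.ssubset_insert hj).trans hU
    have hN := H.serreCondition_residualIdeal hAN hR hUV
    have hsup : SerreCondition R (U.card + 1) 1
        (R ⧸ (residualIdeal I a U ⊔ Ideal.span {a j})) := by
      refine (SerreCondition.quotient_sup_span_singleton (fun x => ?_) hN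
        (hN.mono (Nat.le_succ _) le_rfl)).mono le_rfl le_top
      exact ⟨(isSMulRegular_quotient_iff_mem_of_smul_mem _ _).1
        (H.isSMulRegular hAN hR (hU.subset (Finset.mem_insert_self j U)) hj hUV.subset) x,
        fun h => Ideal.mul_mem_left _ _ h⟩
    have hle : spanOn a (insert j U) ≤ residualIdeal I a U ⊔ Ideal.span {a j} := by
      rw [spanOn_insert]
      exact sup_le_sup_right (le_colon_ideal I _) _
    rintro x ⟨hxI, hx⟩
    have hxsup : x ∈ residualIdeal I a U ⊔ Ideal.span {a j} := by
      by_contra hxn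
      obtain ⟨Q, hQ, hc, hsQ⟩ := hsup.exists_isPrime_of_notMem hxn
      have hc' := (H.card_succ_le_height _ hU Q hQ
        (fun y hy => hsQ y (hle (by rw [mul_comm]; exact mem_colon_ideal.1 hx y hy)))
        (fun y hy => hsQ y (hle (mem_colon_ideal.1 hy x hxI)))).trans hc
      rw [Finset.card_insert_of_notMem hj] at hc'
      norm_cast at hc'
      lia
    obtain ⟨n, hn, w, hw, rfl⟩ := Submodule.mem_sup.1 hxsup
    have hwI : w ∈ I := (Ideal.span_singleton_le_iff_mem _).2
      (H.mem j (hU.subset (Finset.mem_insert_self j U))) hw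
    rw [spanOn_insert]
    exact Submodule.add_mem_sup (ih hUV ⟨(Submodule.add_mem_iff_left _ hwI).1 hxI, hn⟩) hw

end IsResidualFamily

end ResidualIntersections

section GeneralElements

variable {R : Type u} [CommRing R] [IsLocalRing R]

lemma exists_isUnit_forall_add_mul_notMem [Infinite (ResidueField R)] {NN : Set (Ideal R)}
    (hfin : NN.Finite) (c : R) {y : R} (hy : ∀ N ∈ NN, y ∉ N) :
    ∃ r : R, IsUnit r ∧ ∀ N ∈ NN, y + r * c ∉ N := by
  let bad (N : Ideal R) : Set (ResidueField R) := residue R '' {r | y + r * c ∈ N}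
  have hbad : (insert 0 (⋃ N ∈ NN, bad N)).Finite := by
    refine (hfin.biUnion fun N hN => Set.Subsingleton.finite ?_).insert 0
    rintro _ ⟨r, hr, rfl⟩ _ ⟨r', hr', rfl⟩
    by_contra hne
    have hu : IsUnit (r - r') := by
      rwa [← residue_ne_zero_iff_isUnit, map_sub, sub_ne_zero]
    have hc : (r - r') * c ∈ N := by
      rw [show (r - r') * c = (y + r * c) - (y + r' * c) by ring]
      exact N.sub_mem hr hr'
    exact hy N hN ((N.add_mem_iff_left
      (N.mul_mem_left r ((Ideal.unit_mul_mem_iff_mem N hu).1 hc))).1 hr)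
  obtain ⟨z, hz⟩ := hbad.infinite_compl.nonempty
  obtain ⟨r, rfl⟩ := residue_surjective z
  exact ⟨r, (residue_ne_zero_iff_isUnit r).1 fun h => hz (Or.inl h),
    fun N hN hm => hz (Or.inr (Set.mem_biUnion hN ⟨r, hm, rfl⟩))⟩

lemma exists_mem_forall_notMem [Infinite (ResidueField R)] {I : Ideal R} {NN : Set (Ideal R)}
    (hfin : NN.Finite) (h : ∀ N ∈ NN, ¬ I ≤ N) : ∃ y ∈ I, ∀ N ∈ NN, y ∉ N := by
  induction NN, hfin using Set.Finite.induction_on with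
  | empty => exact ⟨0, I.zero_mem, by simp⟩
  | @insert N S _ hS ih =>
    simp only [Set.forall_mem_insert] at h ⊢
    obtain ⟨y, hy, hyS⟩ := ih h.2
    by_cases hyN : y ∈ N
    · obtain ⟨c, hc, hcN⟩ := Set.not_subset.1 h.1
      obtain ⟨r, hr, hrS⟩ := exists_isUnit_forall_add_mul_notMem hS c hyS
      exact ⟨y + r * c, I.add_mem hy (I.mul_mem_left _ hc),
        fun hm => hcN ((Ideal.unit_mul_mem_iff_mem N hr).1 ((N.add_mem_iff_right hyN).1 hm)), hrS⟩
    · exact ⟨y, hy, hyN, hyS⟩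

omit [IsLocalRing R] in
/-- `p` holds for general elements of `I`: for all elements of `I` outside finitely many ideals,
none of which contains `I`. -/
def HoldsGenerically (I : Ideal R) (p : R → Prop) : Prop :=
  ∃ NN : Set (Ideal R), NN.Finite ∧ (∀ N ∈ NN, ¬ I ≤ N) ∧ ∀ a ∈ I, (∀ N ∈ NN, a ∉ N) → p a

namespace HoldsGenerically

variable {I : Ideal R} {p q : R → Prop}

lemma exists_mem [Infinite (ResidueField R)] (h : HoldsGenerically I p) : ∃ a ∈ I, p a := by
  obtain ⟨NN, hfin, hI, hp⟩ := h
  obtain ⟨a, ha, haN⟩ := exists_mem_forall_notMem hfin hI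
  exact ⟨a, ha, hp a ha haN⟩

omit [IsLocalRing R]

lemma of_notMem {N : Ideal R} (h : ¬ I ≤ N) (hp : ∀ a ∈ I, a ∉ N → p a) : HoldsGenerically I p :=
  ⟨{N}, Set.finite_singleton N, by simpa using h, by simpa using hp⟩

lemma mono (h : HoldsGenerically I p) (hpq : ∀ a ∈ I, p a → q a) : HoldsGenerically I q := by
  obtain ⟨NN, hfin, hI, hp⟩ := h
  exact ⟨NN, hfin, hI, fun a ha haN => hpq a ha (hp a ha haN)⟩

lemma ball {α : Type*} {s : Set α} (hs : s.Finite) {p : α → R → Prop}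
    (h : ∀ x ∈ s, HoldsGenerically I (p x)) : HoldsGenerically I fun a => ∀ x ∈ s, p x a := by
  choose! NN hfin hI hp using h
  refine ⟨⋃ x ∈ s, NN x, hs.biUnion hfin, fun N hN => ?_, fun a ha haN x hx =>
    hp x hx a ha fun N hN => haN N (Set.mem_biUnion hx hN)⟩
  obtain ⟨x, hx, hN⟩ := Set.mem_iUnion₂.1 hN
  exact hI x hx N hN

lemma and (hp : HoldsGenerically I p) (hq : HoldsGenerically I q) :
    HoldsGenerically I fun a => p a ∧ q a := by
  obtain ⟨NN, hfin, hI, hp⟩ := hp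
  obtain ⟨NN', hfin', hI', hq⟩ := hq
  exact ⟨NN ∪ NN', hfin.union hfin', fun N => Or.rec (hI N) (hI' N), fun a ha haN =>
    ⟨hp a ha fun N hN => haN N (Or.inl hN), hq a ha fun N hN => haN N (Or.inr hN)⟩⟩

end HoldsGenerically

lemma exists_forall_spanOn [Infinite (ResidueField R)] {I : Ideal R} {P : ℕ → Ideal R → Prop}
    (hzero : P 0 ⊥)
    (hsucc : ∀ i b, P i b → HoldsGenerically I fun a => P (i + 1) (b ⊔ Ideal.span {a})) (m : ℕ) :
    ∃ a : ℕ → R, (∀ i, a i ∈ I) ∧ ∀ U ⊆ Finset.range m, P U.card (spanOn a U) := by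
  induction m with
  | zero =>
    refine ⟨0, fun _ => I.zero_mem, fun U hU => ?_⟩
    obtain rfl := Finset.subset_empty.1 hU
    rwa [spanOn_empty]
  | succ m ih =>
    obtain ⟨a, haI, ha⟩ := ih
    obtain ⟨x, hxI, hx⟩ := (HoldsGenerically.ball (Finset.range m).powerset.finite_toSet
      fun U hU => hsucc _ _ (ha U (Finset.mem_powerset.1 hU))).exists_mem
    have hupdate (U) (hU : U ⊆ Finset.range m) :
        spanOn (Function.update a m x) U = spanOn a U := by
      rw [spanOn, spanOn]
      congr 1
      refine Set.image_congr fun i hi => Function.update_of_ne ?_ _ _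
      exact (Finset.mem_range.1 (hU hi)).ne
    refine ⟨Function.update a m x, fun i => ?_, fun U hU => ?_⟩
    · obtain rfl | hi := eq_or_ne i m
      · rwa [Function.update_self]
      · rw [Function.update_of_ne hi]
        exact haI i
    · rw [Finset.range_add_one, Finset.subset_insert_iff] at hU
      by_cases hm : m ∈ U
      · rw [← Finset.insert_erase hm, Finset.card_insert_of_notMem (Finset.notMem_erase m U),
          spanOn_insert, hupdate _ hU, Function.update_self]
        exact hx _ (Finset.mem_powerset.2 hU)
      · rw [Finset.erase_eq_of_notMem hm] at hU
        rw [hupdate U hU]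
        exact ha U hU

end GeneralElements

section GeneralPosition

variable {R : Type u} [CommRing R]

/-- The ideal generated by all `(b + (X)) : I` with `X` a set of at most `n` elements of `I`. Its
zero locus consists of the primes `Q` for which `(I/b)_Q` needs more than `n` generators. -/
def generatorIdeal (I b : Ideal R) (n : ℕ) : Ideal R :=
  ⨆ (X : Finset R) (_ : (X : Set R) ⊆ I ∧ X.card ≤ n), (b ⊔ Ideal.span (X : Set R)).colon I

variable {I b Q : Ideal R} {n : ℕ}

lemma generatorIdeal_le_iff {J : Ideal R} : generatorIdeal I b n ≤ J ↔ ∀ X : Finset R,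
    (X : Set R) ⊆ I → X.card ≤ n → (b ⊔ Ideal.span (X : Set R)).colon (I : Set R) ≤ J := by
  simp only [generatorIdeal, iSup_le_iff, and_imp]

lemma generatorIdeal_mono {b' : Ideal R} (h : b ≤ b') :
    generatorIdeal I b n ≤ generatorIdeal I b' n :=
  iSup₂_mono fun _ _ => Submodule.colon_mono (sup_le_sup_right h _) subset_rfl

lemma colon_le_generatorIdeal : b.colon (I : Set R) ≤ generatorIdeal I b n := by
  simpa using (generatorIdeal_le_iff (J := generatorIdeal I b n)).1 le_rfl ∅ (by simp) (by simp)

lemma generatorIdeal_zero : generatorIdeal I b 0 = b.colon (I : Set R) := by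
  refine le_antisymm (generatorIdeal_le_iff.2 fun X _ hX => ?_) colon_le_generatorIdeal
  rw [Finset.card_eq_zero.1 (Nat.le_zero.1 hX)]
  simp

/- An exchange argument: if `(I/b)_Q` is generated by `X`, then an element `a` of `I` outside
`b_Q + Q I_Q` can replace some `x ∈ X`. -/
lemma generatorIdeal_succ_le [Q.IsPrime] {a : R} (haI : a ∈ I)
    (ha : ∀ s, s * a ∈ b ⊔ Q * I → s ∈ Q) (h : generatorIdeal I (b ⊔ Ideal.span {a}) n ≤ Q) :
    generatorIdeal I b (n + 1) ≤ Q := by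
  classical
  refine generatorIdeal_le_iff.2 fun X hXI hX s hs => ?_
  by_contra hsQ
  rw [mem_colon_ideal] at hs
  obtain ⟨y, hy, z, hz, hyz⟩ := Submodule.mem_sup.1 (hs a haI)
  obtain ⟨f, -, rfl⟩ := Submodule.mem_span_finset.1 hz
  obtain ⟨x, hx, hfx⟩ : ∃ x ∈ X, f x ∉ Q := by
    by_contra! hf
    refine hsQ (ha s (hyz ▸ add_mem (Ideal.mem_sup_left hy) (Ideal.mem_sup_right ?_)))
    exact sum_mem fun x hx => Ideal.mul_mem_mul (hf x hx) (hXI hx)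
  set L := b ⊔ Ideal.span {a} ⊔ Ideal.span (X.erase x : Set R) with hL
  have hbL : b ≤ L := le_sup_left.trans le_sup_left
  have hXL (v) (hv : v ∈ X.erase x) : v ∈ L := Ideal.mem_sup_right (Ideal.subset_span hv)
  have hfxL : f x * x ∈ L := by
    have haL : a ∈ L := Ideal.mem_sup_left (Ideal.mem_sup_right (Ideal.mem_span_singleton_self a))
    rw [← Finset.add_sum_erase _ _ hx, smul_eq_mul] at hyz
    rw [show f x * x = s * a - y - ∑ v ∈ X.erase x, f v • v by linear_combination hyz]
    exact sub_mem (sub_mem (L.mul_mem_left _ haL) (hbL hy))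
      (sum_mem fun v hv => L.mul_mem_left _ (hXL v hv))
  have hle : b ⊔ Ideal.span (X : Set R) ≤ L.colon {f x} := by
    have hmem {v} : v ∈ L.colon {f x} ↔ f x * v ∈ L := by
      rw [Submodule.mem_colon_singleton, smul_eq_mul, mul_comm]
    refine sup_le (fun v hv => hmem.2 (L.mul_mem_left _ (hbL hv)))
      (Ideal.span_le.2 fun v hv => hmem.2 ?_)
    · obtain rfl | hne := eq_or_ne v x
      · exact hfxL
      · exact L.mul_mem_left _ (hXL v (Finset.mem_erase.2 ⟨hne, hv⟩))
  have hfs : f x * s ∈ L.colon (I : Set R) := mem_colon_ideal.2 fun w hw => by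
    rw [mul_assoc, mul_comm]
    exact Submodule.mem_colon_singleton.1 (hle (hs w hw))
  refine (‹Q.IsPrime›.mem_or_mem (generatorIdeal_le_iff.1 h _ (fun v hv => ?_) ?_ hfs)).elim hfx hsQ
  · exact hXI (Finset.mem_of_mem_erase hv)
  · rw [Finset.card_erase_of_mem hx]
    lia

variable [IsNoetherianRing R]

lemma exists_notMem_of_colon_le [hQ : Q.IsPrime] (h : b.colon (I : Set R) ≤ Q) :
    ∃ y ∈ I, ∀ s, s * y ∈ b ⊔ Q * I → s ∈ Q := by
  let M := Submodule.map b.mkQ I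
  have hsupp : (⟨Q, hQ⟩ : PrimeSpectrum R) ∈ Module.support R (M ⧸ (Q • ⊤ : Submodule R M)) := by
    rw [Module.support_quotient]
    refine ⟨Module.mem_support_iff_of_finite.2 ?_, fun _ hx => hx⟩
    exact Submodule.annihilator_map_mkQ_eq_colon.trans_le h
  obtain ⟨m, hm⟩ := Module.mem_support_iff_exists_annihilator.1 hsupp
  obtain ⟨⟨_, y, hy, rfl⟩, rfl⟩ := Submodule.Quotient.mk_surjective _ m
  refine ⟨y, hy, fun s hs => hm ?_⟩
  obtain ⟨u, hu, v, hv, huv⟩ := Submodule.mem_sup.1 hs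
  rw [Submodule.mem_annihilator_span_singleton, ← Submodule.Quotient.mk_smul,
    Submodule.Quotient.mk_eq_zero, Submodule.mem_smul_top_iff, ← Submodule.map_smul'']
  refine ⟨v, hv, (Submodule.Quotient.eq b).2 ?_⟩
  change v - s * y ∈ b
  rwa [← huv, sub_add_cancel_right, neg_mem_iff]

lemma holdsGenerically_of_colon_le [Q.IsPrime] (h : b.colon (I : Set R) ≤ Q) :
    HoldsGenerically I fun a => ∀ s, s * a ∈ b ⊔ Q * I → s ∈ Q := by
  let f := algebraMap R (Localization.AtPrime Q)
  have hf {x} : x ∈ ((b ⊔ Q * I).map f).comap f ↔ ∃ s ∈ Q.primeCompl, s * x ∈ b ⊔ Q * I :=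
    IsLocalization.algebraMap_mem_map_algebraMap_iff Q.primeCompl _ _ _
  obtain ⟨y, hy, hyQ⟩ := exists_notMem_of_colon_le h
  refine .of_notMem (N := ((b ⊔ Q * I).map f).comap f) (fun hI => ?_) fun a _ ha s hs => ?_
  · obtain ⟨s, hs, hsy⟩ := hf.1 (hI hy)
    exact hs (hyQ s hsy)
  · by_contra hsQ
    exact ha (hf.2 ⟨s, hsQ, hs⟩)

omit [IsNoetherianRing R] in
lemma muE_le_natCast_iff {M : Type*} [AddCommGroup M] [Module R M] {N : Submodule R M} :
    muE N ≤ (n : ℕ∞) ↔ ∃ s : Finset M, s.card ≤ n ∧ Submodule.span R (s : Set M) = N := by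
  refine ⟨fun h => ?_, fun ⟨s, hs, hN⟩ =>
    (show muE N ≤ s.card from sInf_le ⟨s, rfl, hN⟩).trans (by exact_mod_cast hs)⟩
  obtain ⟨_, ⟨s, rfl, hN⟩, hs⟩ := sInf_lt_iff.1 (h.trans_lt ENat.natCast_lt_succ)
  exact ⟨s, Nat.lt_succ_iff.1 (by exact_mod_cast hs), hN⟩

omit [IsNoetherianRing R] in
lemma exists_map_span_eq_of_muE_le [Q.IsPrime]
    (h : muE (I.map (algebraMap R (Localization.AtPrime Q))) ≤ (n : ℕ∞)) :
    ∃ X : Finset R, (X : Set R) ⊆ I ∧ X.card ≤ n ∧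
      I.map (algebraMap R (Localization.AtPrime Q)) ≤
        (Ideal.span (X : Set R)).map (algebraMap R (Localization.AtPrime Q)) := by
  classical
  obtain ⟨s, hsn, hs⟩ := muE_le_natCast_iff.1 h
  have hlift : ∀ z ∈ s, ∃ x ∈ I, ∃ u : Localization.AtPrime Q, IsUnit u ∧
      u * z = algebraMap R _ x := by
    intro z hz
    have hzI : z ∈ I.map (algebraMap R (Localization.AtPrime Q)) := hs ▸ Submodule.subset_span hz
    obtain ⟨⟨x, t⟩, hxt⟩ := (IsLocalization.mem_map_algebraMap_iff Q.primeCompl _).1 hzI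
    exact ⟨x, x.2, algebraMap R _ t, IsLocalization.map_units _ t, by rw [mul_comm, hxt]⟩
  choose! g hgI u hu hgu using hlift
  refine ⟨s.image g, ?_, Finset.card_image_le.trans hsn, ?_⟩
  · rw [Finset.coe_image]
    exact Set.image_subset_iff.2 hgI
  · rw [← hs, Ideal.span_le]
    intro z hz
    rw [SetLike.mem_coe, ← Ideal.unit_mul_mem_iff_mem _ (hu z hz), hgu z hz]
    exact Ideal.mem_map_of_mem _ (Ideal.subset_span (Finset.mem_image_of_mem g hz))

lemma not_generatorIdeal_bot_le_of_muE_le [Q.IsPrime]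
    (h : muE (I.map (algebraMap R (Localization.AtPrime Q))) ≤ (n : ℕ∞)) :
    ¬ generatorIdeal I ⊥ n ≤ Q := by
  intro hle
  obtain ⟨X, hXI, hXn, hX⟩ := exists_map_span_eq_of_muE_le h
  have hcolon := generatorIdeal_le_iff.1 hle X hXI hXn
  rw [bot_sup_eq] at hcolon
  obtain ⟨y, hy, hyQ⟩ := exists_notMem_of_colon_le hcolon
  obtain ⟨s, hs, hsy⟩ := (IsLocalization.algebraMap_mem_map_algebraMap_iff Q.primeCompl _ _ _).1
    (hX (Ideal.mem_map_of_mem _ hy))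
  exact hs (hyQ s (Ideal.mem_sup_left hsy))

variable {l i : ℕ}

/-- The ideal `b ⊆ I` is in general position with respect to `I`, as if it were generated by `i`
general elements of an ideal satisfying `G_l`: for primes `Q` of height less than `l`, both
containing `b : I` and needing many generators for `(I/b)_Q` force `Q` to be large. -/
structure InGeneralPosition (I : Ideal R) (l i : ℕ) (b : Ideal R) : Prop where
  le : b ≤ I
  le_height : ∀ Q : Ideal R, Q.IsPrime → Q.height < l → b.colon (I : Set R) ≤ Q →
    (i : ℕ∞) ≤ Q.height
  add_le_height : ∀ n, ∀ Q : Ideal R, Q.IsPrime → Q.height < l → I ≤ Q → generatorIdeal I b n ≤ Q →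
    ((i + n + 1 : ℕ) : ℕ∞) ≤ Q.height

namespace InGeneralPosition

lemma bot (hG : Gcond I l) : InGeneralPosition I l 0 ⊥ where
  le := bot_le
  le_height _ _ _ _ := zero_le
  add_le_height n Q hQ hQl hIQ hle := by
    have hdim : rDim (Localization.AtPrime Q) < (l : WithBot ℕ∞) := by
      rw [rDim_localization_atPrime]
      exact WithBot.coe_lt_coe.2 hQl
    have hmu := hG ⟨Q, hQ⟩ hIQ hdim
    rw [rDim_localization_atPrime, WithBot.coe_le_coe] at hmu
    by_contra! hlt
    rw [zero_add, Nat.cast_add_one, ENat.lt_natCast_add_one_iff] at hlt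
    exact not_generatorIdeal_bot_le_of_muE_le (hmu.trans hlt) hle

omit [IsNoetherianRing R] in
lemma add_le_height_sup_span (H : InGeneralPosition I l i b) {a : R} (ha : a ∈ I)
    (hav : ∀ n ∈ Finset.range l, ∀ Q ∈ (generatorIdeal I b n ⊔ I).minimalPrimes,
      ∀ s, s * a ∈ b ⊔ Q * I → s ∈ Q) (n : ℕ) (Q : Ideal R) (hQ : Q.IsPrime) (hQl : Q.height < l)
    (hIQ : I ≤ Q) (hle : generatorIdeal I (b ⊔ Ideal.span {a}) n ≤ Q) :
    ((i + 1 + n + 1 : ℕ) : ℕ∞) ≤ Q.height := by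
  have hle' := (generatorIdeal_mono le_sup_left).trans hle
  obtain ⟨P, hP, hPQ⟩ := Ideal.exists_minimalPrimes_le (sup_le hle' hIQ)
  obtain ⟨hPle, hIP⟩ := sup_le_iff.1 hP.1.2
  have := hP.1.1
  have hn : n < l := by
    have := (H.add_le_height n Q hQ hQl hIQ hle').trans_lt hQl
    norm_cast at this
    lia
  obtain hlt | rfl := hPQ.lt_or_eq
  · have hbound := natCast_succ_le_height_of_lt hlt (H.add_le_height n P this
      ((Ideal.height_mono hPQ).trans_lt hQl) hIP hPle)
    rwa [show i + 1 + n + 1 = i + n + 1 + 1 by ring]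
  · rw [show i + 1 + n + 1 = i + (n + 1) + 1 by ring]
    exact H.add_le_height _ P hQ hQl hIP
      (generatorIdeal_succ_le ha (hav n (Finset.mem_range.2 hn) P hP) hle)

omit [IsNoetherianRing R] in
lemma le_height_sup_span (H : InGeneralPosition I l i b) {a : R}
    (hav : ∀ Q ∈ {Q ∈ (b.colon (I : Set R)).minimalPrimes | ¬ I ≤ Q}, a ∉ Q)
    (Q : Ideal R) [Q.IsPrime] (hQl : Q.height < l) (hIQ : ¬ I ≤ Q)
    (hle : (b ⊔ Ideal.span {a}).colon (I : Set R) ≤ Q) : ((i + 1 : ℕ) : ℕ∞) ≤ Q.height := by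
  have haQ : a ∈ Q :=
    hle (le_colon_ideal I _ (Ideal.mem_sup_right (Ideal.mem_span_singleton_self a)))
  obtain ⟨P, hP, hPQ⟩ := Ideal.exists_minimalPrimes_le
    ((Submodule.colon_mono le_sup_left subset_rfl).trans hle)
  have haP : a ∉ P := hav P ⟨hP, fun h => hIQ (h.trans hPQ)⟩
  have := hP.1.1
  exact natCast_succ_le_height_of_lt (hPQ.lt_of_ne fun h => haP (h ▸ haQ))
    (H.le_height P this ((Ideal.height_mono hPQ).trans_lt hQl) hP.1.2)

lemma holdsGenerically_sup_span (H : InGeneralPosition I l i b) :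
    HoldsGenerically I fun a => InGeneralPosition I l (i + 1) (b ⊔ Ideal.span {a}) := by
  have hA : HoldsGenerically I fun a => ∀ n ∈ Finset.range l,
      ∀ Q ∈ (generatorIdeal I b n ⊔ I).minimalPrimes, ∀ s, s * a ∈ b ⊔ Q * I → s ∈ Q := by
    refine .ball (Finset.range l).finite_toSet fun n _ =>
      .ball (Ideal.finite_minimalPrimes_of_isNoetherianRing R _) fun Q hQ => ?_
    have := hQ.1.1
    exact holdsGenerically_of_colon_le (colon_le_generatorIdeal.trans (le_sup_left.trans hQ.1.2))
  have hB : HoldsGenerically I fun a =>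
      ∀ Q ∈ {Q ∈ (b.colon (I : Set R)).minimalPrimes | ¬ I ≤ Q}, a ∉ Q :=
    .ball ((Ideal.finite_minimalPrimes_of_isNoetherianRing R _).subset (Set.sep_subset _ _))
      fun Q hQ => .of_notMem hQ.2 fun a _ ha => ha
  refine (hA.and hB).mono fun a ha ⟨haA, haB⟩ => ?_
  have hheight := H.add_le_height_sup_span ha haA
  refine ⟨sup_le H.le ((Ideal.span_singleton_le_iff_mem _).2 ha), fun Q hQ hQl hle => ?_, hheight⟩
  by_cases hIQ : I ≤ Q
  · refine le_trans ?_ (hheight 0 Q hQ hQl hIQ (generatorIdeal_zero.trans_le hle))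
    exact_mod_cast Nat.le_succ _
  · exact H.le_height_sup_span haB Q hQl hIQ hle

end InGeneralPosition

end GeneralPosition

section TraceIdeals

variable {R L : Type u} [CommRing R] [CommRing L] [Algebra R L] {I : Ideal R} (τ : I →ₗ[R] L)

/-- The preimage in `I` of an ideal of `L` under `τ`, as an ideal of `R`. -/
def traceIdeal (q : Ideal L) : Ideal R :=
  Submodule.map I.subtype (Submodule.comap τ (q.restrictScalars R))

/-- The ideal of `L` generated by the image of `b ∩ I` under `τ`. -/
def imageIdeal (b : Ideal R) : Ideal L :=
  Ideal.span (τ '' {x | (x : R) ∈ b})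

variable {τ} {b : Ideal R} {q q' : Ideal L}

lemma coe_mem_traceIdeal {x : I} : (x : R) ∈ traceIdeal τ q ↔ τ x ∈ q := by
  simp [traceIdeal]

lemma traceIdeal_mono (h : q ≤ q') : traceIdeal τ q ≤ traceIdeal τ q' :=
  Submodule.map_mono (Submodule.comap_mono h)

lemma imageIdeal_le_iff (hb : b ≤ I) : imageIdeal τ b ≤ q ↔ b ≤ traceIdeal τ q := by
  rw [imageIdeal, Ideal.span_le, Set.image_subset_iff]
  exact ⟨fun h x hx => coe_mem_traceIdeal.2 (h (a := ⟨x, hb hx⟩) hx),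
    fun h x hx => coe_mem_traceIdeal.1 (h hx)⟩

variable (τ) in
/-- The primes of `L` that contain `τ(b)` but not all of `τ(I)` have height at least `i`. -/
def TraceHeightGE (i : ℕ) (b : Ideal R) : Prop :=
  ∀ q : Ideal L, q.IsPrime → b ≤ traceIdeal τ q → ¬ I ≤ traceIdeal τ q → (i : ℕ∞) ≤ q.height

variable (τ b) in
/-- The ideals of `R` that an element `a` of `I` has to avoid so that the passage from `b` to
`b + (a)` increases the height of the primes in `TraceHeightGE`. -/
def badTraces : Set (Ideal R) :=
  traceIdeal τ '' {q | q ∈ (imageIdeal τ b).minimalPrimes ∧ ¬ I ≤ traceIdeal τ q}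

lemma finite_badTraces [IsNoetherianRing L] : (badTraces τ b).Finite :=
  ((Ideal.finite_minimalPrimes_of_isNoetherianRing L _).subset fun _ hq => hq.1).image _

namespace TraceHeightGE

variable {i : ℕ} {a : R}

lemma zero : TraceHeightGE τ 0 b :=
  fun _ _ _ _ => by simp

lemma sup_span (H : TraceHeightGE τ i b) (hb : b ≤ I)
    (ha : ∀ N ∈ badTraces τ b, a ∉ N) : TraceHeightGE τ (i + 1) (b ⊔ Ideal.span {a}) := by
  intro q hq hbq hIq
  obtain ⟨hbq, haq⟩ := sup_le_iff.1 hbq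
  obtain ⟨q₀, hq₀, hle⟩ := Ideal.exists_minimalPrimes_le ((imageIdeal_le_iff hb).2 hbq)
  have hI : ¬ I ≤ traceIdeal τ q₀ := fun h => hIq (h.trans (traceIdeal_mono hle))
  have hlt : q₀ < q := hle.lt_of_ne <| by
    rintro rfl
    exact ha _ ⟨q₀, ⟨hq₀, hI⟩, rfl⟩ ((Ideal.span_singleton_le_iff_mem _).1 haq)
  have := hq₀.1.1
  exact natCast_succ_le_height_of_lt hlt
    (H q₀ this ((imageIdeal_le_iff hb).1 hq₀.1.2) hI)

lemma holdsGenerically_sup_span [IsNoetherianRing L] (H : TraceHeightGE τ i b) (hb : b ≤ I) :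
    HoldsGenerically I fun a => TraceHeightGE τ (i + 1) (b ⊔ Ideal.span {a}) :=
  ⟨badTraces τ b, finite_badTraces, by rintro _ ⟨q, hq, rfl⟩; exact hq.2,
    fun _ _ => H.sup_span hb⟩

lemma le_traceIdeal [IsLocalRing L] (H : TraceHeightGE τ i b) (hdim : ringKrullDim L ≤ i)
    (hI : I ≤ traceIdeal τ (maximalIdeal L)) [hq : q.IsPrime] (hbq : b ≤ traceIdeal τ q) :
    I ≤ traceIdeal τ q := by
  by_contra hIq
  have hlt : q < maximalIdeal L := (le_maximalIdeal hq.ne_top).lt_of_ne <| by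
    rintro rfl
    exact hIq hI
  have := natCast_succ_le_height_of_lt hlt (H q hq hbq hIq)
  rw [← maximalIdeal_height_eq_ringKrullDim] at hdim
  have := this.trans (WithBot.coe_le_coe.1 hdim)
  norm_cast at this
  lia

lemma notMem_of_mem_badTraces (hb : b ≤ I)
    (h : ∀ q : Ideal L, q.IsPrime → b ⊔ Ideal.span {a} ≤ traceIdeal τ q → I ≤ traceIdeal τ q)
    {N : Ideal R} (hN : N ∈ badTraces τ b) : a ∉ N := by
  obtain ⟨q, ⟨hq, hIq⟩, rfl⟩ := hN
  exact fun ha => hIq (h q hq.1.1 (sup_le ((imageIdeal_le_iff hb).1 hq.1.2)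
    ((Ideal.span_singleton_le_iff_mem _).2 ha)))

end TraceHeightGE

end TraceIdeals

section SpecialFiber

open Polynomial

section DegreeOne

variable {R : Type u} [CommRing R] {I : Ideal R}

lemma range_toAlgHom_reesAlgebra (I : Ideal R) :
    (IsScalarTower.toAlgHom R (reesAlgebra I) R[X]).range = reesAlgebra I :=
  Subalgebra.range_val _

variable (I) in
/-- The embedding `x ↦ xX` of `I` in its Rees algebra as the component of degree one. -/
noncomputable def reesDegreeOne : I →ₗ[R] reesAlgebra I :=
  ((monomial 1).comp I.subtype).codRestrict (Subalgebra.toSubmodule (reesAlgebra I)) fun x =>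
    reesAlgebra.monomial_mem.2 (by simp)

@[simp]
lemma coe_reesDegreeOne (x : I) : (reesDegreeOne I x : R[X]) = monomial 1 (x : R) :=
  rfl

lemma exists_mem_span_range_reesDegreeOne_pow {n : ℕ} {y : R} (hy : y ∈ I ^ n) :
    ∃ f ∈ Ideal.span (Set.range (reesDegreeOne I)) ^ n, (f : R[X]) = monomial n y := by
  induction n generalizing y with
  | zero => exact ⟨algebraMap R _ y, by simp, rfl⟩
  | succ n ih =>
    rw [pow_succ'] at hy
    induction hy using Submodule.mul_induction_on' with
    | mem_mul_mem x hx z hz =>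
      obtain ⟨f, hf, hfz⟩ := ih hz
      refine ⟨reesDegreeOne I ⟨x, hx⟩ * f, ?_, ?_⟩
      · rw [pow_succ']
        exact Ideal.mul_mem_mul (Ideal.subset_span ⟨_, rfl⟩) hf
      · rw [MulMemClass.coe_mul, hfz, coe_reesDegreeOne, monomial_mul_monomial, add_comm]
    | add x _ z _ hx hz =>
      obtain ⟨f, hf, hfx⟩ := hx
      obtain ⟨g, hg, hgz⟩ := hz
      exact ⟨f + g, add_mem hf hg, by rw [AddMemClass.coe_add, hfx, hgz, map_add]⟩

lemma exists_eq_X_mul_of_mem_span_reesDegreeOne {b : Ideal R} {f : reesAlgebra I}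
    (hf : f ∈ Ideal.span (reesDegreeOne I '' {x | (x : R) ∈ b})) :
    ∃ g ∈ b.map (algebraMap R (reesAlgebra I)), (f : R[X]) = X * (g : R[X]) := by
  induction hf using Submodule.span_induction with
  | mem _ hx =>
    obtain ⟨x, hx, rfl⟩ := hx
    exact ⟨algebraMap R _ x, Ideal.mem_map_of_mem _ hx,
      C_mul_X_eq_monomial.symm.trans (X_mul_C _).symm⟩
  | zero => exact ⟨0, zero_mem _, by simp⟩
  | add _ _ _ _ hx hy =>
    obtain ⟨g, hg, hx⟩ := hx
    obtain ⟨h, hh, hy⟩ := hy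
    exact ⟨g + h, add_mem hg hh, by rw [AddMemClass.coe_add, hx, hy, AddMemClass.coe_add, mul_add]⟩
  | smul c _ _ hx =>
    obtain ⟨g, hg, hx⟩ := hx
    exact ⟨c * g, Ideal.mul_mem_left _ _ hg, by
      rw [smul_eq_mul, MulMemClass.coe_mul, hx, MulMemClass.coe_mul, mul_left_comm]⟩

lemma coeff_succ_mem_of_mem_span_reesDegreeOne_sup {b c : Ideal R} {f : reesAlgebra I}
    (hf : f ∈ Ideal.span (reesDegreeOne I '' {x | (x : R) ∈ b}) ⊔
      c.map (algebraMap R (reesAlgebra I))) (n : ℕ) :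
    (f : R[X]).coeff (n + 1) ∈ b * I ^ n ⊔ c * I ^ (n + 1) := by
  obtain ⟨g, hg, h, hh, rfl⟩ := Submodule.mem_sup.1 hf
  obtain ⟨g', hg', hgg'⟩ := exists_eq_X_mul_of_mem_span_reesDegreeOne hg
  rw [AddMemClass.coe_add, coeff_add, hgg', coeff_X_mul]
  exact Submodule.add_mem_sup
    (coeff_algebraMap_mem_mul_pow (range_toAlgHom_reesAlgebra I) hg' n)
    (coeff_algebraMap_mem_mul_pow (range_toAlgHom_reesAlgebra I) hh (n + 1))

end DegreeOne

section LocalFiber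

variable {R : Type u} [CommRing R] [IsLocalRing R] (I : Ideal R)

/-- The kernel of the projection of the Rees algebra to its special fiber ring. -/
noncomputable abbrev fiberIdeal : Ideal (reesAlgebra I) :=
  (maximalIdeal R).map (algebraMap R (reesAlgebra I))

/-- The special fiber ring `R(I) ⊗ R/𝔪`, whose dimension is `fiberDim I`. -/
def SpecialFiber : Type u :=
  reesAlgebra I ⧸ fiberIdeal I

namespace SpecialFiber

noncomputable instance : CommRing (SpecialFiber I) :=
  inferInstanceAs (CommRing (reesAlgebra I ⧸ fiberIdeal I))

noncomputable instance : Algebra (reesAlgebra I) (SpecialFiber I) :=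
  inferInstanceAs (Algebra (reesAlgebra I) (reesAlgebra I ⧸ fiberIdeal I))

noncomputable instance : Algebra R (SpecialFiber I) :=
  inferInstanceAs (Algebra R (reesAlgebra I ⧸ fiberIdeal I))

instance : IsScalarTower R (reesAlgebra I) (SpecialFiber I) :=
  inferInstanceAs (IsScalarTower R (reesAlgebra I) (reesAlgebra I ⧸ fiberIdeal I))

instance [IsNoetherianRing R] : IsNoetherianRing (SpecialFiber I) :=
  inferInstanceAs (IsNoetherianRing (reesAlgebra I ⧸ fiberIdeal I))

variable {I} in
lemma algebraMap_surjective :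
    Function.Surjective (algebraMap (reesAlgebra I) (SpecialFiber I)) :=
  Ideal.Quotient.mk_surjective

lemma ker_algebraMap :
    RingHom.ker (algebraMap (reesAlgebra I) (SpecialFiber I)) = fiberIdeal I :=
  Ideal.mk_ker

/-- The projection of the special fiber ring to its component of degree zero. -/
noncomputable def augmentation : SpecialFiber I →+* ResidueField R :=
  Ideal.Quotient.lift _ (((residue R).comp constantCoeff).comp (reesAlgebra I).val.toRingHom) <| by
    simp only [← RingHom.mem_ker]
    refine Ideal.map_le_iff_le_comap.2 fun r hr => ?_
    simpa [Ideal.mem_comap, RingHom.mem_ker] using hr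

/-- The homogeneous maximal ideal of the special fiber ring. -/
noncomputable def irrelevant : Ideal (SpecialFiber I) :=
  RingHom.ker (augmentation I)

instance : (irrelevant I).IsPrime :=
  RingHom.ker_isPrime _

variable {I} in
lemma algebraMap_mem_irrelevant {f : reesAlgebra I} :
    algebraMap _ (SpecialFiber I) f ∈ irrelevant I ↔ (f : R[X]).coeff 0 ∈ maximalIdeal R :=
  residue_eq_zero_iff _

end SpecialFiber

open SpecialFiber

/-- The localization of the special fiber ring at its homogeneous maximal ideal. -/
abbrev LocalFiber : Type u :=
  Localization.AtPrime (irrelevant I)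

namespace LocalFiber

/-- The map `I → I/𝔪I` followed by the inclusion in the special fiber ring and localization. -/
noncomputable def degreeOne : I →ₗ[R] LocalFiber I :=
  (IsScalarTower.toAlgHom R (reesAlgebra I) (LocalFiber I)).toLinearMap ∘ₗ reesDegreeOne I

variable {I} {b : Ideal R}

lemma degreeOne_apply (x : I) :
    degreeOne I x = algebraMap (SpecialFiber I) (LocalFiber I)
      (algebraMap _ (SpecialFiber I) (reesDegreeOne I x)) :=
  IsScalarTower.algebraMap_apply _ (SpecialFiber I) (LocalFiber I) (reesDegreeOne I x)

lemma ringKrullDim_le : ringKrullDim (LocalFiber I) ≤ fiberDim I :=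
  (IsLocalization.AtPrime.ringKrullDim_eq_height (irrelevant I) _).trans_le
    (Ideal.height_le_ringKrullDim_of_ne_top Ideal.IsPrime.ne_top')

lemma le_traceIdeal_maximalIdeal :
    I ≤ traceIdeal (degreeOne I) (maximalIdeal (LocalFiber I)) := by
  intro x hx
  refine (coe_mem_traceIdeal (x := ⟨x, hx⟩)).2 ?_
  rw [degreeOne_apply, IsLocalization.AtPrime.to_map_mem_maximal_iff _ (irrelevant I),
    algebraMap_mem_irrelevant]
  simp

lemma exists_isUnit_mul_mem_of_algebraMap_mem_imageIdeal {f : reesAlgebra I}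
    (hf : algebraMap (reesAlgebra I) (LocalFiber I) f ∈ imageIdeal (degreeOne I) b) :
    ∃ s : reesAlgebra I, IsUnit ((s : R[X]).coeff 0) ∧
      s * f ∈ Ideal.span (reesDegreeOne I '' {x | (x : R) ∈ b}) ⊔ fiberIdeal I := by
  have himage : imageIdeal (degreeOne I) b =
      ((Ideal.span (reesDegreeOne I '' {x | (x : R) ∈ b})).map
        (algebraMap _ (SpecialFiber I))).map (algebraMap _ (LocalFiber I)) := by
    rw [Ideal.map_span, Ideal.map_span, Set.image_image, Set.image_image]
    exact congr(Ideal.span $(Set.image_congr fun x _ => degreeOne_apply x))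
  rw [himage, IsScalarTower.algebraMap_apply _ (SpecialFiber I),
    IsLocalization.algebraMap_mem_map_algebraMap_iff (irrelevant I).primeCompl] at hf
  obtain ⟨t, ht, htf⟩ := hf
  obtain ⟨s, rfl⟩ := algebraMap_surjective t
  refine ⟨s, by_contra fun hs => ht (algebraMap_mem_irrelevant.2 hs), ?_⟩
  rw [← map_mul, ← Ideal.mem_comap, Ideal.comap_map_of_surjective' _ algebraMap_surjective,
    ker_algebraMap] at htf
  exact htf

lemma exists_pow_le_imageIdeal [IsNoetherianRing R]
    (h : ∀ q : Ideal (LocalFiber I), q.IsPrime → b ≤ traceIdeal (degreeOne I) q →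
      I ≤ traceIdeal (degreeOne I) q) (hb : b ≤ I) :
    ∃ n, imageIdeal (degreeOne I) I ^ n ≤ imageIdeal (degreeOne I) b := by
  refine Ideal.exists_pow_le_of_le_radical_of_fg ?_ (IsNoetherian.noetherian _)
  rw [Ideal.radical_eq_sInf]
  exact le_sInf fun q hq => (imageIdeal_le_iff le_rfl).2
    (h q hq.2 ((imageIdeal_le_iff hb).1 hq.1))

/- The localization of the special fiber ring suffices, since only the component of degree zero of
the denominators, which is a unit, matters in the degree under consideration. -/
lemma isReduction_of_forall_le_traceIdeal [IsNoetherianRing R]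
    (h : ∀ q : Ideal (LocalFiber I), q.IsPrime → b ≤ traceIdeal (degreeOne I) q →
      I ≤ traceIdeal (degreeOne I) q) (hb : b ≤ I) : IsReduction b I := by
  obtain ⟨n, hn⟩ := exists_pow_le_imageIdeal h hb
  refine ⟨hb, n, le_antisymm ?_ ((Ideal.mul_mono_left hb).trans_eq (pow_succ' I n).symm)⟩
  refine Submodule.le_of_le_smul_of_le_jacobson_bot (IsNoetherian.noetherian _)
    (jacobson_eq_maximalIdeal ⊥ bot_ne_top).ge fun y hy => ?_
  obtain ⟨f, hf, hfy⟩ := exists_mem_span_range_reesDegreeOne_pow hy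
  have hfb : algebraMap _ (LocalFiber I) f ∈ imageIdeal (degreeOne I) b := by
    have hle : (Ideal.span (Set.range (reesDegreeOne I))).map (algebraMap _ (LocalFiber I)) ≤
        imageIdeal (degreeOne I) I := by
      rw [Ideal.map_span, Ideal.span_le]
      rintro _ ⟨_, ⟨x, rfl⟩, rfl⟩
      exact Ideal.subset_span ⟨x, x.2, rfl⟩
    refine hn (Ideal.pow_le_pow_right n.le_succ (Ideal.pow_right_mono hle _ ?_))
    rw [← Ideal.map_pow]
    exact Ideal.mem_map_of_mem _ hf
  obtain ⟨s, hs, hsf⟩ := exists_isUnit_mul_mem_of_algebraMap_mem_imageIdeal hfb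
  have := coeff_succ_mem_of_mem_span_reesDegreeOne_sup hsf n
  have hcoeff := coeff_mul_monomial (s : R[X]) (n + 1) 0 y
  rw [zero_add] at hcoeff
  rwa [MulMemClass.coe_mul, hfy, hcoeff, Ideal.unit_mul_mem_iff_mem _ hs] at this

end LocalFiber

end LocalFiber

end SpecialFiber

section Reductions

open Polynomial

section Finiteness

variable {R : Type u} [CommRing R] {I J : Ideal R}

lemma IsReduction.exists_forall_pow_add_eq (h : IsReduction J I) :
    ∃ r, ∀ n, I ^ (n + r) = J ^ n * I ^ r := by
  obtain ⟨-, r, hr⟩ := h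
  refine ⟨r, fun n => ?_⟩
  induction n with
  | zero => simp
  | succ n ih =>
    calc I ^ (n + 1 + r) = I ^ n * I ^ (r + 1) := by rw [← pow_add, add_assoc, add_comm 1 r]
      _ = J * I ^ (n + r) := by rw [hr, pow_add, mul_left_comm]
      _ = J ^ (n + 1) * I ^ r := by rw [ih, ← mul_assoc, ← pow_succ']

lemma sum_monomial_reesAlgebra (f : reesAlgebra I) :
    f = ∑ n ∈ (f : R[X]).support,
      (⟨monomial n ((f : R[X]).coeff n), reesAlgebra.monomial_mem.2 (f.2 n)⟩ : reesAlgebra I) :=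
  Subtype.ext <| by
    rw [AddSubmonoidClass.coe_finsetSum]
    exact as_sum_support _

variable [IsNoetherianRing R]

lemma fg_comap_degreeLT_reesAlgebra (n : ℕ) :
    ((degreeLT R n).comap (reesAlgebra I).val.toLinearMap).FG := by
  classical
  have hfg : (degreeLT R n).FG := ⟨_, degreeLT_eq_span_X_pow.symm⟩
  exact Submodule.fg_of_fg_map_injective _ Subtype.val_injective
    (hfg.of_le (Submodule.map_comap_le _ _))

/- Since `Iⁿ⁺ʳ = JⁿIʳ`, the elements of degree at most `r` generate `R(I)` over `R(J)`. -/
lemma finite_of_isReduction {S : Type*} [CommRing S] [Algebra R S] [Algebra S (reesAlgebra I)]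
    [IsScalarTower R S (reesAlgebra I)] (h : IsReduction J I)
    (hS : ∀ f : reesAlgebra I, (f : R[X]) ∈ reesAlgebra J → ∃ s : S, algebraMap S _ s = f) :
    Module.Finite S (reesAlgebra I) := by
  obtain ⟨r, hr⟩ := h.exists_forall_pow_add_eq
  set P := (degreeLT R (r + 1)).comap (reesAlgebra I).val.toLinearMap
  have hJ (n : ℕ) {y : R} (hy : y ∈ J ^ n * I ^ r) :
      ∃ f ∈ Submodule.span S (P : Set (reesAlgebra I)), (f : R[X]) = monomial (n + r) y := by
    induction hy using Submodule.mul_induction_on' with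
    | mem_mul_mem z hz w hw =>
      have hzI : z ∈ I ^ n := Ideal.pow_right_mono h.1 n hz
      obtain ⟨s, hs⟩ := hS ⟨monomial n z, reesAlgebra.monomial_mem.2 hzI⟩
        (reesAlgebra.monomial_mem.2 hz)
      refine ⟨s • ⟨monomial r w, reesAlgebra.monomial_mem.2 hw⟩,
        Submodule.smul_mem _ s (Submodule.subset_span ?_), ?_⟩
      · exact mem_degreeLT.2 ((degree_monomial_le _ _).trans_lt (by exact_mod_cast r.lt_succ_self))
      · rw [Algebra.smul_def, hs, MulMemClass.coe_mul, monomial_mul_monomial]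
    | add x _ y _ hx hy =>
      obtain ⟨f, hf, hfx⟩ := hx
      obtain ⟨g, hg, hgy⟩ := hy
      exact ⟨f + g, add_mem hf hg, by rw [AddMemClass.coe_add, hfx, hgy, map_add]⟩
  have htop : Submodule.span S (P : Set (reesAlgebra I)) = ⊤ := by
    refine eq_top_iff.2 fun f _ => ?_
    rw [sum_monomial_reesAlgebra f]
    refine sum_mem fun n _ => ?_
    obtain hn | hn := le_total n r
    · refine Submodule.subset_span (mem_degreeLT.2 ((degree_monomial_le _ _).trans_lt ?_))
      exact_mod_cast Nat.lt_succ_of_le hn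
    · obtain ⟨m, rfl⟩ := Nat.exists_eq_add_of_le' hn
      have hf : (f : R[X]).coeff (m + r) ∈ J ^ m * I ^ r := hr m ▸ f.2 (m + r)
      obtain ⟨g, hg, hgf⟩ := hJ m hf
      exact (Subtype.ext hgf : g = ⟨monomial _ _, _⟩) ▸ hg
  obtain ⟨G, hG⟩ := fg_comap_degreeLT_reesAlgebra (I := I) (r + 1)
  exact ⟨⟨G, by rw [← htop, ← Submodule.span_span_of_tower R, hG]⟩⟩

end Finiteness

section Dimension

variable {R : Type u} [CommRing R] {I J : Ideal R}

lemma ringKrullDim_le_of_isIntegral {A B : Type*} [CommRing A] [CommRing B] {f : A →+* B}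
    (hf : f.IsIntegral) : ringKrullDim B ≤ ringKrullDim A := by
  algebraize [f]
  exact Order.krullDim_le_of_strictMono (PrimeSpectrum.comap (algebraMap A B)) fun _ _ h =>
    Ideal.IsIntegral.comap_lt_comap (R := A) h

lemma ringKrullDim_le_quotient_of_isIntegral {A B : Type*} [CommRing A] [CommRing B] {f : A →+* B}
    (hf : f.IsIntegral) {b : Ideal A} (hb : b ≤ RingHom.ker f) :
    ringKrullDim B ≤ ringKrullDim (A ⧸ b) := by
  have hf0 (x : A) (hx : x ∈ b) : f x = 0 := RingHom.mem_ker.1 (hb hx)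
  refine ringKrullDim_le_of_isIntegral (f := Ideal.Quotient.lift b f hf0) ?_
  exact RingHom.IsIntegral.tower_top (Ideal.Quotient.mk b) _ (by rwa [Ideal.Quotient.lift_comp_mk])

lemma ringKrullDim_mvPolynomial_quotient_map_C [IsLocalRing R] {σ : Type*} [Finite σ] :
    ringKrullDim (MvPolynomial σ R ⧸ (maximalIdeal R).map (MvPolynomial.C (σ := σ))) =
      Nat.card σ := by
  let _ : Field (R ⧸ maximalIdeal R) := Ideal.Quotient.field _
  rw [← ringKrullDim_eq_of_ringEquiv
      (MvPolynomial.quotientEquivQuotientMvPolynomial (maximalIdeal R)).toRingEquiv,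
    MvPolynomial.ringKrullDim_of_isNoetherianRing, ringKrullDim_eq_zero_of_field, zero_add]

lemma mem_range_aeval_of_mem_reesAlgebra_span {t : Set R} (ht : t ⊆ I) {f : reesAlgebra I}
    (hf : (f : R[X]) ∈ reesAlgebra (Ideal.span t)) :
    ∃ p : MvPolynomial t R,
      MvPolynomial.aeval (fun x : t => reesDegreeOne I ⟨x, ht x.2⟩) p = f := by
  suffices h : reesAlgebra (Ideal.span t) ≤ ((reesAlgebra I).val.comp
      (MvPolynomial.aeval fun x : t => reesDegreeOne I ⟨x, ht x.2⟩)).range by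
    obtain ⟨p, hp⟩ := h hf
    exact ⟨p, Subtype.ext hp⟩
  rw [← adjoin_monomial_eq_reesAlgebra, Algebra.adjoin_le_iff]
  refine (Submodule.map_span_le (monomial 1) t (Subalgebra.toSubmodule (AlgHom.range _))).2 ?_
  exact fun x hx => ⟨MvPolynomial.X ⟨x, hx⟩, by simp⟩

lemma IsReduction.fiberDim_le_card [IsNoetherianRing R] [IsLocalRing R] {t : Finset R}
    (h : IsReduction (Ideal.span (t : Set R)) I) : fiberDim I ≤ t.card := by
  have ht : (t : Set R) ⊆ I := Ideal.span_le.1 h.1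
  let ψ : MvPolynomial (t : Set R) R →ₐ[R] reesAlgebra I :=
    MvPolynomial.aeval fun x => reesDegreeOne I ⟨x, ht x.2⟩
  have hψ : ψ.toRingHom.IsIntegral := by
    let _ := ψ.toRingHom.toAlgebra
    have : IsScalarTower R (MvPolynomial (t : Set R) R) (reesAlgebra I) :=
      .of_algebraMap_eq' ψ.comp_algebraMap.symm
    have := finite_of_isReduction (S := MvPolynomial (t : Set R) R) h fun f hf =>
      mem_range_aeval_of_mem_reesAlgebra_span ht hf
    exact Algebra.IsIntegral.isIntegral
  have hker : (maximalIdeal R).map MvPolynomial.C ≤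
      RingHom.ker ((algebraMap (reesAlgebra I) (SpecialFiber I)).comp ψ.toRingHom) := by
    rw [← RingHom.comap_ker, SpecialFiber.ker_algebraMap, Ideal.map_le_iff_le_comap]
    exact fun x hx => by simpa using Ideal.mem_map_of_mem _ hx
  have hint := hψ.trans _ (algebraMap (reesAlgebra I) (SpecialFiber I))
    (RingHom.isIntegral_of_surjective _ SpecialFiber.algebraMap_surjective)
  calc fiberDim I ≤ _ := ringKrullDim_le_quotient_of_isIntegral hint hker
    _ = t.card := by simp [ringKrullDim_mvPolynomial_quotient_map_C]

end Dimension

section Minimality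

variable {R : Type u} [CommRing R] {I J : Ideal R}

lemma exists_card_lt_le_span_sup [IsNoetherianRing R] [IsLocalRing R] {s : Finset R} {J' : Ideal R}
    (h : J' < Ideal.span (s : Set R)) :
    ∃ t : Finset R, t.card < s.card ∧ Ideal.span (t : Set R) ≤ Ideal.span (s : Set R) ∧
      J' ≤ Ideal.span (t : Set R) ⊔ maximalIdeal R * Ideal.span (s : Set R) := by
  classical
  obtain ⟨N, hJN, hN⟩ := exists_le_covBy_of_lt h
  obtain ⟨a, ha, haN⟩ : ∃ a ∈ s, a ∉ N := by
    by_contra! hs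
    exact hN.lt.not_ge (Ideal.span_le.2 hs)
  have hsup : Ideal.span {a} ⊔ N = Ideal.span (s : Set R) := by
    refine (hN.eq_or_eq le_sup_right (sup_le ?_ hN.le)).resolve_left fun h => haN ?_
    · exact (Ideal.span_singleton_le_iff_mem _).2 (Ideal.subset_span ha)
    · exact h.le (Ideal.mem_sup_left (Ideal.mem_span_singleton_self a))
  have hsub (x : R) (hx : x ∈ s) : ∃ c, x - c * a ∈ N := by
    obtain ⟨c, n, hn, hc⟩ := Ideal.mem_span_singleton_sup.1 (hsup.ge (Ideal.subset_span hx))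
    exact ⟨c, by rwa [← hc, add_sub_cancel_left]⟩
  choose! c hc using hsub
  let t := (s.erase a).image fun x => x - c x * a
  have htN : Ideal.span (t : Set R) ≤ N := by
    refine Ideal.span_le.2 ?_
    simp only [t, Finset.coe_image, Set.image_subset_iff]
    exact fun x hx => hc x (Finset.mem_of_mem_erase hx)
  have hle : Ideal.span (s : Set R) ≤ Ideal.span (t : Set R) ⊔ Ideal.span {a} := by
    refine Ideal.span_le.2 fun x hx => ?_
    obtain rfl | hxa := eq_or_ne x a
    · exact Ideal.mem_sup_right (Ideal.mem_span_singleton_self x)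
    · rw [← sub_add_cancel x (c x * a)]
      refine Submodule.add_mem_sup (Ideal.subset_span ?_) (Ideal.mem_span_singleton'.2 ⟨_, rfl⟩)
      exact Finset.mem_image_of_mem _ (Finset.mem_erase.2 ⟨hxa, hx⟩)
  refine ⟨t, Finset.card_image_le.trans_lt (Finset.card_erase_lt_of_mem ha), htN.trans hN.le, ?_⟩
  intro x hx
  obtain ⟨y, hy, z, hz, rfl⟩ := Submodule.mem_sup.1 (hle (h.le hx))
  obtain ⟨r, rfl⟩ := Ideal.mem_span_singleton'.1 hz
  have hr : r ∈ maximalIdeal R := by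
    refine (mem_maximalIdeal r).2 fun hr => haN ?_
    exact (N.unit_mul_mem_iff_mem hr).1 ((N.add_mem_iff_right (htN hy)).1 (hJN hx))
  exact Submodule.add_mem_sup hy (Ideal.mul_mem_mul hr (Ideal.subset_span ha))

lemma IsReduction.of_le_sup_maximalIdeal_mul [IsNoetherianRing R] [IsLocalRing R] {K : Ideal R}
    (h : IsReduction J I) (hK : K ≤ I) (hJ : J ≤ K ⊔ maximalIdeal R * I) : IsReduction K I := by
  obtain ⟨-, r, hr⟩ := h
  refine ⟨hK, r, le_antisymm ?_ ((Ideal.mul_mono_left hK).trans_eq (pow_succ' I r).symm)⟩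
  refine Submodule.le_of_le_smul_of_le_jacobson_bot (I := maximalIdeal R)
    (IsNoetherian.noetherian _) (IsLocalRing.maximalIdeal_le_jacobson ⊥) ?_
  calc I ^ (r + 1) = J * I ^ r := hr
    _ ≤ (K ⊔ maximalIdeal R * I) * I ^ r := Ideal.mul_mono_left hJ
    _ = K * I ^ r ⊔ maximalIdeal R * I ^ (r + 1) := by rw [Ideal.sup_mul, mul_assoc, pow_succ']

lemma not_isReduction_bot [Nontrivial R] (hI : (0 : WithBot ℕ∞) < ht I) : ¬ IsReduction ⊥ I := by
  rintro ⟨-, r, hr⟩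
  obtain ⟨Q, hQ⟩ := (⊥ : Ideal R).nonempty_minimalPrimes bot_ne_top
  have hQp := hQ.1.1
  have hIQ : I ≤ Q := hQp.le_of_pow_le (n := r + 1) (by simp [hr])
  simpa [Ideal.height_eq_zero_iff.2 hQ] using lt_height_of_lt_ht (n := 0) (mod_cast hI) hQp hIQ

lemma IsReduction.isMinimalReduction_span [IsNoetherianRing R] [IsLocalRing R] {s : Finset R}
    (h : IsReduction (Ideal.span (s : Set R)) I) (hs : s.card ≤ fiberDim I) :
    IsMinimalReduction (Ideal.span (s : Set R)) I := by
  refine ⟨h, fun J' hJ' hle => hle.eq_of_not_lt fun hlt => ?_⟩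
  obtain ⟨t, hcard, hts, hJt⟩ := exists_card_lt_le_span_sup hlt
  have ht : IsReduction (Ideal.span (t : Set R)) I :=
    hJ'.of_le_sup_maximalIdeal_mul (hts.trans h.1)
      (hJt.trans (sup_le_sup_left (Ideal.mul_mono_right h.1) _))
  exact hcard.not_ge (by exact_mod_cast hs.trans ht.fiberDim_le_card)

end Minimality

section GeneralSequences

variable {R : Type u} [CommRing R] [IsNoetherianRing R] [IsLocalRing R] {I J : Ideal R} {l : ℕ}

/-- A sequence of elements of `I` whose finite subfamilies of `range l` are general enough, both for
the residual intersections of `I` and for the special fiber ring. -/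
structure IsGeneralSequence (I : Ideal R) (l : ℕ) (a : ℕ → R) : Prop where
  mem : ∀ i, a i ∈ I
  inGeneralPosition : ∀ U ⊆ Finset.range l, InGeneralPosition I l U.card (spanOn a U)
  traceHeightGE : ∀ U ⊆ Finset.range l, TraceHeightGE (LocalFiber.degreeOne I) U.card (spanOn a U)

lemma exists_isGeneralSequence [Infinite (ResidueField R)] (hG : Gcond I l) :
    ∃ a, IsGeneralSequence I l a := by
  obtain ⟨a, haI, ha⟩ := exists_forall_spanOn (I := I)
    (P := fun i b => InGeneralPosition I l i b ∧ TraceHeightGE (LocalFiber.degreeOne I) i b)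
    ⟨.bot hG, .zero⟩
    (fun i b H => H.1.holdsGenerically_sup_span.and (H.2.holdsGenerically_sup_span H.1.le)) l
  exact ⟨a, haI, fun U hU => (ha U hU).1, fun U hU => (ha U hU).2⟩

omit [IsNoetherianRing R] in
lemma TraceHeightGE.le_traceIdeal_degreeOne {b : Ideal R}
    (H : TraceHeightGE (LocalFiber.degreeOne I) l b) (hl : fiberDim I ≤ l)
    (q : Ideal (LocalFiber I)) (_ : q.IsPrime) (hbq : b ≤ traceIdeal (LocalFiber.degreeOne I) q) :
    I ≤ traceIdeal (LocalFiber.degreeOne I) q :=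
  H.le_traceIdeal (LocalFiber.ringKrullDim_le.trans hl) LocalFiber.le_traceIdeal_maximalIdeal hbq

lemma TraceHeightGE.isMinimalReduction_span {s : Finset R}
    (H : TraceHeightGE (LocalFiber.degreeOne I) l (Ideal.span (s : Set R)))
    (hl : fiberDim I = l) (hsI : Ideal.span (s : Set R) ≤ I) (hs : s.card ≤ l) :
    IsMinimalReduction (Ideal.span (s : Set R)) I :=
  (LocalFiber.isReduction_of_forall_le_traceIdeal
    (H.le_traceIdeal_degreeOne hl.le) hsI).isMinimalReduction_span (hl ▸ mod_cast hs)

namespace IsGeneralSequence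

open Finset

variable {a : ℕ → R}

omit [IsNoetherianRing R] in
lemma isResidualFamily (H : IsGeneralSequence I l a) : IsResidualFamily I a (range l) where
  mem i _ := H.mem i
  card_le_height U hU Q hQ hUQ := by
    by_contra! hlt
    exact hlt.not_ge <| (H.inGeneralPosition U hU).le_height Q hQ
      (hlt.trans_le (mod_cast (card_le_card hU).trans_eq (card_range l))) hUQ
  card_succ_le_height U hU Q hQ hIQ hUQ := by
    by_contra! hlt
    have hcard : U.card + 1 ≤ l := (card_lt_card hU).trans_eq (card_range l)
    exact hlt.not_ge <| (H.inGeneralPosition U hU.1).add_le_height 0 Q hQ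
      (hlt.trans_le (mod_cast hcard)) hIQ (generatorIdeal_zero.trans_le hUQ)

lemma isMinimalReduction (H : IsGeneralSequence I l a) (hl : fiberDim I = l) :
    IsMinimalReduction (spanOn a (range l)) I := by
  classical
  have h := H.traceHeightGE _ subset_rfl
  have hI := (H.inGeneralPosition _ subset_rfl).le
  rw [card_range] at h
  rw [spanOn, ← coe_image] at h hI ⊢
  exact h.isMinimalReduction_span hl hI (card_image_le.trans_eq (card_range l))

/- In general position, `aⱼ` may be replaced by `aⱼ + rc` for a unit `r` avoiding finitely many
conditions, without losing the minimality of the reduction. -/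
lemma exists_isMinimalReduction_erase_sup [Infinite (ResidueField R)]
    (H : IsGeneralSequence I l a) (hl : fiberDim I = l) {j : ℕ} (hj : j ∈ range l) {c : R}
    (hc : c ∈ I) : ∃ r, IsUnit r ∧
      IsMinimalReduction (spanOn a ((range l).erase j) ⊔ Ideal.span {a j + r * c}) I := by
  classical
  have hU := erase_subset j (range l)
  have hle := (H.inGeneralPosition _ hU).le
  have hl' := H.traceHeightGE _ subset_rfl
  rw [← insert_erase hj, spanOn_insert, insert_erase hj, card_range] at hl'
  have hcard := card_erase_add_one hj
  obtain ⟨r, hr, hN⟩ := exists_isUnit_forall_add_mul_notMem finite_badTraces c fun N hN =>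
    TraceHeightGE.notMem_of_mem_badTraces hle (hl'.le_traceIdeal_degreeOne hl.le) hN
  have hmem : a j + r * c ∈ I := add_mem (H.mem j) (I.mul_mem_left r hc)
  have hsup := (H.traceHeightGE _ hU).sup_span hle hN
  rw [card_erase_add_one hj, card_range] at hsup
  have hI := sup_le hle ((Ideal.span_singleton_le_iff_mem I).2 hmem)
  refine ⟨r, hr, ?_⟩
  have hspan : spanOn a ((range l).erase j) ⊔ Ideal.span {a j + r * c} =
      Ideal.span (insert (a j + r * c) (((range l).erase j).image a) : Finset R) := by
    rw [coe_insert, Ideal.span_insert, sup_comm, spanOn, coe_image]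
  rw [hspan] at hsup hI ⊢
  refine hsup.isMinimalReduction_span hl hI ((card_insert_le _ _).trans ?_)
  exact (add_le_add_left card_image_le 1).trans_eq (hcard.trans (card_range l))

end IsGeneralSequence

end GeneralSequences

end Reductions

section ReesModule

open Polynomial

section IntegralExtension

variable {A B : Type*} [CommRing A] [CommRing B] [Algebra A B]

lemma natCast_add_le_height_comap [Algebra.IsIntegral A B] {c n : ℕ} {q : Ideal B} [q.IsPrime]
    (hmin : ∀ q ∈ minimalPrimes B, (c : ℕ∞) ≤ (q.comap (algebraMap A B)).height)
    (hn : (n : ℕ∞) ≤ q.height) : ((n + c : ℕ) : ℕ∞) ≤ (q.comap (algebraMap A B)).height := by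
  induction n generalizing q with
  | zero =>
    obtain ⟨q₀, hq₀, hle⟩ := Ideal.exists_minimalPrimes_le (I := (⊥ : Ideal B)) (J := q) bot_le
    rw [Nat.zero_add]
    exact (hmin q₀ hq₀).trans (Ideal.height_mono (Ideal.comap_mono hle))
  | succ n ih =>
    obtain ⟨q', hq', hlt, hn'⟩ : ∃ q' : Ideal B, q'.IsPrime ∧ q' < q ∧ (n : ℕ∞) ≤ q'.height := by
      by_contra! hcon
      have := hn.trans (Ideal.height_le_iff.2 hcon)
      norm_cast at this
      lia
    rw [Nat.add_right_comm]
    exact natCast_succ_le_height_of_lt (Ideal.IsIntegral.comap_lt_comap (R := A) hlt) (ih hn')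

end IntegralExtension

lemma exists_minimalPrimes_comap_map_C_eq {R A : Type*} [CommRing R] [CommRing A] {f : A →+* R[X]}
    (hf : Function.Injective f) {q : Ideal A} (hq : q ∈ minimalPrimes A) :
    ∃ p ∈ minimalPrimes R, (p.map C).comap f = q := by
  obtain ⟨Q, hQ, rfl⟩ := Ideal.exists_comap_eq_of_mem_minimalPrimes_of_injective hf q hq
  obtain ⟨p, hp, hpQ⟩ := Ideal.exists_minimalPrimes_le (I := (⊥ : Ideal R)) (J := Q.comap C) bot_le
  have := hp.1.1
  have hle : (p.map C).comap f ≤ Q.comap f := Ideal.comap_mono (Ideal.map_le_iff_le_comap.2 hpQ)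
  have : (p.map (C : R →+* R[X])).IsPrime := Ideal.isPrime_map_C_of_isPrime
  exact ⟨p, hp, hle.antisymm (hq.2 ⟨Ideal.comap_isPrime _ _, bot_le⟩ hle)⟩

section Depth

lemma GradeGE.le_mDepth_localizedModule {A B M : Type u} [CommRing A] [IsNoetherianRing A]
    [CommRing B] [Algebra A B] [AddCommGroup M] [Module A M] [Module B M]
    [IsScalarTower A B M] [Module.Finite A M] {q : Ideal B} [q.IsPrime] {n : ℕ}
    (h : GradeGE (q.comap (algebraMap A B)) n M) [Nontrivial (LocalizedModule q.primeCompl M)] :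
    (n : ℕ∞) ≤ mDepth (Localization.AtPrime q) (LocalizedModule q.primeCompl M) := by
  obtain ⟨rs, rfl, hrs, hreg⟩ := h.exists_isWeaklyRegular
  have := Module.Finite.of_restrictScalars_finite A B M
  have hmem : ∀ r ∈ rs.map (algebraMap A B), r ∈ q := by simpa using hrs
  have hreg' := ((RingTheory.Sequence.isWeaklyRegular_map_algebraMap_iff B M rs).2
    hreg).isRegular_of_isLocalizedModule_of_mem (Localization.AtPrime q) q
      (LocalizedModule.mkLinearMap q.primeCompl M) hmem
  refine le_sSup ⟨_, fun x hx => ?_, hreg', by simp⟩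
  obtain ⟨r, hr, rfl⟩ := List.mem_map.1 hx
  exact (IsLocalization.AtPrime.to_map_mem_maximal_iff _ q r).2 (hmem r hr)

lemma mDepth_le_ringKrullDim {B : Type u} {M : Type v} [CommRing B] [IsNoetherianRing B]
    [IsLocalRing B] [AddCommGroup M] [Module B M] [Module.Finite B M] :
    (mDepth B M : WithBot ℕ∞) ≤ ringKrullDim B := by
  rw [← maximalIdeal_height_eq_ringKrullDim]
  refine WithBot.coe_le_coe.2 (sSup_le ?_)
  rintro _ ⟨rs, -, hrs, rfl⟩
  have : Nontrivial (M ⧸ Ideal.ofList rs • (⊤ : Submodule B M)) :=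
    Submodule.Quotient.nontrivial_iff.2 hrs.top_ne_smul.symm
  rw [← WithBot.coe_le_coe, maximalIdeal_height_eq_ringKrullDim]
  calc ((rs.length : ℕ∞) : WithBot ℕ∞)
      ≤ Module.supportDim B (M ⧸ Ideal.ofList rs • (⊤ : Submodule B M)) + rs.length :=
        le_add_of_nonneg_left <|
          Order.krullDim_nonneg_iff.2 Module.nonempty_support_of_nontrivial.to_subtype
    _ = Module.supportDim B M := Module.supportDim_add_length_eq_supportDim_of_isRegular rs hrs
    _ ≤ ringKrullDim B := Module.supportDim_le_ringKrullDim B M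

lemma nontrivial_localizedModule_of_isSMulRegular {B : Type*} [CommRing B] {N : Ideal B} {x : B}
    (hx : x ∈ N) (hreg : IsSMulRegular B x) (q : Ideal B) [q.IsPrime] :
    Nontrivial (LocalizedModule q.primeCompl N) := by
  by_contra h
  obtain ⟨s, hsq, hs⟩ := LocalizedModule.subsingleton_iff.1 (not_nontrivial_iff_subsingleton.1 h)
    (⟨x, hx⟩ : N)
  have hs0 : s = 0 := hreg.right_eq_zero_of_smul <| by
    simpa [mul_comm] using congr(($hs : B))
  exact hsq (hs0 ▸ q.zero_mem)

/-- The depth of `M_q` is at least `min k (height q)` for every prime `q` of `B`. For `M` with full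
support this is Serre's condition `S_k`; for `k = ⊤` it is maximal Cohen–Macaulayness. -/
def LocalDepthGE (B : Type u) [CommRing B] (M : Type v) [AddCommGroup M] [Module B M]
    (k : ℕ∞) : Prop :=
  ∀ (q : Ideal B) [q.IsPrime],
    min k q.height ≤ mDepth (Localization.AtPrime q) (LocalizedModule q.primeCompl M)

namespace LocalDepthGE

variable {B : Type u} [CommRing B]

lemma moduleS2 {M : Type v} [AddCommGroup M] [Module B M] (h : LocalDepthGE B M 2) :
    ModuleS2 B M := by
  intro q hq
  calc min 2 (rDim (Localization.AtPrime q ⧸ Module.annihilator (Localization.AtPrime q)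
        (LocalizedModule q.primeCompl M)))
      ≤ min 2 (rDim (Localization.AtPrime q)) :=
        min_le_min_left _ (ringKrullDim_le_of_surjective _ Ideal.Quotient.mk_surjective)
    _ = (min 2 q.height : ℕ∞) := by rw [rDim_localization_atPrime, WithBot.coe_min]; rfl
    _ ≤ _ := WithBot.coe_le_coe.2 (h q)

lemma isMCM [IsNoetherianRing B] {N : Ideal B} {x : B} (h : LocalDepthGE B N ⊤) (hx : x ∈ N)
    (hreg : IsSMulRegular B x) : IsMCM B N := by
  intro q hq
  have := hq.isPrime
  have := nontrivial_localizedModule_of_isSMulRegular hx hreg q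
  have := Module.Finite.of_isLocalizedModule (Rₚ := Localization.AtPrime q) q.primeCompl
    (LocalizedModule.mkLinearMap q.primeCompl N)
  refine mDepth_le_ringKrullDim.antisymm ?_
  exact (rDim_localization_atPrime q).trans_le (WithBot.coe_le_coe.2 (by simpa using h q))

end LocalDepthGE

lemma SerreCondition.localDepthGE {A B M : Type u} [CommRing A] [IsNoetherianRing A]
    [CommRing B] [Algebra A B] [Algebra.IsIntegral A B] [AddCommGroup M]
    [Module A M] [Module B M] [IsScalarTower A B M] [Module.Finite A M] {c : ℕ} {k : ℕ∞}
    (h : SerreCondition A c k M)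
    (hmin : ∀ q ∈ minimalPrimes B, (c : ℕ∞) ≤ (q.comap (algebraMap A B)).height)
    (hM : ∀ (q : Ideal B) [q.IsPrime], Nontrivial (LocalizedModule q.primeCompl M)) :
    LocalDepthGE B M k := by
  intro q _
  have := hM q
  refine ENat.forall_natCast_le_iff_le.1 fun n hn => ?_
  exact (h _ (Ideal.comap_isPrime _ q) n (hn.trans (min_le_left _ _))
    (natCast_add_le_height_comap hmin (hn.trans (min_le_right _ _)))).le_mDepth_localizedModule

end Depth

section ExtendedIdeal

variable {R : Type u} [CommRing R] {I J K : Ideal R}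

lemma isSMulRegular_reesAlgebra {x : R} (hx : IsSMulRegular R x) :
    IsSMulRegular (reesAlgebra I) (algebraMap R (reesAlgebra I) x) :=
  (isSMulRegular_algebraMap_iff _).2 fun f g hfg => Subtype.ext <| ext fun e =>
    hx (by simpa using congr(($hfg : R[X]).coeff e))

lemma mul_pow_eq_mul_pow (hJI : J ≤ I) (hmul : K * I ≤ K * J) (e : ℕ) :
    K * I ^ e = K * J ^ e := by
  refine le_antisymm ?_ (Ideal.mul_mono_right (Ideal.pow_right_mono hJI e))
  induction e with
  | zero => simp
  | succ e ih =>
    calc K * I ^ (e + 1) = K * I ^ e * I := by rw [pow_succ, mul_assoc]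
      _ ≤ K * J ^ e * I := Ideal.mul_mono_left ih
      _ = K * I * J ^ e := mul_right_comm _ _ _
      _ ≤ K * J * J ^ e := Ideal.mul_mono_left hmul
      _ = K * J ^ (e + 1) := by rw [mul_assoc, pow_succ']

variable {S : Type u} [CommRing S] [Algebra R S] [Algebra S R[X]] [IsScalarTower R S R[X]]
  [Algebra S (reesAlgebra I)] [IsScalarTower S (reesAlgebra I) R[X]]

lemma nonempty_linearEquiv_map_algebraMap (hJI : J ≤ I) (hmul : K * I ≤ K * J)
    (hS : (IsScalarTower.toAlgHom R S R[X]).range = reesAlgebra J) :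
    Nonempty (Submodule.map (Algebra.linearMap S R[X]) (K.map (algebraMap R S)) ≃ₗ[S]
      K.map (algebraMap R (reesAlgebra I))) := by
  let N := (K.map (algebraMap R (reesAlgebra I))).restrictScalars S
  let f : reesAlgebra I →ₗ[S] R[X] := (IsScalarTower.toAlgHom S (reesAlgebra I) R[X]).toLinearMap
  have hf : Function.Injective f := Subtype.val_injective
  have hmap : Submodule.map (Algebra.linearMap S R[X]) (K.map (algebraMap R S)) =
      Submodule.map f N := by
    ext g
    constructor
    · rintro ⟨s, hs, rfl⟩
      exact exists_mem_map_algebraMap_eq (range_toAlgHom_reesAlgebra I) fun e => by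
        rw [mul_pow_eq_mul_pow hJI hmul]
        exact coeff_algebraMap_mem_mul_pow hS hs e
    · rintro ⟨x, hx, rfl⟩
      exact exists_mem_map_algebraMap_eq hS fun e => by
        rw [← mul_pow_eq_mul_pow hJI hmul]
        exact coeff_algebraMap_mem_mul_pow (range_toAlgHom_reesAlgebra I) hx e
  exact ⟨(LinearEquiv.ofEq _ _ hmap).trans (Submodule.equivMapOfInjective f hf N).symm⟩

namespace ReesPresentation

variable {a₀ : R} {d : ℕ}

lemma finite_reesAlgebra [IsNoetherianRing R] [IsScalarTower R S (reesAlgebra I)]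
    (H : ReesPresentation I J d a₀ S) (hred : IsReduction J I) :
    Module.Finite S (reesAlgebra I) :=
  finite_of_isReduction hred fun f hf => by
    rw [← H.range_toAlgHom] at hf
    obtain ⟨s, hs⟩ := hf
    exact ⟨s, Subtype.ext ((IsScalarTower.algebraMap_apply S (reesAlgebra I) R[X] s).symm.trans hs)⟩

lemma le_height_comap_of_mem_minimalPrimes (H : ReesPresentation I J d a₀ S)
    (ha₀ : ∀ p ∈ minimalPrimes R, a₀ ∉ p) {q : Ideal (reesAlgebra I)}
    (hq : q ∈ minimalPrimes (reesAlgebra I)) :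
    (d : ℕ∞) ≤ (q.comap (algebraMap S (reesAlgebra I))).height := by
  obtain ⟨p, hp, rfl⟩ := exists_minimalPrimes_comap_map_C_eq
    (f := algebraMap (reesAlgebra I) R[X]) Subtype.val_injective hq
  have := hp.1.1
  rw [Ideal.comap_comap, ← IsScalarTower.algebraMap_eq]
  exact H.le_height_comap p (ha₀ p hp)

lemma localDepthGE_of_isScalarTower [IsNoetherianRing R] [IsScalarTower R S (reesAlgebra I)]
    {k : ℕ∞} (H : ReesPresentation I J d a₀ S) (hred : IsReduction J I)
    (hker : RingHom.ker (algebraMap S R[X]) ≤ K.map (algebraMap R S)) (hmul : K * I ≤ K * J)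
    (ha₀ : ∀ p ∈ minimalPrimes R, a₀ ∉ p) {x : R} (hxK : x ∈ K) (hx : IsSMulRegular R x)
    (hK : SerreCondition R (d + 1) k (R ⧸ K)) :
    LocalDepthGE (reesAlgebra I) (K.map (algebraMap R (reesAlgebra I))) (k + 1) := by
  have := H.isNoetherianRing
  have := H.finite_reesAlgebra hred
  obtain ⟨e⟩ := nonempty_linearEquiv_map_algebraMap hred.1 hmul H.range_toAlgHom
  have := Module.Finite.equiv e
  exact ((H.serreCondition_map_image hker hK).of_linearEquiv e).localDepthGE
    (fun q hq => H.le_height_comap_of_mem_minimalPrimes ha₀ hq)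
    (nontrivial_localizedModule_of_isSMulRegular (Ideal.mem_map_of_mem _ hxK)
      (isSMulRegular_reesAlgebra hx))

omit [Algebra S (reesAlgebra I)] [IsScalarTower S (reesAlgebra I) R[X]] in
theorem localDepthGE [IsNoetherianRing R] {k : ℕ∞} (H : ReesPresentation I J d a₀ S)
    (hred : IsReduction J I) (hker : RingHom.ker (algebraMap S R[X]) ≤ K.map (algebraMap R S))
    (hmul : K * I ≤ K * J) (ha₀ : ∀ p ∈ minimalPrimes R, a₀ ∉ p) {x : R} (hxK : x ∈ K)
    (hx : IsSMulRegular R x) (hK : SerreCondition R (d + 1) k (R ⧸ K)) :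
    LocalDepthGE (reesAlgebra I) (K.map (algebraMap R (reesAlgebra I))) (k + 1) := by
  let φ : S →ₐ[R] reesAlgebra I := (IsScalarTower.toAlgHom R S R[X]).codRestrict _ fun s =>
    (mem_reesAlgebra_iff _ _).2 fun e =>
      Ideal.pow_right_mono hred.1 e (coeff_algebraMap_mem_pow H.range_toAlgHom s e)
  let _ : Algebra S (reesAlgebra I) := φ.toRingHom.toAlgebra
  have : IsScalarTower S (reesAlgebra I) R[X] := .of_algebraMap_eq fun _ => rfl
  have : IsScalarTower R S (reesAlgebra I) := .of_algebraMap_eq fun r => (φ.commutes r).symm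
  exact H.localDepthGE_of_isScalarTower hred hker hmul ha₀ hxK hx hK

end ReesPresentation

end ExtendedIdeal

end ReesModule

section Balanced

open Finset Polynomial

variable {R : Type u} [CommRing R] [IsNoetherianRing R] [IsLocalRing R] {I : Ideal R}

namespace IsResidualFamily

variable {a : ℕ → R} {m : ℕ}

lemma notMem_of_mem_minimalPrimes (H : IsResidualFamily I a (range (m + 1)))
    (hAN : ANminus I m) (hR : SerreCondition R 0 ⊤ R) (hI : (0 : WithBot ℕ∞) < ht I) {p : Ideal R}
    (hp : p ∈ minimalPrimes R) : a 0 ∉ p := by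
  have hreg := H.isSMulRegular (by simpa using hAN) hR (j := 0) (by simp) (by simp)
    (empty_subset _)
  rw [residualIdeal_empty hR hI, isSMulRegular_quotient_iff_mem_of_smul_mem] at hreg
  refine fun h => (Ideal.disjoint_nonZeroDivisors_of_mem_minimalPrimes hp).le_bot ⟨h, ?_⟩
  exact mem_nonZeroDivisors_iff_left.2 fun x hx => by simpa using hreg x (by simpa using hx)

lemma exists_reesPresentation (H : IsResidualFamily I a (range (m + 1))) (hAN : ANminus I m)
    (hR : SerreCondition R 0 ⊤ R) (hI : (0 : WithBot ℕ∞) < ht I) :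
    ∃ (S : Type u) (_ : CommRing S) (_ : Algebra R S) (_ : Algebra S R[X])
      (_ : IsScalarTower R S R[X]),
      ReesPresentation I (spanOn a (range (m + 1))) m (a 0) S ∧
        RingHom.ker (algebraMap S R[X]) ≤
          (residualIdeal I a (range (m + 1))).map (algebraMap R S) := by
  have hAN' : ANminus I ((range (m + 1)).card - 1) := by simpa using hAN
  have hsub {i : ℕ} (hi : i < m + 1) : range i ⊂ range (m + 1) :=
    ⟨range_mono hi.le, fun h => hi.not_ge (range_subset_range.1 h)⟩
  refine exists_reesPresentation_ker_le (residualIdeal_empty hR hI) hR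
    (fun i hi => H.mem i (mem_range.2 hi))
    (fun i hi => H.isSMulRegular hAN' hR (mem_range.2 hi) notMem_range_self (hsub hi).subset)
    (fun i hi => by simpa using H.serreCondition_residualIdeal hAN' hR (hsub hi)) ?_
  have hm : m ∈ range (m + 1) := self_mem_range_succ m
  have hmul := span_singleton_mul_residualIdeal_erase_le
    (fun j hj => H.isSMulRegular hAN' hR hj (notMem_erase _ _) (erase_subset _ _)) hm (H.mem m hm)
  rwa [range_add_one, erase_insert notMem_range_self, ← range_add_one] at hmul

theorem localDepthGE (H : IsResidualFamily I a (range (m + 1))) (hAN : ANminus I m)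
    (hR : SerreCondition R 0 ⊤ R) (hI : (0 : WithBot ℕ∞) < ht I)
    (hred : IsReduction (spanOn a (range (m + 1))) I)
    (hmul : residualIdeal I a (range (m + 1)) * I ≤
      residualIdeal I a (range (m + 1)) * spanOn a (range (m + 1))) {k : ℕ∞}
    (hK : SerreCondition R (m + 1) k (R ⧸ residualIdeal I a (range (m + 1)))) :
    LocalDepthGE (reesAlgebra I)
      ((residualIdeal I a (range (m + 1))).map (algebraMap R (reesAlgebra I))) (k + 1) := by
  obtain ⟨S, _, _, _, _, HS, hker⟩ := H.exists_reesPresentation hAN hR hI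
  obtain ⟨x, hxK, hx⟩ := H.exists_isSMulRegular nonempty_range_add_one hR
  exact HS.localDepthGE hred hker hmul (fun p hp => H.notMem_of_mem_minimalPrimes hAN hR hI hp)
    hxK hx hK

end IsResidualFamily

lemma IsGeneralSequence.residualIdeal_mul_le [Infinite (ResidueField R)] {a : ℕ → R} {l : ℕ}
    (H : IsGeneralSequence I l a) (hl : fiberDim I = l) (hAN : ANminus I (l - 1))
    (hR : SerreCondition R 0 ⊤ R) (hI : (0 : WithBot ℕ∞) < ht I)
    (hbal : ∀ J₁ J₂, IsMinimalReduction J₁ I → IsMinimalReduction J₂ I →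
      Submodule.colon J₁ I = Submodule.colon J₂ I) :
    residualIdeal I a (range l) * I ≤ residualIdeal I a (range l) * spanOn a (range l) := by
  have hAN' : ANminus I ((range l).card - 1) := by simpa using hAN
  refine CPU.residualIdeal_mul_le
    (fun j hj => H.isResidualFamily.isSMulRegular hAN' hR hj (notMem_erase _ _) (erase_subset _ _))
    (fun j hj => H.isResidualFamily.inf_residualIdeal_le hAN' hR hI (erase_ssubset hj))
    fun j hj c hc => ?_
  obtain ⟨r, hr, hmin⟩ := H.exists_isMinimalReduction_erase_sup hl hj hc
  exact ⟨r, hr, hbal _ _ hmin (H.isMinimalReduction hl)⟩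

end Balanced

theorem statement8_general {R : Type u} [CommRing R] [IsNoetherianRing R] [IsLocalRing R]
    (hCM : IsCMLocalRing R) (hres : Infinite (ResidueField R))
    (I : Ideal R) (l : ℕ) (hl : fiberDim I = (l : WithBot ℕ∞))
    (hht : (0 : WithBot ℕ∞) < ht I)
    (hG : Gcond I l) (hAN : ANminus I (l - 1))
    (hbal : ∀ J₁ J₂, IsMinimalReduction J₁ I → IsMinimalReduction J₂ I →
      Submodule.colon J₁ I = Submodule.colon J₂ I) (J : Ideal R) (hJ : IsMinimalReduction J I) :
    ModuleS2 (reesAlgebra I)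
        (Ideal.map (algebraMap R (reesAlgebra I)) (Submodule.colon J I)) ∧
      (ANcond I l → IsMCM (reesAlgebra I)
        (Ideal.map (algebraMap R (reesAlgebra I)) (Submodule.colon J I))) := by
  obtain ⟨a, ha⟩ := exists_isGeneralSequence hG
  have H := ha.isResidualFamily
  have hR := hCM.serreCondition
  have hmin := ha.isMinimalReduction hl
  rw [hbal J _ hJ hmin]
  have hmul := ha.residualIdeal_mul_le hl hAN hR hht hbal
  obtain _ | m := l
  · rw [Finset.range_zero, spanOn_empty] at hmin
    exact absurd hmin.1 (not_isReduction_bot hht)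
  have hdepth {k : ℕ∞} := H.localDepthGE (k := k) hAN hR hht hmin.1 hmul
  have hS1 := H.serreCondition_one_residualIdeal (by simpa using hAN) hR
  obtain ⟨x, hxK, hx⟩ := H.exists_isSMulRegular Finset.nonempty_range_add_one hR
  rw [Finset.card_range] at hS1
  refine ⟨(hdepth hS1).moduleS2, fun hANl => ?_⟩
  have hCMK := H.serreCondition_top_residualIdeal (by simpa using hAN) (by simpa using hANl) hR
  rw [Finset.card_range] at hCMK
  exact (hdepth hCMK).isMCM (Ideal.mem_map_of_mem _ hxK) (isSMulRegular_reesAlgebra hx)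

set_option synthInstance.maxHeartbeats 1000000 in
set_option maxHeartbeats 1000000 in
/-- Theorem 2.11(1): the `R(I)`-module `(J : I)R(I)` satisfies `S₂`; it is maximal
Cohen–Macaulay if `I` satisfies `AN_ℓ`. -/
theorem statement8 {R : Type u} [CommRing R] [IsNoetherianRing R] [IsLocalRing R]
    (hCM : IsCMLocalRing R) (hres : Infinite (ResidueField R))
    (I : Ideal R) (l : ℕ) (hl : fiberDim I = (l : WithBot ℕ∞))
    (hht : (0 : WithBot ℕ∞) < ht I)
    (hG : Gcond I l) (hAN : ANminus I (l - 1)) (hS2 : UnivWeaklyResS2 I (l - 1))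
    (hbal : ∀ J₁ J₂, IsMinimalReduction J₁ I → IsMinimalReduction J₂ I →
      Submodule.colon J₁ I = Submodule.colon J₂ I) :
    ∀ J, IsMinimalReduction J I →
      ModuleS2 ↥(reesAlgebra I)
        ↥(Ideal.map (algebraMap R ↥(reesAlgebra I)) (Submodule.colon J I)) ∧
      (ANcond I l → IsMCM ↥(reesAlgebra I)
        ↥(Ideal.map (algebraMap R ↥(reesAlgebra I)) (Submodule.colon J I))) :=
  statement8_general hCM hres I l hl hht hG hAN hbal

end CPU
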